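/- arXiv:1512.08708 — 2 statements merged into one kernel-verified Lean document; each statement's English description precedes it below -/
import Mathlib

section
/- Let p be a prime and let K be a p-adic field, i.e. a finite extension of the field ℚ_p of p-adic numbers. Then every finite group occurs as a Galois group over the rational function field K(t); that is, for every finite group G there exists a finite Galois extension N/K(t) with Gal(N/K(t)) isomorphic to G. -/
set_option linter.unusedSectionVars false

namespace Harb

open scoped Matrix

section OneSide

variable {E Ω F G : Type} [Field E] [Field Ω] [Algebra E Ω] [Field F] [Algebra E F]
  [Group G] (H : Subgroup G) [Fintype H] [DecidableEq H] [MulSemiringAction H F]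
  (φ : F →ₐ[E] Ω) (T : Subalgebra E Ω)

/-- The functions `G → Ω` whose restriction to each coset `H g` is in `F ⊗ T`. -/
def IndMem (f : G → Ω) : Prop := ∀ (g : G) (b : F), ∑ σ : H, φ (σ • b) * f (σ * g) ∈ T

variable [IsGaloisGroup H E F]

lemma exists_trace (b : F) : ∃ e : E, ∑ σ : H, σ • b = algebraMap E F e := by
  have := (IsGaloisGroup.isInvariant (G := H) (A := E) (B := F)).isInvariant (∑ σ : H, σ • b) (by
    intro g
    rw [Finset.smul_sum]
    simp_rw [smul_smul]
    exact Fintype.sum_equiv (Equiv.mulLeft g) _ _ (fun _ => rfl))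
  obtain ⟨e, he⟩ := this
  exact ⟨e, he.symm⟩

lemma trace_mem (b : F) : ∑ σ : H, φ (σ • b) ∈ T := by
  obtain ⟨e, he⟩ := exists_trace (E := E) H b
  rw [← map_sum, he, φ.commutes]
  exact T.algebraMap_mem e

variable {b b' : H → F}

lemma expand
    (hd : ∀ σ τ : H, ∑ j, (σ • b j) * (τ • b' j) = if σ = τ then 1 else 0)
    (f : G → Ω) (g : G) (σ : H) :
    f (σ * g) = ∑ j, φ (σ • b j) * ∑ τ : H, φ (τ • b' j) * f (τ * g) := by
  simp_rw [Finset.mul_sum]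
  rw [Finset.sum_comm]
  simp_rw [← mul_assoc, ← map_mul, ← Finset.sum_mul, ← map_sum, hd]
  simp

lemma IndMem.mul
    (hd : ∀ σ τ : H, ∑ j, (σ • b j) * (τ • b' j) = if σ = τ then 1 else 0)
    {f f' : G → Ω} (hf : IndMem H φ T f) (hf' : IndMem H φ T f') :
    IndMem H φ T (f * f') := by
  intro g c
  have : ∑ σ : H, φ (σ • c) * (f * f') (σ * g) =
      ∑ j, (∑ τ : H, φ (τ • b' j) * f (τ * g)) * ∑ σ : H, φ (σ • (c * b j)) * f' (σ * g) := by
    have hC := fun σ => expand H φ hd f g σ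
    obtain ⟨C, hCC⟩ : ∃ C : H → Ω, ∀ j, ∑ τ : H, φ (τ • b' j) * f (τ * g) = C j := ⟨_, fun _ => rfl⟩
    simp_rw [hCC] at hC ⊢
    simp_rw [Pi.mul_apply, hC, Finset.sum_mul, Finset.mul_sum]
    rw [Finset.sum_comm]
    refine Finset.sum_congr rfl fun j _ => Finset.sum_congr rfl fun σ _ => ?_
    rw [smul_mul', map_mul]
    ring
  rw [this]
  exact T.sum_mem fun j _ => T.mul_mem (hf g _) (hf' g _)

lemma IndMem.add {f f' : G → Ω} (hf : IndMem H φ T f) (hf' : IndMem H φ T f') :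
    IndMem H φ T (f + f') := by
  intro g c
  simp_rw [Pi.add_apply, mul_add, Finset.sum_add_distrib]
  exact T.add_mem (hf g c) (hf' g c)

lemma IndMem.const (t : Ω) (ht : t ∈ T) : IndMem H φ T (fun _ => t) := by
  intro g c
  rw [← Finset.sum_mul]
  exact T.mul_mem (trace_mem H φ T c) ht

lemma IndMem.translate {f : G → Ω} (hf : IndMem H φ T f) (τ : G) :
    IndMem H φ T (fun g => f (g * τ)) := by
  intro g c
  simpa [mul_assoc] using hf (g * τ) c

lemma IndMem.mem_of_const
    (hd : ∀ σ τ : H, ∑ j, (σ • b j) * (τ • b' j) = if σ = τ then 1 else 0)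
    {t : Ω} (h : IndMem H φ T (fun _ => t)) : t ∈ T := by
  have h1 : ∃ j, ∑ τ : H, τ • b' j ≠ 0 := by
    by_contra! hcon
    have : ∑ τ : H, ∑ j, ((1 : H) • b j) * (τ • b' j) = 1 := by
      simp_rw [hd]
      simp
    rw [Finset.sum_comm] at this
    simp_rw [← Finset.mul_sum, hcon] at this
    simp at this
  obtain ⟨j, hj⟩ := h1
  obtain ⟨e, he⟩ := exists_trace (E := E) H (b' j)
  have he0 : e ≠ 0 := by
    rintro rfl
    rw [he] at hj
    simp at hj
  have := h 1 (b' j)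
  rw [← Finset.sum_mul, ← map_sum, he, φ.commutes] at this
  have h2 := T.mul_mem (T.algebraMap_mem e⁻¹) this
  rwa [← mul_assoc, ← map_mul, inv_mul_cancel₀ he0, map_one, one_mul] at h2

lemma IndMem.idem
    (hd : ∀ σ τ : H, ∑ j, (σ • b j) * (τ • b' j) = if σ = τ then 1 else 0)
    {T' : Subalgebra E Ω} (hφ : ∀ z, φ z ∈ T')
    (hIntg : ∀ z ∈ T', z ∈ T → z ∈ (algebraMap E Ω).range)
    {e : G → Ω} (he : IndMem H φ T e) (he01 : ∀ g, e g = 0 ∨ e g = 1) (σ : H) (g : G) :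
    e (σ * g) = e g := by
  have h1 : ∀ j, ∃ ε : E, algebraMap E Ω ε = ∑ τ : H, φ (τ • b' j) * e (τ * g) := by
    intro j
    refine hIntg _ (T'.sum_mem fun τ _ => T'.mul_mem (hφ _) ?_) (he g _)
    rcases he01 (τ * g) with h | h <;> rw [h]
    · exact T'.zero_mem
    · exact T'.one_mem
  choose ε hε using h1
  have hcomm : ∀ (σ : H) (a : E), σ • algebraMap E F a = algebraMap E F a := by
    intro σ a
    exact smul_algebraMap σ a
  set z : F := ∑ j, b j * algebraMap E F (ε j) with hz
  have h2 : ∀ σ : H, e (σ * g) = φ (σ • z) := by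
    intro σ
    rw [expand H φ hd e g σ, hz, Finset.smul_sum, map_sum]
    refine Finset.sum_congr rfl fun j _ => ?_
    rw [smul_mul', hcomm, map_mul, φ.commutes, hε]
  have h3 : e g = φ z := by simpa using h2 1
  have h4 : z = 0 ∨ z = 1 := by
    rcases he01 g with h | h
    · left
      rw [h3] at h
      exact (map_eq_zero φ).1 h
    · right
      rw [h3] at h
      exact φ.toRingHom.injective (by simpa using h)
  rw [h2, h3]
  rcases h4 with h | h <;> rw [h] <;> simp

end OneSide
end Harb

set_option linter.unusedSectionVars false
set_option linter.style.haveILetI false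

namespace Harb

open scoped Matrix Kronecker

section Mat
variable {E Ω F G : Type} [Field E] [Field Ω] [Algebra E Ω] [Field F] [Algebra E F]
  [Group G] (H : Subgroup G) [Fintype H] [DecidableEq H] [MulSemiringAction H F]
  (φ : F →ₐ[E] Ω) (T : Subalgebra E Ω) [IsGaloisGroup H E F] {b b' : H → F}

lemma exists_matrix [Fintype G] [DecidableEq G]
    (hd : ∀ σ τ : H, ∑ j, (σ • b j) * (τ • b' j) = if σ = τ then 1 else 0)
    (R : Subring Ω) (hb : ∀ σ j : H, φ (σ • b j) ∈ R) (hb' : ∀ σ j : H, φ (σ • b' j) ∈ R) :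
    ∃ M M' : Matrix G G Ω, M * M' = 1 ∧ (∀ i j, M i j ∈ R) ∧ (∀ i j, M' i j ∈ R) ∧
      ∀ f : G → Ω, IndMem H φ T f ↔ ∀ i, (M' *ᵥ f) i ∈ T := by
  classical
  obtain ⟨U, hU, -⟩ := Subgroup.exists_isComplement_right H 1
  let e : H × U ≃ G := Equiv.ofBijective (fun x => x.1.1 * x.2.1) hU
  have he : ∀ (σ : H) (u : U), e (σ, u) = σ * u := fun _ _ => rfl
  let X : Matrix H H Ω := Matrix.of fun σ j => φ (σ • b j)
  let X' : Matrix H H Ω := Matrix.of fun j σ => φ (σ • b' j)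
  have hX : X * X' = 1 := by
    ext σ τ
    simp only [X, X', Matrix.mul_apply, Matrix.of_apply, ← map_mul, ← map_sum, hd, Matrix.one_apply]
    split_ifs <;> simp
  refine ⟨Matrix.reindex e e (X ⊗ₖ (1 : Matrix U U Ω)),
    Matrix.reindex e e (X' ⊗ₖ (1 : Matrix U U Ω)), ?_, ?_, ?_, ?_⟩
  · rw [Matrix.reindex_apply, Matrix.reindex_apply, Matrix.submatrix_mul_equiv,
      ← Matrix.mul_kronecker_mul, hX]
    simp
  · intro i j
    simp only [Matrix.reindex_apply, Matrix.submatrix_apply, Matrix.kroneckerMap_apply,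
      Matrix.one_apply]
    refine R.mul_mem (hb _ _) ?_
    split_ifs
    exacts [R.one_mem, R.zero_mem]
  · intro i j
    simp only [Matrix.reindex_apply, Matrix.submatrix_apply, Matrix.kroneckerMap_apply,
      Matrix.one_apply]
    refine R.mul_mem (hb' _ _) ?_
    split_ifs
    exacts [R.one_mem, R.zero_mem]
  · intro f
    have key : ∀ (j : H) (u : U), (Matrix.reindex e e (X' ⊗ₖ (1 : Matrix U U Ω)) *ᵥ f) (e (j, u)) =
        ∑ σ : H, φ (σ • b' j) * f (σ * u) := by
      intro j u
      simp only [Matrix.mulVec, dotProduct, Matrix.reindex_apply, Matrix.submatrix_apply,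
        Equiv.symm_apply_apply]
      rw [← e.sum_comp, Fintype.sum_prod_type]
      refine Finset.sum_congr rfl fun σ _ => ?_
      simp only [Matrix.kroneckerMap_apply, Matrix.one_apply, X', Equiv.symm_apply_apply]
      simp [he]
    constructor
    · intro h i
      obtain ⟨⟨j, u⟩, rfl⟩ := e.surjective i
      rw [key]
      exact h u (b' j)
    · intro h g c
      obtain ⟨⟨ρ, u⟩, rfl⟩ := e.surjective g
      have hC := fun σ => expand H φ hd f u σ
      have hCT : ∀ j, ∑ τ : H, φ (τ • b' j) * f (τ * u) ∈ T := by
        intro j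
        rw [← key]
        exact h _
      obtain ⟨C, hCC⟩ : ∃ C : H → Ω, ∀ j, ∑ τ : H, φ (τ • b' j) * f (τ * u) = C j :=
        ⟨_, fun _ => rfl⟩
      simp_rw [hCC] at hC hCT
      have : ∑ σ : H, φ (σ • c) * f (σ * e (ρ, u)) =
          ∑ j, C j * ∑ σ : H, φ (σ • ((ρ⁻¹ • c) * b j)) := by
        have h1 : ∑ σ : H, φ (σ • c) * f (σ * e (ρ, u)) =
            ∑ σ : H, φ (σ • ρ⁻¹ • c) * f (σ * u) := by
          refine Fintype.sum_equiv (Equiv.mulRight ρ) _ _ fun σ => ?_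
          simp [he, smul_smul, mul_assoc]
        rw [h1]
        simp_rw [hC, Finset.mul_sum]
        rw [Finset.sum_comm]
        refine Finset.sum_congr rfl fun j _ => Finset.sum_congr rfl fun σ _ => ?_
        rw [smul_mul', map_mul]
        ring
      rw [this]
      exact T.sum_mem fun j _ => T.mul_mem (hCT j) (trace_mem H φ T _)
end Mat

theorem patch {E Ω G : Type} [Field E] [Field Ω] [Algebra E Ω] [Group G] [Fintype G]
    [DecidableEq G]
    (Sp Sm S : Subalgebra E Ω) (R : Subring Ω)
    (hIntg : ∀ z ∈ Sp, z ∈ Sm → z ∈ (algebraMap E Ω).range)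
    (hRS : ∀ z ∈ R, z ∈ S) (hmS : Sm ≤ S)
    (H₁ H₂ : Subgroup G) (hH : H₁ ⊔ H₂ = ⊤)
    [Fintype H₁] [Fintype H₂]
    {F₁ F₂ : Type} [Field F₁] [Field F₂] [Algebra E F₁] [Algebra E F₂]
    [MulSemiringAction H₁ F₁] [MulSemiringAction H₂ F₂] [IsGaloisGroup H₁ E F₁]
    [IsGaloisGroup H₂ E F₂]
    (φ₁ : F₁ →ₐ[E] Ω) (φ₂ : F₂ →ₐ[E] Ω) (hφ₁ : ∀ z, φ₁ z ∈ Sp) (hφ₂ : ∀ z, φ₂ z ∈ Sm)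
    {b₁ b₁' : H₁ → F₁} {b₂ b₂' : H₂ → F₂}
    (hd₁ : ∀ σ τ : H₁, ∑ j, (σ • b₁ j) * (τ • b₁' j) = if σ = τ then 1 else 0)
    (hd₂ : ∀ σ τ : H₂, ∑ j, (σ • b₂ j) * (τ • b₂' j) = if σ = τ then 1 else 0)
    (hb₁ : ∀ σ j : H₁, φ₁ (σ • b₁ j) ∈ R) (hb₁' : ∀ σ j : H₁, φ₁ (σ • b₁' j) ∈ R)
    (hb₂ : ∀ σ j : H₂, φ₂ (σ • b₂ j) ∈ R) (hb₂' : ∀ σ j : H₂, φ₂ (σ • b₂' j) ∈ R)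
    (cartan : ∀ M M' : Matrix G G Ω, M * M' = 1 → (∀ i j, M i j ∈ R) → (∀ i j, M' i j ∈ R) →
      ∃ A A' B B' : Matrix G G Ω, A * A' = 1 ∧ B * B' = 1 ∧ M = A * B ∧
        (∀ i j, A i j ∈ Sm) ∧ (∀ i j, A' i j ∈ Sm) ∧ (∀ i j, B i j ∈ Sp) ∧
        (∀ i j, B' i j ∈ Sp)) :
    ∃ (F : Type) (_ : Field F) (_ : Algebra E F) (_ : MulSemiringAction G F) (φ : F →ₐ[E] Ω),
      IsGaloisGroup G E F ∧ ∀ z, φ z ∈ S := by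
  obtain ⟨M₁, M₁', h1, h1R, h1R', hN₁⟩ := exists_matrix H₁ φ₁ Sm hd₁ R hb₁ hb₁'
  obtain ⟨M₂, M₂', h2, h2R, h2R', hN₂⟩ := exists_matrix H₂ φ₂ Sp hd₂ R hb₂ hb₂'
  have h1' : M₁' * M₁ = 1 := mul_eq_one_comm.1 h1
  have h2' : M₂' * M₂ = 1 := mul_eq_one_comm.1 h2
  have hmulR : ∀ (X Y : Matrix G G Ω), (∀ i j, X i j ∈ R) → (∀ i j, Y i j ∈ R) →
      ∀ i j, (X * Y) i j ∈ R := fun X Y hX hY i j => by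
    rw [Matrix.mul_apply]
    exact R.sum_mem fun k _ => R.mul_mem (hX _ _) (hY _ _)
  have hvec : ∀ (T : Subalgebra E Ω) (X : Matrix G G Ω) (v : G → Ω), (∀ i j, X i j ∈ T) →
      (∀ i, v i ∈ T) → ∀ i, (X *ᵥ v) i ∈ T := fun T X v hX hv i => by
    simp only [Matrix.mulVec, dotProduct]
    exact T.sum_mem fun k _ => T.mul_mem (hX _ _) (hv _)
  obtain ⟨A, A', B, B', hA, hB, hAB, hAm, hAm', hBp, hBp'⟩ := cartan (M₁' * M₂) (M₂' * M₁)
    (by rw [Matrix.mul_assoc, ← Matrix.mul_assoc M₂, h2, Matrix.one_mul, h1'])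
    (hmulR _ _ h1R' h2R) (hmulR _ _ h2R' h1R)
  have hA' : A' * A = 1 := mul_eq_one_comm.1 hA
  have hB' : B' * B = 1 := mul_eq_one_comm.1 hB
  -- the change of basis matrix
  set C : Matrix G G Ω := M₁ * A with hC
  set C' : Matrix G G Ω := A' * M₁' with hC'
  have hCC' : C' * C = 1 := by
    rw [hC, hC', Matrix.mul_assoc, ← Matrix.mul_assoc M₁', h1', Matrix.one_mul, hA']
  have hCC : C * C' = 1 := mul_eq_one_comm.1 hCC'
  have hM₂' : M₂' = B' * C' := by
    have : M₂ = M₁ * A * B := by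
      rw [Matrix.mul_assoc, ← hAB, ← Matrix.mul_assoc, h1, Matrix.one_mul]
    have h3 : (B' * C') * M₂ = 1 := by
      rw [this, ← hC, Matrix.mul_assoc, ← Matrix.mul_assoc C', hCC', Matrix.one_mul, hB']
    calc M₂' = (B' * C') * M₂ * M₂' := by rw [h3, Matrix.one_mul]
      _ = B' * C' := by rw [Matrix.mul_assoc, h2, Matrix.mul_one]
  have hmem : ∀ f : G → Ω, (IndMem H₁ φ₁ Sm f ∧ IndMem H₂ φ₂ Sp f) ↔
      ∃ ε : G → E, f = C *ᵥ (fun i => algebraMap E Ω (ε i)) := by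
    intro f
    rw [hN₁, hN₂]
    constructor
    · rintro ⟨hf1, hf2⟩
      have k1 : ∀ i, (C' *ᵥ f) i ∈ Sm := by
        rw [hC', ← Matrix.mulVec_mulVec]
        exact hvec Sm _ _ hAm' hf1
      have k2 : ∀ i, (C' *ᵥ f) i ∈ Sp := by
        have : C' = B * M₂' := by rw [hM₂', ← Matrix.mul_assoc, hB, Matrix.one_mul]
        rw [this, ← Matrix.mulVec_mulVec]
        exact hvec Sp _ _ hBp hf2
      choose ε hε using fun i => hIntg _ (k2 i) (k1 i)
      refine ⟨ε, ?_⟩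
      simp_rw [hε]
      rw [Matrix.mulVec_mulVec, hCC, Matrix.one_mulVec]
    · rintro ⟨ε, rfl⟩
      constructor
      · rw [Matrix.mulVec_mulVec, hC, ← Matrix.mul_assoc, h1', Matrix.one_mul]
        exact hvec Sm _ _ hAm fun i => Sm.algebraMap_mem _
      · rw [Matrix.mulVec_mulVec, hM₂', Matrix.mul_assoc, hCC', Matrix.mul_one]
        exact hvec Sp _ _ hBp' fun i => Sp.algebraMap_mem _
  let N : Subalgebra E (G → Ω) :=
    { carrier := {f | IndMem H₁ φ₁ Sm f ∧ IndMem H₂ φ₂ Sp f}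
      mul_mem' := fun ha hb => ⟨ha.1.mul H₁ φ₁ Sm hd₁ hb.1, ha.2.mul H₂ φ₂ Sp hd₂ hb.2⟩
      add_mem' := fun ha hb => ⟨ha.1.add H₁ φ₁ Sm hb.1, ha.2.add H₂ φ₂ Sp hb.2⟩
      algebraMap_mem' := fun r => ⟨IndMem.const H₁ φ₁ Sm _ (Sm.algebraMap_mem r),
        IndMem.const H₂ φ₂ Sp _ (Sp.algebraMap_mem r)⟩ }
  have hNmem : ∀ f, f ∈ N ↔ (IndMem H₁ φ₁ Sm f ∧ IndMem H₂ φ₂ Sp f) := fun f => Iff.rfl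
  -- finite dimensionality
  let L : (G → E) →ₗ[E] N :=
    { toFun := fun ε => ⟨C *ᵥ (fun i => algebraMap E Ω (ε i)), (hmem _).2 ⟨ε, rfl⟩⟩
      map_add' := fun x y => by
        ext1
        simp only [Pi.add_apply, map_add, Subalgebra.coe_add]
        rw [← Matrix.mulVec_add]
        rfl
      map_smul' := fun c x => by
        ext1
        simp only [Pi.smul_apply, smul_eq_mul, map_mul, RingHom.id_apply, Subalgebra.coe_smul]
        ext i
        simp only [Matrix.mulVec, dotProduct, Pi.smul_apply, Algebra.smul_def, Finset.mul_sum]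
        refine Finset.sum_congr rfl fun j _ => ?_
        ring }
  have hL : Function.Surjective L := by
    rintro ⟨f, hf⟩
    obtain ⟨ε, hε⟩ := (hmem f).1 hf
    exact ⟨ε, Subtype.ext hε.symm⟩
  haveI : Module.Finite E N := Module.Finite.of_surjective L hL
  -- idempotents
  have hidem : ∀ e ∈ N, (∀ g, e g = 0 ∨ e g = 1) → ∀ g g' : G, e g = e g' := by
    intro e he he01
    have h3 : ∀ σ : G, ∀ g, e (σ * g) = e g := by
      intro σ
      have hσ : σ ∈ Subgroup.closure ((H₁ : Set G) ∪ H₂) := by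
        rw [← Subgroup.sup_eq_closure, hH]; trivial
      induction hσ using Subgroup.closure_induction with
      | mem x hx =>
        rcases hx with hx | hx
        · exact fun g => he.1.idem H₁ φ₁ Sm hd₁ hφ₁ hIntg he01 ⟨x, hx⟩ g
        · exact fun g => he.2.idem H₂ φ₂ Sp hd₂ hφ₂ (fun z h h' => hIntg z h' h) he01 ⟨x, hx⟩ g
      | one => simp
      | mul x y _ _ hx hy =>
        intro g
        rw [mul_assoc, hx, hy]
      | inv x _ hx =>
        intro g
        rw [← hx (x⁻¹ * g), mul_inv_cancel_left]
    intro g g'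
    have := h3 (g * g'⁻¹) g'
    simpa using this
  have hunit : ∀ f ∈ N, f ≠ 0 → ∀ g, f g ≠ 0 := by
    intro f hf hf0
    have hIntg : IsIntegral E (⟨f, hf⟩ : N) := Algebra.IsIntegral.isIntegral _
    obtain ⟨m0, hm, hm0⟩ := Polynomial.exists_eq_pow_rootMultiplicity_mul_and_not_dvd
      (minpoly E (⟨f, hf⟩ : N)) (minpoly.ne_zero hIntg) 0
    rw [Polynomial.dvd_iff_isRoot, Polynomial.IsRoot.def] at hm0
    set k := (minpoly E (⟨f, hf⟩ : N)).rootMultiplicity 0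
    set c := m0.eval 0 with hc
    let e : N := 1 - algebraMap E N c⁻¹ * Polynomial.aeval (⟨f, hf⟩ : N) m0
    have hcoe : ∀ q : Polynomial E, ∀ g, (Polynomial.aeval (⟨f, hf⟩ : N) q : N).1 g =
        Polynomial.aeval (f g) q := by
      intro q g
      have := Polynomial.aeval_algHom_apply ((Pi.evalAlgHom E (fun _ : G => Ω) g).comp N.val)
        (⟨f, hf⟩ : N) q
      exact this.symm
    have he : ∀ g, e.1 g = 1 - algebraMap E Ω c⁻¹ * Polynomial.aeval (f g) m0 := by
      intro g
      rw [← hcoe]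
      rfl
    have hz : ∀ g, f g ^ k * Polynomial.aeval (f g) m0 = 0 := by
      intro g
      have h4 := hcoe (minpoly E (⟨f, hf⟩ : N)) g
      rw [minpoly.aeval, hm] at h4
      simpa using h4.symm
    have hE0 : ∀ g, f g = 0 → e.1 g = 0 := by
      intro g hg
      rw [he, hg]
      have : Polynomial.aeval (0 : Ω) m0 = algebraMap E Ω c := by
        rw [hc, ← Polynomial.coeff_zero_eq_eval_zero, Polynomial.coeff_zero_eq_aeval_zero']
      rw [this, ← map_mul, inv_mul_cancel₀ hm0]
      simp
    have hE1 : ∀ g, f g ≠ 0 → e.1 g = 1 := by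
      intro g hg
      rw [he, (mul_eq_zero.1 (hz g)).resolve_left (pow_ne_zero _ hg)]
      simp
    have hconst := hidem e.1 e.2 (fun g => by
      by_cases hg : f g = 0
      · exact Or.inl (hE0 g hg)
      · exact Or.inr (hE1 g hg))
    intro g hg
    apply hf0
    ext g'
    by_contra hg'
    have := hconst g g'
    rw [hE0 g hg, hE1 g' hg'] at this
    exact zero_ne_one this
  have hfield : IsField N := by
    refine ⟨⟨0, 1, zero_ne_one⟩, mul_comm, ?_⟩
    intro a ha
    have hinj : Function.Injective (LinearMap.mulLeft E a) := by
      intro x y hxy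
      ext g
      have h5 : a.1 g * x.1 g = a.1 g * y.1 g := congrFun (congrArg Subtype.val hxy) g
      exact mul_left_cancel₀ (hunit a.1 a.2 (fun h => ha (Subtype.ext h)) g) h5
    obtain ⟨y, hy⟩ := (LinearMap.injective_iff_surjective.1 hinj) 1
    exact ⟨y, hy⟩
  letI : Field N := hfield.toField
  letI act : MulSemiringAction G N :=
    { smul := fun τ f => ⟨fun g => f.1 (g * τ), f.2.1.translate H₁ φ₁ Sm τ,
        f.2.2.translate H₂ φ₂ Sp τ⟩
      one_smul := fun f => Subtype.ext (funext fun g => congrArg f.1 (mul_one g))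
      mul_smul := fun x y f => Subtype.ext (funext fun g => congrArg f.1 (mul_assoc g x y).symm)
      smul_zero := fun _ => rfl
      smul_add := fun _ _ _ => rfl
      smul_one := fun _ => rfl
      smul_mul := fun _ _ _ => rfl }
  have hact : ∀ (τ : G) (f : N) (g : G), (τ • f).1 g = f.1 (g * τ) := fun _ _ _ => rfl
  refine ⟨N, inferInstance, inferInstance, act, (Pi.evalAlgHom E (fun _ : G => Ω) 1).comp N.val,
    ⟨⟨?_⟩, ⟨?_⟩, ⟨?_⟩⟩, ?_⟩
  · intro τ τ' h
    have h6 : ∀ v : G → Ω, v τ = v τ' := by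
      have h7 : ∀ k, C τ k = C τ' k := by
        intro k
        have := congrFun (congrArg Subtype.val (h (L (Pi.single k 1)))) 1
        rw [hact, hact] at this
        simp only [one_mul, L, LinearMap.coe_mk, AddHom.coe_mk, Matrix.mulVec, dotProduct] at this
        simpa [Pi.single_apply, apply_ite] using this
      intro v
      have : v = C *ᵥ (C' *ᵥ v) := by rw [Matrix.mulVec_mulVec, hCC, Matrix.one_mulVec]
      rw [this]
      simp only [Matrix.mulVec, dotProduct, h7]
    have := h6 (Pi.single τ 1)
    by_contra hne
    rw [Pi.single_eq_same, Pi.single_eq_of_ne (Ne.symm hne)] at this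
    exact one_ne_zero this
  · intro τ a f
    rfl
  · intro f hf
    have hc : f.1 = fun _ => f.1 1 := by
      ext g
      have := congrFun (congrArg Subtype.val (hf g)) 1
      rw [hact, one_mul] at this
      exact this
    have hf2 := f.2
    rw [hNmem, hc] at hf2
    obtain ⟨e, he⟩ := hIntg _ (hf2.2.mem_of_const H₂ φ₂ Sp hd₂) (hf2.1.mem_of_const H₁ φ₁ Sm hd₁)
    refine ⟨e, Subtype.ext ?_⟩
    rw [hc, ← he]
    rfl
  · intro z
    obtain ⟨ε, hε⟩ := (hmem z.1).1 z.2
    change z.1 1 ∈ S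
    rw [hε]
    refine hvec S _ _ (fun i j => ?_) (fun i => S.algebraMap_mem _) 1
    rw [hC, Matrix.mul_apply]
    exact S.sum_mem fun k _ => S.mul_mem (hRS _ (h1R _ _)) (hmS (hAm _ _))

end Harb

set_option linter.unusedSectionVars false
set_option linter.style.haveILetI false
set_option linter.unusedSimpArgs false

namespace Harb
open Polynomial

section direct
variable {K Ω : Type} [NontriviallyNormedField K] [NormedField Ω] [CompleteSpace Ω]
  [NormedAlgebra K Ω]

lemma norm_le_of_closure (A B : Submodule K Ω)
    (h : ∀ u ∈ A, ∀ v ∈ B, ‖v‖ ≤ ‖u + v‖) :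
    ∀ u ∈ A.topologicalClosure, ∀ v ∈ B.topologicalClosure, ‖v‖ ≤ ‖u + v‖ := by
  have h1 : ∀ u ∈ A.topologicalClosure, ∀ v ∈ B, ‖v‖ ≤ ‖u + v‖ := by
    intro u hu v hv
    have hc : IsClosed {u : Ω | ‖v‖ ≤ ‖u + v‖} := isClosed_le (by fun_prop) (by fun_prop)
    exact hc.closure_subset_iff.2 (fun u hu => h u hu v hv) hu
  intro u hu v hv
  have hc : IsClosed {v : Ω | ‖v‖ ≤ ‖u + v‖} := isClosed_le (by fun_prop) (by fun_prop)
  exact hc.closure_subset_iff.2 (fun v hv => h1 u hu v hv) hv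

lemma exists_decomp (A B : Submodule K Ω)
    (h : ∀ u ∈ A, ∀ v ∈ B, ‖v‖ ≤ ‖u + v‖) (z : Ω) (hz : z ∈ (A ⊔ B).topologicalClosure) :
    ∃ u ∈ A.topologicalClosure, ∃ v ∈ B.topologicalClosure, z = u + v := by
  have h' := norm_le_of_closure A B h
  let f : A.topologicalClosure × B.topologicalClosure → Ω := fun w => w.1.1 + w.2.1
  have hf : AntilipschitzWith 2 f := by
    refine AntilipschitzWith.of_le_mul_dist fun p q => ?_
    have hq : ‖(p.2.1 - q.2.1)‖ ≤ ‖(p.1.1 - q.1.1) + (p.2.1 - q.2.1)‖ :=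
      h' _ (sub_mem p.1.2 q.1.2) _ (sub_mem p.2.2 q.2.2)
    have e : dist (f p) (f q) = ‖(p.1.1 - q.1.1) + (p.2.1 - q.2.1)‖ := by
      rw [dist_eq_norm]; congr 1; simp only [f]; ring
    rw [e, Prod.dist_eq]
    have e1 : dist p.1 q.1 = ‖p.1.1 - q.1.1‖ := by rw [Subtype.dist_eq, dist_eq_norm]
    have e2 : dist p.2 q.2 = ‖p.2.1 - q.2.1‖ := by rw [Subtype.dist_eq, dist_eq_norm]
    rw [e1, e2]
    have h3 : ‖p.1.1 - q.1.1‖ ≤ ‖(p.1.1 - q.1.1) + (p.2.1 - q.2.1)‖ + ‖p.2.1 - q.2.1‖ := by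
      have := norm_sub_le ((p.1.1 - q.1.1) + (p.2.1 - q.2.1)) (p.2.1 - q.2.1)
      simpa using this
    have h4 := norm_nonneg ((p.1.1 - q.1.1) + (p.2.1 - q.2.1))
    refine max_le ?_ ?_ <;> simp only [NNReal.coe_ofNat] <;> linarith
  have hu : UniformContinuous f := by
    refine UniformContinuous.add ?_ ?_
    · exact uniformContinuous_subtype_val.comp uniformContinuous_fst
    · exact uniformContinuous_subtype_val.comp uniformContinuous_snd
  haveI : CompleteSpace A.topologicalClosure :=
    A.isClosed_topologicalClosure.completeSpace_coe
  haveI : CompleteSpace B.topologicalClosure :=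
    B.isClosed_topologicalClosure.completeSpace_coe
  have hcl : IsClosed (Set.range f) := hf.isClosed_range hu
  have : z ∈ Set.range f := by
    refine hcl.closure_subset_iff.2 ?_ hz
    intro w hw
    obtain ⟨u, hu, v, hv, rfl⟩ := Submodule.mem_sup.1 hw
    exact ⟨(⟨u, A.le_topologicalClosure hu⟩, ⟨v, B.le_topologicalClosure hv⟩), rfl⟩
  obtain ⟨w, rfl⟩ := this
  exact ⟨_, w.1.2, _, w.2.2, rfl⟩

end direct

/-- The abstract properties of the completion of `K(x)` for the Gauss norm. -/
class IsGauss (K Ω : Type) [NontriviallyNormedField K] [NormedField Ω]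
    [NormedAlgebra K Ω] [Algebra (RatFunc K) Ω] : Prop extends IsScalarTower K (RatFunc K) Ω where
  norm_x : ‖algebraMap (RatFunc K) Ω RatFunc.X‖ = 1
  coeff_le : ∀ (f : K[X]) (i : ℕ),
    ‖f.coeff i‖ ≤ ‖aeval (algebraMap (RatFunc K) Ω RatFunc.X) f‖

variable (K Ω : Type) [NontriviallyNormedField K] [CompleteSpace K] [NormedField Ω]
  [CompleteSpace Ω] [IsUltrametricDist Ω] [NormedAlgebra K Ω] [Algebra (RatFunc K) Ω]
  [IsGauss K Ω]

/-- the variable -/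
noncomputable def xx : Ω := algebraMap (RatFunc K) Ω RatFunc.X

lemma norm_xx : ‖xx K Ω‖ = 1 := IsGauss.norm_x

lemma xx_ne : xx K Ω ≠ 0 := by
  intro h
  have := norm_xx K Ω
  rw [h, norm_zero] at this
  exact zero_ne_one this

variable {K} in
lemma coeff_le (f : K[X]) (i : ℕ) : ‖f.coeff i‖ ≤ ‖aeval (xx K Ω) f‖ := IsGauss.coeff_le f i

variable {K} in
lemma algebraMap_poly (f : K[X]) :
    algebraMap (RatFunc K) Ω (algebraMap K[X] (RatFunc K) f) = aeval (xx K Ω) f := by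
  rw [xx, aeval_algebraMap_apply]
  congr 1
  rw [← RatFunc.algebraMap_X, aeval_algebraMap_apply, aeval_X_left_apply]

variable {K} in
lemma norm_finset_le (f : K[X]) (s : Finset ℕ) :
    ‖∑ i ∈ s, (f.coeff i) • (xx K Ω) ^ i‖ ≤ ‖aeval (xx K Ω) f‖ := by
  refine IsUltrametricDist.norm_sum_le_of_forall_le_of_nonneg (norm_nonneg _) fun i _ => ?_
  rw [norm_smul, norm_pow, norm_xx, one_pow, mul_one]
  exact coeff_le Ω f i

noncomputable def Rp0 : Subalgebra K Ω := Algebra.adjoin K {xx K Ω}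
noncomputable def Rm0 : Subalgebra K Ω := Algebra.adjoin K {(xx K Ω)⁻¹}
noncomputable def RR0 : Subalgebra K Ω := Algebra.adjoin K {xx K Ω, (xx K Ω)⁻¹}
noncomputable def Rp : Subalgebra K Ω := (Rp0 K Ω).topologicalClosure
noncomputable def Rm : Subalgebra K Ω := (Rm0 K Ω).topologicalClosure
noncomputable def RR : Subalgebra K Ω := (RR0 K Ω).topologicalClosure

lemma Rp0_le : Rp0 K Ω ≤ RR0 K Ω := Algebra.adjoin_mono (by simp)
lemma Rm0_le : Rm0 K Ω ≤ RR0 K Ω := Algebra.adjoin_mono (by simp)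
lemma Rp_le : Rp K Ω ≤ RR K Ω := Subalgebra.topologicalClosure_mono (Rp0_le K Ω)
lemma Rm_le : Rm K Ω ≤ RR K Ω := Subalgebra.topologicalClosure_mono (Rm0_le K Ω)
lemma Rp_closed : IsClosed (Rp K Ω : Set Ω) := Subalgebra.isClosed_topologicalClosure _
lemma Rm_closed : IsClosed (Rm K Ω : Set Ω) := Subalgebra.isClosed_topologicalClosure _
lemma RR_closed : IsClosed (RR K Ω : Set Ω) := Subalgebra.isClosed_topologicalClosure _
lemma xx_mem_Rp0 : xx K Ω ∈ Rp0 K Ω := Algebra.subset_adjoin (by simp)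
lemma xi_mem_Rm0 : (xx K Ω)⁻¹ ∈ Rm0 K Ω := Algebra.subset_adjoin (by simp)
lemma xx_mem_Rp : xx K Ω ∈ Rp K Ω := Subalgebra.le_topologicalClosure _ (xx_mem_Rp0 K Ω)
lemma xi_mem_Rm : (xx K Ω)⁻¹ ∈ Rm K Ω := Subalgebra.le_topologicalClosure _ (xi_mem_Rm0 K Ω)
lemma xx_mem_RR : xx K Ω ∈ RR K Ω := Rp_le K Ω (xx_mem_Rp K Ω)
lemma xi_mem_RR : (xx K Ω)⁻¹ ∈ RR K Ω := Rm_le K Ω (xi_mem_Rm K Ω)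

variable {K} in
lemma poly_mem_Rp0 (f : K[X]) : aeval (xx K Ω) f ∈ Rp0 K Ω :=
  aeval_mem_adjoin_singleton _ _

variable {K} in
lemma poly_mem_Rp (f : K[X]) : aeval (xx K Ω) f ∈ Rp K Ω :=
  Subalgebra.le_topologicalClosure _ (poly_mem_Rp0 Ω f)

lemma mem_Rp0 {z : Ω} (hz : z ∈ Rp0 K Ω) : ∃ f : K[X], aeval (xx K Ω) f = z := by
  rwa [Rp0, Algebra.adjoin_singleton_eq_range_aeval] at hz

lemma mem_Rm0 {z : Ω} (hz : z ∈ Rm0 K Ω) : ∃ f : K[X], aeval ((xx K Ω)⁻¹) f = z := by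
  rwa [Rm0, Algebra.adjoin_singleton_eq_range_aeval] at hz

variable {K} in
lemma rev_eq (f : K[X]) : aeval ((xx K Ω)⁻¹) f =
    aeval (xx K Ω) f.reverse * (xx K Ω)⁻¹ ^ f.natDegree := by
  letI := invertibleOfNonzero (inv_ne_zero (xx_ne K Ω))
  have h := eval₂_reverse_mul_pow (algebraMap K Ω) (xx K Ω)⁻¹ f
  rw [invOf_eq_inv, inv_inv] at h
  rw [aeval_def, aeval_def, h]

/-- polynomials in `x⁻¹` without constant term -/
noncomputable def Bm0 : Submodule K Ω :=
  (Rm0 K Ω).toSubmodule.map (LinearMap.mulLeft K (xx K Ω)⁻¹)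

noncomputable def Bm : Submodule K Ω := (Bm0 K Ω).topologicalClosure

lemma Bm0_le : Bm0 K Ω ≤ (Rm0 K Ω).toSubmodule := by
  rintro _ ⟨z, hz, rfl⟩
  exact (Rm0 K Ω).mul_mem (xi_mem_Rm0 K Ω) hz

lemma Bm_le {z : Ω} (hz : z ∈ Bm K Ω) : z ∈ Rm K Ω :=
  closure_mono (Bm0_le K Ω) hz

lemma mul_Rm_mem_Bm {z : Ω} (hz : z ∈ Rm K Ω) : (xx K Ω)⁻¹ * z ∈ Bm K Ω := by
  have := map_mem_closure (f := fun z => (xx K Ω)⁻¹ * z) (t := (Bm0 K Ω : Set Ω))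
    (by fun_prop) hz (fun y hy => ⟨y, hy, rfl⟩)
  exact this

lemma Bm_mul {z : Ω} (hz : z ∈ Bm K Ω) : xx K Ω * z ∈ Rm K Ω := by
  have := map_mem_closure (f := fun z => xx K Ω * z) (t := (Rm0 K Ω : Set Ω))
    (by fun_prop) hz (by
      rintro _ ⟨y, hy, rfl⟩
      simpa [xx_ne] using hy)
  exact this

lemma norm_decomp0 : ∀ u ∈ (Rp0 K Ω).toSubmodule, ∀ v ∈ Bm0 K Ω, ‖v‖ ≤ ‖u + v‖ := by
  rintro u hu _ ⟨v, hv, rfl⟩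
  obtain ⟨f, rfl⟩ := mem_Rp0 K Ω hu
  obtain ⟨g, rfl⟩ := mem_Rm0 K Ω hv
  set n := g.natDegree with hn
  have h0 := xx_ne K Ω
  set x := xx K Ω with hx
  have hx1 : ‖x‖ = 1 := norm_xx K Ω
  have e : ∀ z : Ω, ‖z‖ = ‖x ^ (n + 1) * z‖ := by
    intro z
    rw [norm_mul, norm_pow, hx1, one_pow, one_mul]
  simp only [LinearMap.mulLeft_apply]
  rw [e, e (_ + _), mul_add]
  have e2 : x ^ (n + 1) * (x⁻¹ * aeval x⁻¹ g) = aeval x g.reverse := by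
    rw [hx, rev_eq, ← hx, ← hn]
    simp only [inv_pow, pow_add]
    field_simp
  have e3 : x ^ (n + 1) * aeval x f = aeval x (X ^ (n + 1) * f) := by simp
  rw [e2, e3, ← map_add]
  have hdeg : g.reverse.natDegree < n + 1 := by
    have := g.reverse_natDegree_le
    omega
  have e4 : aeval x g.reverse =
      ∑ i ∈ Finset.range (n + 1), (X ^ (n + 1) * f + g.reverse).coeff i • x ^ i := by
    rw [aeval_eq_sum_range' hdeg]
    refine Finset.sum_congr rfl fun i hi => ?_
    rw [coeff_add, coeff_X_pow_mul', if_neg (by simp at hi; omega), zero_add]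
  rw [e4]
  exact norm_finset_le Ω _ _

lemma RR0_le : (RR0 K Ω).toSubmodule ≤ (Rp0 K Ω).toSubmodule ⊔ Bm0 K Ω := by
  intro z hz
  have h0 := xx_ne K Ω
  have h1 : ∃ (n : ℕ) (q : K[X]), z = aeval (xx K Ω) q * (xx K Ω)⁻¹ ^ n := by
    have hz' : z ∈ RR0 K Ω := hz
    rw [RR0] at hz'
    induction hz' using Algebra.adjoin_induction with
    | mem y hy =>
      rcases hy with rfl | rfl
      · exact ⟨0, X, by simp⟩
      · exact ⟨1, 1, by simp⟩
    | algebraMap r => exact ⟨0, C r, by simp⟩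
    | add y y' hy hy' h h' =>
      obtain ⟨n, q, rfl⟩ := h hy
      obtain ⟨n', q', rfl⟩ := h' hy'
      refine ⟨n + n', q * X ^ n' + q' * X ^ n, ?_⟩
      simp only [map_add, map_mul, map_pow, aeval_X]
      simp only [inv_pow, pow_add]
      field_simp
    | mul y y' hy hy' h h' =>
      obtain ⟨n, q, rfl⟩ := h hy
      obtain ⟨n', q', rfl⟩ := h' hy'
      refine ⟨n + n', q * q', ?_⟩
      simp only [map_mul]
      simp only [inv_pow, pow_add]
      field_simp
  obtain ⟨n, q, rfl⟩ := h1
  rw [aeval_eq_sum_range, Finset.sum_mul]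
  refine Submodule.sum_mem _ fun i _ => ?_
  rw [smul_mul_assoc]
  refine Submodule.smul_mem _ _ ?_
  by_cases hi : n ≤ i
  · refine Submodule.mem_sup_left ?_
    have : xx K Ω ^ i * (xx K Ω)⁻¹ ^ n = xx K Ω ^ (i - n) := by
      obtain ⟨k, rfl⟩ := Nat.exists_eq_add_of_le hi
      simp only [Nat.add_sub_cancel_left, pow_add]
      simp only [inv_pow, pow_add]
      field_simp
    rw [this]
    exact (Rp0 K Ω).pow_mem (xx_mem_Rp0 K Ω) _
  · refine Submodule.mem_sup_right ?_
    refine ⟨(xx K Ω)⁻¹ ^ (n - i - 1), (Rm0 K Ω).pow_mem (xi_mem_Rm0 K Ω) _, ?_⟩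
    obtain ⟨k, rfl⟩ := Nat.exists_eq_add_of_lt (not_le.1 hi)
    simp only [LinearMap.mulLeft_apply]
    have : i + k + 1 - i - 1 = k := by omega
    rw [this]
    simp only [inv_pow, pow_add]
    field_simp

lemma norm_decomp {u v : Ω} (hu : u ∈ Rp K Ω) (hv : v ∈ Bm K Ω) : ‖v‖ ≤ ‖u + v‖ :=
  norm_le_of_closure _ _ (norm_decomp0 K Ω) u hu v hv

lemma decomp {z : Ω} (hz : z ∈ RR K Ω) : ∃ u ∈ Rp K Ω, ∃ v ∈ Bm K Ω, z = u + v :=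
  exists_decomp (Rp0 K Ω).toSubmodule (Bm0 K Ω) (norm_decomp0 K Ω) z
    (closure_mono (RR0_le K Ω) hz)

/-- existence of a projection -/
lemma exists_proj : ∃ P : Ω → Ω, (∀ z ∈ RR K Ω, P z ∈ Bm K Ω ∧ z - P z ∈ Rp K Ω ∧ ‖P z‖ ≤ ‖z‖) ∧
    ∀ z ∈ RR K Ω, ∀ w ∈ RR K Ω, P (z - w) = P z - P w := by
  classical
  choose! u hu v hv h using fun z (hz : z ∈ RR K Ω) => decomp K Ω hz
  refine ⟨v, fun z hz => ⟨hv z hz, ?_, ?_⟩, ?_⟩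
  · have : z - v z = u z := by
      nth_rewrite 1 [h z hz]
      ring
    rw [this]
    exact hu z hz
  · nth_rewrite 2 [h z hz]
    exact norm_decomp K Ω (hu z hz) (hv z hz)
  · intro z hz w hw
    have hzw := (RR K Ω).sub_mem hz hw
    have h1 : v (z - w) - (v z - v w) ∈ Bm K Ω :=
      sub_mem (hv _ hzw) (sub_mem (hv _ hz) (hv _ hw))
    have h2 : u (z - w) - (u z - u w) ∈ Rp K Ω :=
      sub_mem (hu _ hzw) (sub_mem (hu _ hz) (hu _ hw))
    have h3 := norm_decomp K Ω h2 h1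
    have h4 : u (z - w) - (u z - u w) + (v (z - w) - (v z - v w)) = 0 := by
      linear_combination - h _ hzw + h _ hz - h _ hw
    rw [h4, norm_zero, norm_le_zero_iff, sub_eq_zero] at h3
    exact h3

/-- intersection lemma -/
lemma inter_poly (M : ℕ) {w : Ω} (h1 : w ∈ Rp K Ω) (h2 : (xx K Ω)⁻¹ ^ M * w ∈ Rm K Ω) :
    ∃ f : K[X], w = aeval (xx K Ω) f := by
  have h0 := xx_ne K Ω
  let A0 : Submodule K Ω := (degreeLT K (M + 1)).map (aeval (xx K Ω)).toLinearMap
  let B0 : Submodule K Ω :=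
    (Rp0 K Ω).toSubmodule.map (LinearMap.mulLeft K (xx K Ω ^ (M + 1)))
  have hAB : ∀ u ∈ A0, ∀ v ∈ B0, ‖v‖ ≤ ‖u + v‖ := by
    rintro _ ⟨f, hf, rfl⟩ _ ⟨v, hv, rfl⟩
    obtain ⟨g, rfl⟩ := mem_Rp0 K Ω hv
    simp only [LinearMap.mulLeft_apply, AlgHom.toLinearMap_apply]
    have e3 : xx K Ω ^ (M + 1) * aeval (xx K Ω) g = aeval (xx K Ω) (X ^ (M + 1) * g) := by simp
    have hdeg : (X ^ (M + 1) * g).natDegree < (X ^ (M + 1) * g).natDegree + 1 := by omega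
    rw [e3, ← map_add]
    have e4 : aeval (xx K Ω) (X ^ (M + 1) * g) =
      ∑ i ∈ Finset.Ico (M + 1) ((X ^ (M + 1) * g).natDegree + 1 + (M + 1)),
        (f + X ^ (M + 1) * g).coeff i • xx K Ω ^ i := by
      rw [aeval_eq_sum_range' (n := (X ^ (M + 1) * g).natDegree + 1 + (M + 1)) (by omega),
        ← Finset.sum_range_add_sum_Ico _ (m := M + 1) (by omega), Finset.sum_eq_zero, zero_add]
      · refine Finset.sum_congr rfl fun i hi => ?_
        rw [SetLike.mem_coe, mem_degreeLT] at hf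
        rw [coeff_add, coeff_eq_zero_of_degree_lt (p := f), zero_add]
        refine hf.trans_le ?_
        simp at hi
        exact_mod_cast hi.1
      · intro i hi
        rw [coeff_X_pow_mul', if_neg (by simp at hi; omega), zero_smul]
    rw [e4]
    exact norm_finset_le Ω _ _
  have hle : (Rp0 K Ω).toSubmodule ≤ A0 ⊔ B0 := by
    intro z hz
    obtain ⟨f, rfl⟩ := mem_Rp0 K Ω hz
    have := modByMonic_add_div f (X ^ (M + 1))
    rw [← this, map_add]
    refine Submodule.add_mem_sup ⟨_, ?_, rfl⟩ ⟨_, poly_mem_Rp0 Ω (f /ₘ X ^ (M + 1)), by simp⟩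
    rw [SetLike.mem_coe, mem_degreeLT]
    have := degree_modByMonic_lt f (monic_X_pow (R := K) (M + 1))
    simpa using this
  obtain ⟨u, hu, v, hv, rfl⟩ := exists_decomp A0 B0 hAB w (closure_mono hle h1)
  have hfd : FiniteDimensional K A0 := inferInstance
  have hA : IsClosed (A0 : Set Ω) := Submodule.closed_of_finiteDimensional A0
  have hu' : u ∈ A0 := by
    have := hA.closure_eq
    change u ∈ closure (A0 : Set Ω) at hu
    rwa [this] at hu
  obtain ⟨f, hf, rfl⟩ := hu'
  set x := xx K Ω with hx
  have hv1 : x⁻¹ ^ (M + 1) * v ∈ Rp K Ω := by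
    have := map_mem_closure (f := fun z => x⁻¹ ^ (M + 1) * z) (t := (Rp0 K Ω : Set Ω))
      (by fun_prop) hv (by
        rintro _ ⟨y, hy, rfl⟩
        simp only [LinearMap.mulLeft_apply]
        rw [← mul_assoc, ← mul_pow, inv_mul_cancel₀ h0, one_pow, one_mul]
        exact hy)
    exact this
  have hf1 : x⁻¹ ^ M * aeval x f ∈ Rm K Ω := by
    rw [SetLike.mem_coe, mem_degreeLT] at hf
    have hf2 : f.natDegree < M + 1 := by
      by_cases hff : f = 0
      · simp [hff]
      · rwa [← natDegree_lt_iff_degree_lt hff] at hf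
    rw [aeval_eq_sum_range' hf2, Finset.mul_sum]
    refine Subalgebra.sum_mem _ fun i hi => ?_
    rw [mul_smul_comm]
    refine Subalgebra.smul_mem _ ?_ _
    have : x⁻¹ ^ M * x ^ i = x⁻¹ ^ (M - i) := by
      obtain ⟨k, rfl⟩ := Nat.exists_eq_add_of_le (show i ≤ M by simp at hi; omega)
      simp only [Nat.add_sub_cancel_left, pow_add]
      simp only [inv_pow, pow_add]
      field_simp
    rw [this]
    exact Subalgebra.pow_mem _ (xi_mem_Rm K Ω) _
  have hv2 : x⁻¹ ^ (M + 1) * v ∈ Bm K Ω := by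
    have : x⁻¹ ^ (M + 1) * v = x⁻¹ * (x⁻¹ ^ M * ((aeval x) f + v) - x⁻¹ ^ M * aeval x f) := by
      ring
    rw [this]
    exact mul_Rm_mem_Bm K Ω (sub_mem h2 hf1)
  have hv3 := norm_decomp K Ω (neg_mem hv1) hv2
  rw [neg_add_cancel, norm_zero, norm_le_zero_iff] at hv3
  have : v = 0 := by simpa [h0] using hv3
  exact ⟨f, by rw [this]; simp⟩

end Harb

set_option linter.unusedSectionVars false
set_option linter.style.haveILetI false
set_option linter.unusedSimpArgs false

namespace Harb
open Polynomial

section Loc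
variable {K Ω : Type} [NontriviallyNormedField K] [CompleteSpace K] [NormedField Ω]
  [CompleteSpace Ω] [IsUltrametricDist Ω] [NormedAlgebra K Ω] [Algebra (RatFunc K) Ω]
  [IsGauss K Ω]

/-- condition: rational functions are fractions of rational elements of `T` -/
def FracCond (T : Subalgebra K Ω) : Prop := ∀ e : RatFunc K, ∃ h : RatFunc K, h ≠ 0 ∧
  algebraMap (RatFunc K) Ω h ∈ T ∧ algebraMap (RatFunc K) Ω (h * e) ∈ T

/-- localization of `T` at rational elements -/
noncomputable def locAlg (T : Subalgebra K Ω) (hT : FracCond T) : Subalgebra (RatFunc K) Ω where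
  carrier := {z | ∃ h : RatFunc K, h ≠ 0 ∧ algebraMap (RatFunc K) Ω h ∈ T ∧
    algebraMap (RatFunc K) Ω h * z ∈ T}
  mul_mem' := by
    rintro z w ⟨h, h0, h1, h2⟩ ⟨k, k0, k1, k2⟩
    refine ⟨h * k, mul_ne_zero h0 k0, ?_, ?_⟩
    · rw [map_mul]; exact T.mul_mem h1 k1
    · rw [map_mul]
      have := T.mul_mem h2 k2
      convert this using 1
      ring
  add_mem' := by
    rintro z w ⟨h, h0, h1, h2⟩ ⟨k, k0, k1, k2⟩
    refine ⟨h * k, mul_ne_zero h0 k0, ?_, ?_⟩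
    · rw [map_mul]; exact T.mul_mem h1 k1
    · rw [map_mul]
      have := T.add_mem (T.mul_mem h2 k1) (T.mul_mem h1 k2)
      convert this using 1
      ring
  algebraMap_mem' := by
    intro e
    obtain ⟨h, h0, h1, h2⟩ := hT e
    refine ⟨h, h0, h1, ?_⟩
    rwa [← map_mul]

lemma mem_locAlg {T : Subalgebra K Ω} {hT : FracCond T} {z : Ω} : z ∈ locAlg T hT ↔
    ∃ h : RatFunc K, h ≠ 0 ∧ algebraMap (RatFunc K) Ω h ∈ T ∧
    algebraMap (RatFunc K) Ω h * z ∈ T := Iff.rfl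

lemma le_locAlg {T : Subalgebra K Ω} (hT : FracCond T) {z : Ω} (hz : z ∈ T) :
    z ∈ locAlg T hT :=
  ⟨1, one_ne_zero, by rw [map_one]; exact T.one_mem, by rwa [map_one, one_mul]⟩

lemma locAlg_mono {T T' : Subalgebra K Ω} (hT : FracCond T) (hT' : FracCond T') (h : T ≤ T') :
    locAlg T hT ≤ locAlg T' hT' := by
  rintro z ⟨k, k0, k1, k2⟩
  exact ⟨k, k0, h k1, h k2⟩

variable (K Ω)

lemma frac_Rp : FracCond (Rp K Ω) := by
  intro e
  refine ⟨algebraMap K[X] _ e.denom, by simpa using e.denom_ne_zero, ?_, ?_⟩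
  · rw [algebraMap_poly]
    exact poly_mem_Rp Ω _
  · have : algebraMap K[X] (RatFunc K) e.denom * e = algebraMap K[X] (RatFunc K) e.num := by
      nth_rewrite 2 [← RatFunc.num_div_denom e]
      rw [mul_div_cancel₀]
      simpa using e.denom_ne_zero
    rw [this, algebraMap_poly]
    exact poly_mem_Rp Ω _

lemma frac_RR : FracCond (RR K Ω) := by
  intro e
  obtain ⟨h, h0, h1, h2⟩ := frac_Rp K Ω e
  exact ⟨h, h0, Rp_le K Ω h1, Rp_le K Ω h2⟩

variable {K} in
lemma poly_mem_Rm (f : K[X]) (n : ℕ) (hn : f.natDegree ≤ n) :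
    (xx K Ω)⁻¹ ^ n * aeval (xx K Ω) f ∈ Rm K Ω := by
  have h0 := xx_ne K Ω
  rw [aeval_eq_sum_range' (n := n + 1) (by omega), Finset.mul_sum]
  refine Subalgebra.sum_mem _ fun i hi => ?_
  rw [mul_smul_comm]
  refine Subalgebra.smul_mem _ ?_ _
  have : (xx K Ω)⁻¹ ^ n * xx K Ω ^ i = (xx K Ω)⁻¹ ^ (n - i) := by
    obtain ⟨k, rfl⟩ := Nat.exists_eq_add_of_le (show i ≤ n by simp at hi; omega)
    simp only [Nat.add_sub_cancel_left, pow_add]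
    simp only [inv_pow, pow_add]
    field_simp
  rw [this]
  exact Subalgebra.pow_mem _ (xi_mem_Rm K Ω) _

lemma frac_Rm : FracCond (Rm K Ω) := by
  intro e
  have hd : algebraMap K[X] (RatFunc K) e.denom ≠ 0 := by simpa using e.denom_ne_zero
  refine ⟨RatFunc.X⁻¹ ^ (e.num.natDegree + e.denom.natDegree) * algebraMap K[X] _ e.denom,
    mul_ne_zero (pow_ne_zero _ (inv_ne_zero RatFunc.X_ne_zero)) hd, ?_, ?_⟩
  · rw [map_mul, map_pow, map_inv₀, algebraMap_poly]
    exact poly_mem_Rm Ω _ _ (by omega)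
  · have : algebraMap K[X] (RatFunc K) e.denom * e = algebraMap K[X] (RatFunc K) e.num := by
      nth_rewrite 2 [← RatFunc.num_div_denom e]
      rw [mul_div_cancel₀]
      simpa using e.denom_ne_zero
    rw [mul_assoc, this, map_mul, map_pow, map_inv₀, algebraMap_poly]
    exact poly_mem_Rm Ω _ _ (by omega)

noncomputable def Sp : Subalgebra (RatFunc K) Ω := locAlg (Rp K Ω) (frac_Rp K Ω)
noncomputable def Sm : Subalgebra (RatFunc K) Ω := locAlg (Rm K Ω) (frac_Rm K Ω)
noncomputable def SS : Subalgebra (RatFunc K) Ω := locAlg (RR K Ω) (frac_RR K Ω)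

variable {K Ω}

/-- polynomial denominators -/
lemma exists_poly_denom {T : Subalgebra K Ω} {hT : FracCond T} (hp : Rp K Ω ≤ T) {z : Ω}
    (hz : z ∈ locAlg T hT) : ∃ f : K[X], f ≠ 0 ∧ aeval (xx K Ω) f * z ∈ T := by
  obtain ⟨h, h0, h1, h2⟩ := hz
  refine ⟨h.num, RatFunc.num_ne_zero h0, ?_⟩
  have : algebraMap K[X] (RatFunc K) h.num = algebraMap K[X] (RatFunc K) h.denom * h := by
    nth_rewrite 3 [← RatFunc.num_div_denom h]
    rw [mul_div_cancel₀]
    simpa using h.denom_ne_zero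
  rw [← algebraMap_poly, this, map_mul, mul_assoc, algebraMap_poly]
  exact T.mul_mem (hp (poly_mem_Rp Ω _)) h2

lemma aeval_ne {f : K[X]} (hf : f ≠ 0) : aeval (xx K Ω) f ≠ 0 := by
  rw [← algebraMap_poly]
  simpa using hf

lemma hIntg {z : Ω} (hp : z ∈ Sp K Ω) (hm : z ∈ Sm K Ω) :
    z ∈ (algebraMap (RatFunc K) Ω).range := by
  obtain ⟨f, f0, hf⟩ := exists_poly_denom le_rfl hp
  obtain ⟨k, k0, -, hk⟩ := hm
  have hnum : algebraMap K[X] (RatFunc K) k.num = algebraMap K[X] (RatFunc K) k.denom * k := by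
    nth_rewrite 3 [← RatFunc.num_div_denom k]
    rw [mul_div_cancel₀]
    simpa using k.denom_ne_zero
  have hnum' : aeval (xx K Ω) k.num = aeval (xx K Ω) k.denom * algebraMap (RatFunc K) Ω k := by
    rw [← algebraMap_poly, hnum, map_mul, algebraMap_poly]
  have h1 : aeval (xx K Ω) k.num * (aeval (xx K Ω) f * z) ∈ Rp K Ω :=
    mul_mem (poly_mem_Rp Ω _) hf
  have h2 : (xx K Ω)⁻¹ ^ (k.denom.natDegree + f.natDegree) *
      (aeval (xx K Ω) k.num * (aeval (xx K Ω) f * z)) ∈ Rm K Ω := by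
    have := mul_mem (mul_mem (poly_mem_Rm Ω k.denom _ le_rfl) (poly_mem_Rm Ω f _ le_rfl)) hk
    convert this using 1
    rw [hnum']
    ring
  obtain ⟨g, hg⟩ := inter_poly K Ω _ h1 h2
  have e1 := aeval_ne (Ω := Ω) f0
  have e2 := aeval_ne (Ω := Ω) (RatFunc.num_ne_zero k0)
  refine ⟨algebraMap K[X] _ g / (algebraMap K[X] _ k.num * algebraMap K[X] _ f), ?_⟩
  rw [map_div₀, map_mul, algebraMap_poly, algebraMap_poly, algebraMap_poly, ← hg]
  field_simp

end Loc

section Cartan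
attribute [local instance] Matrix.linftyOpNormedRing Matrix.linftyOpNormedAlgebra

variable {K Ω : Type} [NontriviallyNormedField K] [CompleteSpace K] [NormedField Ω]
  [CompleteSpace Ω] [IsUltrametricDist Ω] [NormedAlgebra K Ω] [Algebra (RatFunc K) Ω]
  [IsGauss K Ω] {n : Type} [Fintype n] [DecidableEq n]

lemma mat_norm_mono (A B : Matrix n n Ω) (h : ∀ i j, ‖A i j‖ ≤ ‖B i j‖) : ‖A‖ ≤ ‖B‖ := by
  rw [Matrix.linfty_opNorm_def, Matrix.linfty_opNorm_def]
  refine NNReal.coe_le_coe.2 (Finset.sup_mono_fun fun i _ => Finset.sum_le_sum fun j _ => ?_)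
  exact_mod_cast h i j

lemma mat_closed (T : Set Ω) (hT : IsClosed T) : IsClosed {A : Matrix n n Ω | ∀ i j, A i j ∈ T} := by
  simp only [Set.ofPred_forall]
  refine isClosed_iInter fun i => isClosed_iInter fun j => ?_
  exact hT.preimage (f := fun A : Matrix n n Ω => A i j) (by fun_prop)

lemma mat_mul_mem {T : Subalgebra K Ω} {A B : Matrix n n Ω} (hA : ∀ i j, A i j ∈ T)
    (hB : ∀ i j, B i j ∈ T) : ∀ i j, (A * B) i j ∈ T := by
  intro i j
  rw [Matrix.mul_apply]
  exact sum_mem fun k _ => mul_mem (hA _ _) (hB _ _)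

lemma mat_one_mem (T : Subalgebra K Ω) : ∀ i j, (1 : Matrix n n Ω) i j ∈ T := by
  intro i j
  rw [Matrix.one_apply]
  split_ifs
  exacts [one_mem _, zero_mem _]

lemma matComplete : @CompleteSpace (Matrix n n Ω) PseudoMetricSpace.toUniformSpace :=
  inferInstanceAs (CompleteSpace (n → n → Ω))

attribute [local instance] matComplete

lemma neumann {T : Subalgebra K Ω} (hT : IsClosed (T : Set Ω)) {w : Matrix n n Ω}
    (hw : ∀ i j, w i j ∈ T) (hn : ‖w‖ < 1) :
    ∃ w' : Matrix n n Ω, (1 - w) * w' = 1 ∧ ∀ i j, w' i j ∈ T := by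
  have hs := summable_geometric_of_norm_lt_one hn
  refine ⟨∑' k, w ^ k, mul_neg_geom_series w hn, ?_⟩
  have hc := mat_closed (n := n) (T : Set Ω) hT
  refine hc.mem_of_tendsto hs.hasSum (Filter.Eventually.of_forall fun s => ?_)
  intro i j
  rw [Matrix.sum_apply]
  refine sum_mem fun k _ => ?_
  clear * - hw
  induction k generalizing i j with
  | zero => rw [pow_zero]; exact mat_one_mem T i j
  | succ k ih => rw [pow_succ]; exact mat_mul_mem ih hw i j

theorem cartan (M M' : Matrix n n Ω) (hM : M * M' = 1) (hMR : ∀ i j, M i j ∈ RR K Ω)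
    (hMR' : ∀ i j, M' i j ∈ RR K Ω) :
    ∃ A A' B B' : Matrix n n Ω, A * A' = 1 ∧ B * B' = 1 ∧ M = A * B ∧
        (∀ i j, A i j ∈ Sm K Ω) ∧ (∀ i j, A' i j ∈ Sm K Ω) ∧ (∀ i j, B i j ∈ Sp K Ω) ∧
        (∀ i j, B' i j ∈ Sp K Ω) := by
  have hM' : M' * M = 1 := mul_eq_one_comm.1 hM
  -- approximate
  obtain ⟨C, hC, hCn⟩ : ∃ C : Matrix n n Ω, (∀ i j, C i j ∈ RR0 K Ω) ∧ ‖C * M - 1‖ ≤ 1 / 4 := by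
    have hcl : M' ∈ closure {C : Matrix n n Ω | ∀ i j, C i j ∈ RR0 K Ω} := by
      have : {C : Matrix n n Ω | ∀ i j, C i j ∈ RR0 K Ω} =
        (Set.pi Set.univ fun i => Set.pi Set.univ fun j => (RR0 K Ω : Set Ω)) := by
        ext C; exact ⟨fun h i _ j _ => h i j, fun h i j => h i trivial j trivial⟩
      rw [this]
      erw [closure_pi_set]
      intro i _
      dsimp only
      erw [closure_pi_set]
      intro j _
      exact hMR' i j
    have hev : ∀ᶠ C in nhds M', ‖C * M - 1‖ < 1 / 4 := by
      have hcont : Continuous fun C : Matrix n n Ω => ‖C * M - 1‖ := by fun_prop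
      refine hcont.continuousAt.eventually_lt continuousAt_const ?_
      rw [hM', sub_self, norm_zero]
      norm_num
    obtain ⟨C, hC1, hC2⟩ := mem_closure_iff_nhds.1 hcl _ hev
    exact ⟨C, hC2, le_of_lt hC1⟩
  set a := C * M - 1 with ha
  have hRC : ∀ i j, C i j ∈ RR K Ω := fun i j => Subalgebra.le_topologicalClosure _ (hC i j)
  have haR : ∀ i j, a i j ∈ RR K Ω := fun i j =>
    sub_mem (mat_mul_mem hRC hMR i j) (mat_one_mem _ i j)
  obtain ⟨P, hP, hPs⟩ := exists_proj K Ω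
  have hBR : ∀ z ∈ Bm K Ω, z ∈ RR K Ω := fun z hz => Rm_le K Ω (Bm_le K Ω hz)
  set s : Set (Matrix n n Ω) := {u | ∀ i j, u i j ∈ (Bm K Ω : Set Ω)} with hs
  have hsc : IsComplete s := (mat_closed (n := n) (Bm K Ω : Set Ω)
    (Submodule.isClosed_topologicalClosure _)).isComplete
  let T : Matrix n n Ω → Matrix n n Ω := fun u => - (a + u * a).map P
  have hRs : ∀ u ∈ s, ∀ i j, (a + u * a) i j ∈ RR K Ω := fun u hu i j =>
    add_mem (haR i j) (mat_mul_mem (fun i j => hBR _ (hu i j)) haR i j)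
  have hTs : Set.MapsTo T s s := by
    intro u hu i j
    exact neg_mem (hP _ (hRs u hu i j)).1
  have hTc : ContractingWith (1 / 2) (hTs.restrict T s s) := by
    refine ⟨by rw [← NNReal.coe_lt_coe]; norm_num, LipschitzWith.of_dist_le_mul fun u u' => ?_⟩
    rw [Subtype.dist_eq, Subtype.dist_eq, dist_eq_norm, dist_eq_norm]
    simp only [Set.MapsTo.val_restrict_apply]
    calc ‖T u - T u'‖ ≤ ‖(u.1 - u'.1) * a‖ := by
          refine mat_norm_mono _ _ fun i j => ?_
          have e : (T u - T u') i j = - P (((u.1 - u'.1) * a) i j) := by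
            simp only [T, Matrix.sub_apply, Matrix.neg_apply, Matrix.map_apply]
            have := hPs _ (hRs u u.2 i j) _ (hRs u' u'.2 i j)
            have e2 : ((u.1 - u'.1) * a) i j = (a + u.1 * a) i j - (a + u'.1 * a) i j := by
              rw [Matrix.sub_mul]
              simp
            rw [e2, this]
            ring
          rw [e, norm_neg]
          exact (hP _ (mat_mul_mem (fun i j => hBR _ (sub_mem (u.2 i j) (u'.2 i j))) haR i j)).2.2
      _ ≤ ‖u.1 - u'.1‖ * ‖a‖ := norm_mul_le _ _
      _ ≤ _ := by
          have := norm_nonneg (u.1 - u'.1)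
          have h2 : ((1 / 2 : NNReal) : ℝ) = 1 / 2 := by norm_num
          rw [h2]
          nlinarith
  obtain ⟨u, hus, huf, -⟩ := hTc.exists_fixedPoint' hsc hTs (x := 0)
    (fun i j => (Bm K Ω).zero_mem) (edist_ne_top _ _)
  have huT : u = - (a + u * a).map P := huf.symm
  have hun : ‖u‖ ≤ 1 / 3 := by
    have h1 : ‖u‖ ≤ ‖a + u * a‖ := by
      nth_rewrite 1 [huT]
      refine mat_norm_mono _ _ fun i j => ?_
      rw [Matrix.neg_apply, norm_neg]
      exact (hP _ (hRs u hus i j)).2.2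
    have h2 := norm_add_le a (u * a)
    have h3 := norm_mul_le u a
    have := norm_nonneg u
    nlinarith
  set v := (1 + u) * (1 + a) with hv
  have hv1 : ∀ i j, (1 - v) i j ∈ Rp K Ω := by
    intro i j
    have : (1 - v) i j = - ((a + u * a) i j - P ((a + u * a) i j)) := by
      have e := congrFun (congrFun huT i) j
      rw [Matrix.neg_apply, Matrix.map_apply] at e
      have e2 : 1 - v = - (a + u * a + u) := by rw [hv]; noncomm_ring
      rw [e2, Matrix.neg_apply, Matrix.add_apply, e]
      ring
    rw [this]
    exact neg_mem (hP _ (hRs u hus i j)).2.1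
  have hvn : ‖1 - v‖ < 1 := by
    have e2 : 1 - v = - (a + u * a + u) := by rw [hv]; noncomm_ring
    rw [e2, norm_neg]
    have h2 := norm_add_le a (u * a)
    have h3 := norm_mul_le u a
    have h4 := norm_add_le (a + u * a) u
    have := norm_nonneg u
    have := norm_nonneg a
    nlinarith
  obtain ⟨v', hv', hvp'⟩ := neumann (Rp_closed K Ω) hv1 hvn
  rw [sub_sub_cancel] at hv'
  obtain ⟨u', hu', hum'⟩ := neumann (w := -u) (Rm_closed K Ω)
    (fun i j => neg_mem (Bm_le K Ω (hus i j)))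
    (by rw [norm_neg]; linarith)
  rw [sub_neg_eq_add] at hu'
  have hu'' : u' * (1 + u) = 1 := mul_eq_one_comm.1 hu'
  have hCM : C * M = 1 + a := by rw [ha]; abel
  -- C is invertible over the rational function field
  have hCE : ∀ i j, ∃ e : RatFunc K, algebraMap (RatFunc K) Ω e = C i j := by
    intro i j
    have hle : RR0 K Ω ≤ ((⊥ : Subalgebra (RatFunc K) Ω).restrictScalars K) := by
      rw [RR0, Algebra.adjoin_le_iff]
      rintro y (rfl | rfl)
      · exact ⟨RatFunc.X, rfl⟩
      · exact ⟨RatFunc.X⁻¹, map_inv₀ (algebraMap (RatFunc K) Ω) _⟩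
    obtain ⟨e, he⟩ := hle (hC i j)
    exact ⟨e, he⟩
  choose CE hCE using hCE
  have hCmap : C = (Matrix.of CE).map (algebraMap (RatFunc K) Ω) := by
    ext i j
    rw [Matrix.map_apply, Matrix.of_apply, hCE]
  have hinv : C * (M * v' * (1 + u)) = 1 := by
    have : (1 + a) * v' * (1 + u) = 1 := by
      have h5 : u' * v = 1 + a := by rw [hv, ← mul_assoc, hu'', one_mul]
      rw [← h5, mul_assoc u', hv', mul_one, hu'']
    rw [← mul_assoc, ← mul_assoc, hCM, this]
  have hdet : (Matrix.of CE).det ≠ 0 := by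
    intro h0
    have h1 : C.det = 0 := by
      rw [hCmap, ← RingHom.mapMatrix_apply, ← RingHom.map_det, h0, map_zero]
    have h2 := congrArg Matrix.det hinv
    rw [Matrix.det_mul, h1, zero_mul, Matrix.det_one] at h2
    exact zero_ne_one h2
  set D : Matrix n n Ω := ((Matrix.of CE)⁻¹).map (algebraMap (RatFunc K) Ω) with hD
  have hDC : D * C = 1 := by
    rw [hD, hCmap, ← Matrix.map_mul, Matrix.nonsing_inv_mul _ (Ne.isUnit hdet)]
    simp
  have hCD : C * D = 1 := mul_eq_one_comm.1 hDC
  refine ⟨D * u', (1 + u) * C, v, v', ?_, hv', ?_, ?_, ?_, ?_, ?_⟩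
  · rw [mul_assoc, ← mul_assoc u', hu'', one_mul, hDC]
  · rw [hv, mul_assoc, ← mul_assoc u', hu'', one_mul, ← hCM, ← mul_assoc, hDC, one_mul]
  · intro i j
    rw [Matrix.mul_apply]
    refine sum_mem fun k _ => mul_mem ?_ (le_locAlg _ (hum' _ _))
    rw [hD, Matrix.map_apply]
    exact (Sm K Ω).algebraMap_mem _
  · intro i j
    rw [Matrix.mul_apply]
    refine sum_mem fun k _ => mul_mem (le_locAlg _ ?_) ?_
    · exact add_mem (mat_one_mem _ _ _) (Bm_le K Ω (hus _ _))
    · rw [← hCE]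
      exact (Sm K Ω).algebraMap_mem _
  · intro i j
    refine le_locAlg _ ?_
    have := sub_mem (mat_one_mem (Rp K Ω) i j) (hv1 i j)
    rw [Matrix.sub_apply] at this
    simpa using this
  · intro i j
    exact le_locAlg _ (hvp' i j)

end Cartan
end Harb

set_option linter.unusedSectionVars false
set_option linter.style.haveILetI false
set_option linter.unusedSimpArgs false

namespace Harb
open Polynomial

section Ext
variable {K Ω : Type} [NontriviallyNormedField K] [NormedField Ω]
  [CompleteSpace Ω] [NormedAlgebra K Ω]

lemma exists_ext {B : Type} [CommRing B] [Algebra K B] (i f : B →ₐ[K] Ω)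
    (h : ∀ b, ‖f b‖ ≤ ‖i b‖) (T : Subalgebra K Ω) (hT : T = i.range.topologicalClosure) :
    ∃ ψ : T →ₐ[K] Ω, Continuous ψ ∧ ∀ b (hb : i b ∈ T), ψ ⟨i b, hb⟩ = f b := by
  have hi : ∀ b, i b ∈ T := fun b => by
    rw [hT]; exact Subalgebra.le_topologicalClosure _ ⟨b, rfl⟩
  let e : B →ₗ[K] T := (i.codRestrict T hi).toLinearMap
  have he : DenseRange e := by
    intro z
    rw [closure_subtype]
    have hz : (z : Ω) ∈ closure (i.range : Set Ω) := by
      have h2 : ∀ w ∈ T, w ∈ closure (i.range : Set Ω) := by rw [hT]; exact fun w hw => hw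
      exact h2 z z.2
    convert hz using 2
    ext w
    constructor
    · rintro ⟨_, ⟨b, rfl⟩, rfl⟩
      exact ⟨b, rfl⟩
    · rintro ⟨b, rfl⟩
      exact ⟨e b, ⟨b, rfl⟩, rfl⟩
  let ψ : T →L[K] Ω := f.toLinearMap.extendOfNorm e
  have hψ : ∀ b, ψ (e b) = f b := fun b =>
    LinearMap.extendOfNorm_eq he ⟨1, fun b => by rw [one_mul]; exact h b⟩ b
  refine ⟨AlgHom.ofLinearMap ψ.toLinearMap ?_ ?_, ψ.continuous, fun b hb => hψ b⟩
  · have := hψ 1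
    simpa [e] using this
  · intro z w
    refine he.induction_on₂ (p := fun z w => ψ (z * w) = ψ z * ψ w) ?_ ?_ z w
    · exact isClosed_eq (ψ.continuous.comp continuous_mul)
        ((ψ.continuous.comp continuous_fst).mul (ψ.continuous.comp continuous_snd))
    · intro a b
      have : e a * e b = e (a * b) := by
        ext; simp [e]
      rw [this, hψ, hψ, hψ, map_mul]
end Ext

section Twist
variable {K Ω : Type} [NontriviallyNormedField K] [CompleteSpace K] [NormedField Ω]
  [CompleteSpace Ω] [IsUltrametricDist Ω] [NormedAlgebra K Ω] [Algebra (RatFunc K) Ω]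
  [IsGauss K Ω]

variable (K Ω) in
/-- the structure map, as a `K`-algebra map -/
noncomputable def al : RatFunc K →ₐ[K] Ω := IsScalarTower.toAlgHom K (RatFunc K) Ω

lemma al_poly (f : K[X]) : al K Ω (algebraMap K[X] _ f) = aeval (xx K Ω) f := algebraMap_poly Ω f

lemma al_eq (e : RatFunc K) : algebraMap (RatFunc K) Ω e = al K Ω e := rfl

/-- twisting a Galois extension by an automorphism of the rational function field -/
theorem twist {G F : Type} [Group G] [Field F] [Algebra (RatFunc K) F] [MulSemiringAction G F]
    [hGal : IsGaloisGroup G (RatFunc K) F] (φ : F →ₐ[RatFunc K] Ω)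
    (B : Subalgebra K (RatFunc K)) (hB : ∀ f : K[X], algebraMap K[X] (RatFunc K) f ∈ B)
    (T : Subalgebra K Ω) (hT : T = (B.map (al K Ω)).topologicalClosure)
    (T' : Subalgebra K Ω) (hTc : IsClosed (T' : Set Ω)) (ν : RatFunc K ≃ₐ[K] RatFunc K)
    (hν : ∀ b ∈ B, ‖al K Ω (ν b)‖ ≤ ‖al K Ω b‖) (hT' : ∀ b ∈ B, al K Ω (ν b) ∈ T')
    (hφ : ∀ z, ∃ f : K[X], f ≠ 0 ∧ aeval (xx K Ω) f * φ z ∈ T) :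
    ∃ (_ : Algebra (RatFunc K) F) (φ' : F →ₐ[RatFunc K] Ω), IsGaloisGroup G (RatFunc K) F ∧
      ∀ z (f : K[X]), f ≠ 0 → aeval (xx K Ω) f * φ z ∈ T →
        al K Ω (ν (algebraMap K[X] _ f)) * φ' z ∈ T' := by
  have hTB : ∀ b ∈ B, al K Ω b ∈ T := fun b hb => by
    rw [hT]; exact Subalgebra.le_topologicalClosure _ ⟨b, hb, rfl⟩
  have hr : ((al K Ω).comp B.val).range = B.map (al K Ω) := by
    rw [AlgHom.range_comp, Subalgebra.range_val]
  obtain ⟨ψ, hψc, hψ⟩ := exists_ext ((al K Ω).comp B.val)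
    (((al K Ω).comp ν.toAlgHom).comp B.val) (fun b => hν b b.2) T (by rw [hT, hr])
  have hψ' : ∀ b (hb : b ∈ B), ψ ⟨al K Ω b, hTB b hb⟩ = al K Ω (ν b) :=
    fun b hb => hψ ⟨b, hb⟩ (hTB b hb)
  have hψT : ∀ t, ψ t ∈ T' := by
    intro t
    have hd : (t : Ω) ∈ closure (B.map (al K Ω) : Set Ω) := by
      have h2 : ∀ w ∈ T, w ∈ closure (B.map (al K Ω) : Set Ω) := by
        rw [hT]; exact fun w hw => hw
      exact h2 t t.2
    have hd' : t ∈ closure {s : T | ∃ b : B, s.1 = al K Ω b} := by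
      rw [closure_subtype]
      convert hd using 2
      ext w
      constructor
      · rintro ⟨s, ⟨b, hb⟩, rfl⟩
        exact ⟨b, b.2, hb.symm⟩
      · rintro ⟨b, hb, rfl⟩
        exact ⟨⟨_, hTB b hb⟩, ⟨⟨b, hb⟩, rfl⟩, rfl⟩
    have hc : IsClosed {s : T | ψ s ∈ T'} := hTc.preimage hψc
    refine hc.closure_subset_iff.2 ?_ hd'
    rintro s ⟨b, hb⟩
    have : s = ⟨al K Ω b, hTB b b.2⟩ := Subtype.ext hb
    rw [Set.mem_ofPred_eq, this, hψ' _ b.2]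
    exact hT' _ b.2
  have hne : ∀ e : RatFunc K, e ≠ 0 → al K Ω (ν e) ≠ 0 := fun e he => by
    simpa using he
  choose d hd0 hd using hφ
  have hdT : ∀ f : K[X], aeval (xx K Ω) f ∈ T := fun f => by
    rw [← al_poly]; exact hTB _ (hB f)
  have hψp : ∀ f : K[X], ψ ⟨_, hdT f⟩ = al K Ω (ν (algebraMap K[X] _ f)) := fun f => by
    rw [← hψ' _ (hB f)]
    congr 2
    rw [al_poly]
  let nf : K[X] → Ω := fun f => al K Ω (ν (algebraMap K[X] _ f))
  have hnf : ∀ f, f ≠ 0 → nf f ≠ 0 := fun f hf => hne _ (by simpa using hf)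
  let Φ : F → Ω := fun z => ψ ⟨_, hd z⟩ / nf (d z)
  have key : ∀ z (f : K[X]) (hf : f ≠ 0) (h : aeval (xx K Ω) f * φ z ∈ T),
      nf f * Φ z = ψ ⟨_, h⟩ := by
    intro z f hf h
    have h1 : nf f * ψ ⟨_, hd z⟩ = nf (d z) * ψ ⟨_, h⟩ := by
      simp only [nf]
      rw [← hψp, ← hψp, ← map_mul, ← map_mul]
      congr 1
      ext
      simp only [MulMemClass.mk_mul_mk]
      ring
    simp only [Φ]
    rw [mul_div_assoc', h1, mul_div_cancel_left₀ _ (hnf _ (hd0 z))]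
  have nf_mul : ∀ f g, nf (f * g) = nf f * nf g := fun f g => by simp [nf]
  let Φ' : F →+* Ω :=
    { toFun := Φ
      map_one' := by
        have h1 : aeval (xx K Ω) (1 : K[X]) * φ 1 ∈ T := by simp
        have := key 1 1 one_ne_zero h1
        have e : (⟨_, h1⟩ : T) = 1 := by ext; simp
        rw [e, map_one] at this
        simpa [nf] using this
      map_zero' := by
        have h1 : aeval (xx K Ω) (1 : K[X]) * φ 0 ∈ T := by simp
        have := key 0 1 one_ne_zero h1
        have e : (⟨_, h1⟩ : T) = 0 := by ext; simp
        rw [e, map_zero] at this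
        simpa [nf] using this
      map_mul' := by
        intro z w
        have h0 := mul_ne_zero (hd0 z) (hd0 w)
        have e : aeval (xx K Ω) (d z * d w) * φ (z * w) =
            (aeval (xx K Ω) (d z) * φ z) * (aeval (xx K Ω) (d w) * φ w) := by
          simp only [map_mul]; ring
        have h1 : aeval (xx K Ω) (d z * d w) * φ (z * w) ∈ T := by
          rw [e]; exact mul_mem (hd z) (hd w)
        have e2 : (⟨_, h1⟩ : T) = ⟨_, hd z⟩ * ⟨_, hd w⟩ := Subtype.ext e
        have h2 := key _ _ h0 h1
        rw [e2, map_mul, ← key z _ (hd0 z), ← key w _ (hd0 w), nf_mul] at h2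
        refine mul_left_cancel₀ (mul_ne_zero (hnf _ (hd0 z)) (hnf _ (hd0 w))) (h2.trans ?_)
        ring
      map_add' := by
        intro z w
        have h0 := mul_ne_zero (hd0 z) (hd0 w)
        have e : aeval (xx K Ω) (d z * d w) * φ (z + w) =
            (aeval (xx K Ω) (d w)) * (aeval (xx K Ω) (d z) * φ z) +
            (aeval (xx K Ω) (d z)) * (aeval (xx K Ω) (d w) * φ w) := by
          simp only [map_mul, map_add]; ring
        have h1 : aeval (xx K Ω) (d z * d w) * φ (z + w) ∈ T := by
          rw [e]; exact add_mem (mul_mem (hdT _) (hd z)) (mul_mem (hdT _) (hd w))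
        have e2 : (⟨_, h1⟩ : T) = ⟨_, hdT (d w)⟩ * ⟨_, hd z⟩ + ⟨_, hdT (d z)⟩ * ⟨_, hd w⟩ :=
          Subtype.ext e
        have h2 := key _ _ h0 h1
        rw [e2, map_add, map_mul, map_mul, ← key z _ (hd0 z), ← key w _ (hd0 w), nf_mul,
          hψp, hψp] at h2
        refine mul_left_cancel₀ (mul_ne_zero (hnf _ (hd0 z)) (hnf _ (hd0 w))) (h2.trans ?_)
        simp only [nf]
        ring }
  have hΦΦ : ∀ z, Φ' z = Φ z := fun z => rfl
  have hcomm : ∀ e : RatFunc K, Φ' (algebraMap (RatFunc K) F e) = al K Ω (ν e) := by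
    intro e
    have hde : e.denom ≠ 0 := e.denom_ne_zero
    have hde' : algebraMap K[X] (RatFunc K) e.denom ≠ 0 := by simpa using hde
    have hnum : algebraMap K[X] (RatFunc K) e.num = algebraMap K[X] (RatFunc K) e.denom * e := by
      nth_rewrite 3 [← RatFunc.num_div_denom e]
      rw [mul_div_cancel₀]
      exact hde'
    have e1 : aeval (xx K Ω) e.denom * φ (algebraMap (RatFunc K) F e) = aeval (xx K Ω) e.num := by
      rw [φ.commutes, al_eq, ← al_poly, ← al_poly, hnum, map_mul]
    have h1 : aeval (xx K Ω) e.denom * φ (algebraMap (RatFunc K) F e) ∈ T := by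
      rw [e1]; exact hdT _
    have h2 := key _ _ hde h1
    have e2 : (⟨_, h1⟩ : T) = ⟨_, hdT e.num⟩ := Subtype.ext e1
    rw [e2, hψp, hnum, map_mul, map_mul] at h2
    exact mul_left_cancel₀ (hnf _ hde) h2
  obtain ⟨ι, hι⟩ : ∃ ι : RatFunc K →+* F, ι = algebraMap (RatFunc K) F := ⟨_, rfl⟩
  have hfix : ∀ (g : G) e, g • ι e = ι e := fun g e => by
    rw [hι]; exact smul_algebraMap g e
  have hinv : ∀ z, (∀ g : G, g • z = z) → ∃ e, ι e = z := fun z hz => by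
    rw [hι]
    exact hGal.isInvariant.isInvariant z hz
  have hfaith : FaithfulSMul G F := hGal.faithful
  rw [← hι] at hcomm
  clear_value Φ'
  let alg' : Algebra (RatFunc K) F := (ι.comp (ν.symm : RatFunc K →+* RatFunc K)).toAlgebra
  have halg : ∀ e, @algebraMap _ _ _ _ alg' e = ι (ν.symm e) := fun e => rfl
  have hΦ' : ∀ e : RatFunc K, Φ' (@algebraMap _ _ _ _ alg' e) = algebraMap (RatFunc K) Ω e := by
    intro e
    rw [halg, hcomm, ν.apply_symm_apply]
    rfl
  refine ⟨alg', @AlgHom.mk _ _ _ _ _ _ alg' _ Φ' hΦ', ?_, ?_⟩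
  · refine @IsGaloisGroup.mk _ _ _ _ _ _ alg' _ hfaith ?_ ?_
    · constructor
      intro g e z
      have h1 : ∀ z : F, @HSMul.hSMul _ _ _ (@instHSMul _ _ alg'.toSMul) e z =
          ι (ν.symm e) * z := fun z => rfl
      rw [h1, h1, smul_mul', hfix]
    · refine @Algebra.IsInvariant.mk _ _ _ _ _ alg' _ _ ?_
      intro z hz
      obtain ⟨e, he⟩ := hinv z hz
      refine ⟨ν e, ?_⟩
      rw [halg, ν.symm_apply_apply, he]
  · intro z f hf h
    have := key z f hf h
    change nf f * Φ' z ∈ T'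
    rw [hΦΦ, this]
    exact hψT _
end Twist
end Harb

set_option linter.unusedSectionVars false
set_option linter.style.haveILetI false
set_option linter.unusedSimpArgs false

namespace Harb
open Polynomial

lemma algHom_X' {K : Type} [Field K] :
    Algebra.algHom K K[X] (RatFunc K) X = RatFunc.X := RatFunc.algebraMap_X

lemma exists_auto {K : Type} [Field K] (e : RatFunc K) (he : Transcendental K e)
    (hX : RatFunc.X ∈ IntermediateField.adjoin K {e}) :
    ∃ ν : RatFunc K ≃ₐ[K] RatFunc K, ν RatFunc.X = e := by
  have htop : IntermediateField.adjoin K {e} = ⊤ := by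
    rw [eq_top_iff, ← RatFunc.adjoin_X, IntermediateField.adjoin_le_iff]
    simpa using hX
  refine ⟨(RatFunc.algEquivOfTranscendental e he).trans
    ((IntermediateField.equivOfEq htop).trans IntermediateField.topEquiv), ?_⟩
  simp

section Rescale
variable {K Ω : Type} [NontriviallyNormedField K] [CompleteSpace K] [NormedField Ω]
  [CompleteSpace Ω] [IsUltrametricDist Ω] [NormedAlgebra K Ω] [Algebra (RatFunc K) Ω]
  [IsGauss K Ω]

lemma al_X : al K Ω RatFunc.X = xx K Ω := rfl

lemma al_aut (ν : RatFunc K ≃ₐ[K] RatFunc K) (f : K[X]) :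
    al K Ω (ν (algebraMap K[X] _ f)) = aeval (al K Ω (ν RatFunc.X)) f := by
  have h : ((al K Ω).comp ν.toAlgHom).comp (Algebra.algHom K K[X] (RatFunc K)) =
      aeval (al K Ω (ν RatFunc.X)) := by
    ext
    simp [algHom_X', RatFunc.algebraMap_X]
  exact DFunLike.congr_fun h f

lemma norm_aeval_le {y : Ω} (hy : ‖y‖ ≤ 1) (f : K[X]) : ‖aeval y f‖ ≤ ‖aeval (xx K Ω) f‖ := by
  rw [aeval_eq_sum_range]
  refine IsUltrametricDist.norm_sum_le_of_forall_le_of_nonneg (norm_nonneg _) fun i _ => ?_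
  rw [norm_smul, norm_pow]
  calc _ ≤ ‖f.coeff i‖ * 1 := by gcongr; exact pow_le_one₀ (norm_nonneg _) hy
    _ ≤ _ := by rw [mul_one]; exact coeff_le Ω f i

lemma aeval_mem {T : Subalgebra K Ω} {y : Ω} (hy : y ∈ T) (f : K[X]) : aeval y f ∈ T := by
  rw [aeval_eq_sum_range]
  exact sum_mem fun i _ => T.smul_mem (pow_mem hy i) _

lemma inv_mem_of {T : Subalgebra K Ω} (hT : IsClosed (T : Set Ω)) {w : Ω} (hw : w ∈ T)
    (h1 : ‖w‖ < 1) : (1 - w)⁻¹ ∈ T := by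
  have h := hasSum_geometric_of_norm_lt_one h1
  exact hT.mem_of_tendsto h (Filter.Eventually.of_forall fun s => sum_mem fun i _ => pow_mem hw i)

lemma exists_inv_mem (b : K[X]) (hb : b ≠ 0) : ∃ δ > (0 : ℝ), ∀ y : Ω, y ≠ 0 → ‖y‖ < δ →
    ‖y‖ ≤ 1 → ∀ T : Subalgebra K Ω, IsClosed (T : Set Ω) → y ∈ T → y⁻¹ ∈ T →
    (aeval y b)⁻¹ ∈ T := by
  obtain ⟨c, hc, hc0⟩ := exists_eq_pow_rootMultiplicity_mul_and_not_dvd b hb 0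
  rw [map_zero, sub_zero] at hc hc0
  rw [X_dvd_iff] at hc0
  set k := rootMultiplicity 0 b
  have hd := divX_mul_X_add c
  set d := c.divX
  set a := c.coeff 0
  refine ⟨1 / (‖a⁻¹‖ * ‖aeval (xx K Ω) d‖ + 1), by positivity, fun y hy0 hy hy1 T hT hyT hyiT => ?_⟩
  have e : aeval y b = y ^ k * (algebraMap K Ω a * (1 - (-(algebraMap K Ω a⁻¹ * aeval y d * y)))) := by
    have ha : algebraMap K Ω a ≠ 0 := by simpa using hc0
    rw [hc, ← hd]
    simp only [map_mul, map_pow, map_add, aeval_X, aeval_C, map_inv₀]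
    field_simp
    ring
  rw [e, mul_inv, mul_inv, ← inv_pow, ← map_inv₀]
  refine mul_mem (pow_mem hyiT _) (mul_mem (T.algebraMap_mem _) (inv_mem_of hT ?_ ?_))
  · exact neg_mem (mul_mem (mul_mem (T.algebraMap_mem _) (aeval_mem hyT _)) hyT)
  · rw [norm_neg, norm_mul, norm_mul, norm_algebraMap']
    have h1 := norm_aeval_le hy1 d
    rw [lt_div_iff₀ (by positivity)] at hy
    have h2 : ‖a⁻¹‖ * ‖aeval y d‖ * ‖y‖ ≤ ‖a⁻¹‖ * ‖aeval (xx K Ω) d‖ * ‖y‖ := by gcongr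
    nlinarith [norm_nonneg y]

variable (K) in
/-- polynomials inside the rational functions -/
noncomputable def PolyAlg : Subalgebra K (RatFunc K) := (Algebra.algHom K K[X] (RatFunc K)).range

lemma Rp_eq : Rp K Ω = ((PolyAlg K).map (al K Ω)).topologicalClosure := by
  rw [Rp, PolyAlg, ← AlgHom.range_comp]
  congr 1
  rw [Rp0, Algebra.adjoin_singleton_eq_range_aeval]
  congr 1
  ext
  simp [algHom_X', al_X, RatFunc.algebraMap_X]

theorem rescale {G F : Type} [Group G] [Field F] [Algebra (RatFunc K) F] [MulSemiringAction G F]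
    [hGal : IsGaloisGroup G (RatFunc K) F] (φ : F →ₐ[RatFunc K] Ω) (hφ : ∀ z, φ z ∈ Sp K Ω)
    (Z : Finset F) (T' : Subalgebra K Ω) (hT' : FracCond T') (hTc : IsClosed (T' : Set Ω))
    (hle : T' ≤ RR K Ω)
    (hν : ∀ δ > (0 : ℝ), ∃ ν : RatFunc K ≃ₐ[K] RatFunc K, ‖al K Ω (ν RatFunc.X)‖ < δ ∧
      al K Ω (ν RatFunc.X) ∈ T' ∧ (al K Ω (ν RatFunc.X))⁻¹ ∈ RR K Ω) :
    ∃ (_ : Algebra (RatFunc K) F) (φ' : F →ₐ[RatFunc K] Ω), IsGaloisGroup G (RatFunc K) F ∧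
      (∀ z, φ' z ∈ locAlg T' hT') ∧ ∀ z ∈ Z, φ' z ∈ RR K Ω := by
  have hφ' := fun z => exists_poly_denom le_rfl (hφ z)
  choose d hd0 hd using hφ'
  obtain ⟨δ, hδ, hinv⟩ := exists_inv_mem (Ω := Ω) (∏ z ∈ Z, d z)
    (Finset.prod_ne_zero_iff.2 fun z _ => hd0 z)
  obtain ⟨ν, hν1, hν2, hν3⟩ := hν (min δ 1) (lt_min hδ one_pos)
  obtain ⟨a', φ', hg, hm⟩ := twist (G := G) φ (PolyAlg K) (fun f => ⟨f, rfl⟩) (Rp K Ω) Rp_eq T' hTc ν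
    (by
      rintro _ ⟨f, rfl⟩
      change ‖al K Ω (ν (algebraMap K[X] _ f))‖ ≤ ‖al K Ω (algebraMap K[X] _ f)‖
      rw [al_aut, al_poly]
      exact norm_aeval_le (hν1.le.trans (min_le_right _ _)) f)
    (by
      rintro _ ⟨f, rfl⟩
      change al K Ω (ν (algebraMap K[X] _ f)) ∈ T'
      rw [al_aut]
      exact aeval_mem hν2 f) (fun z => ⟨d z, hd0 z, hd z⟩)
  refine ⟨a', φ', hg, fun z => ?_, fun z hz => ?_⟩
  · refine ⟨ν (algebraMap K[X] _ (d z)), by simpa using hd0 z, ?_, hm z (d z) (hd0 z) (hd z)⟩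
    rw [al_eq, al_aut]
    exact aeval_mem hν2 _
  · have hp0 : (∏ z ∈ Z, d z) ≠ 0 := Finset.prod_ne_zero_iff.2 fun z _ => hd0 z
    have h1 : aeval (xx K Ω) (∏ z ∈ Z, d z) * φ z ∈ Rp K Ω := by
      obtain ⟨q, hq⟩ := Finset.dvd_prod_of_mem d hz
      rw [hq, mul_comm, map_mul, ← mul_assoc, mul_comm]
      rw [mul_comm (φ z)]
      exact mul_mem (poly_mem_Rp Ω _) (hd z)
    have h2 := hm z _ hp0 h1
    have hy0 : al K Ω (ν RatFunc.X) ≠ 0 := by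
      simp [RatFunc.X_ne_zero]
    have h3 := hinv (al K Ω (ν RatFunc.X)) hy0 (hν1.trans_le (min_le_left _ _))
      (hν1.le.trans (min_le_right _ _)) (RR K Ω) (RR_closed K Ω) (hle hν2) hν3
    have h4 := mul_mem h3 (hle h2)
    have h5 : al K Ω (ν (algebraMap K[X] _ (∏ z ∈ Z, d z))) ≠ 0 := by
      generalize (∏ z ∈ Z, d z) = q at hp0
      simpa using hp0
    rw [← al_aut, inv_mul_cancel_left₀ h5] at h4
    exact h4

lemma exists_nu_p (δ : ℝ) (hδ : δ > 0) : ∃ ν : RatFunc K ≃ₐ[K] RatFunc K,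
    ‖al K Ω (ν RatFunc.X)‖ < δ ∧
      al K Ω (ν RatFunc.X) ∈ Rp K Ω ∧ (al K Ω (ν RatFunc.X))⁻¹ ∈ RR K Ω := by
  obtain ⟨r, hr0, hr⟩ := NormedField.exists_norm_lt K hδ
  have hr0 : r ≠ 0 := norm_pos_iff.1 hr0
  have hX : (RatFunc.X : RatFunc K) ∈ IntermediateField.adjoin K {r • (RatFunc.X : RatFunc K)} := by
    have := (IntermediateField.adjoin K {r • (RatFunc.X : RatFunc K)}).smul_mem
      (IntermediateField.mem_adjoin_simple_self K _) (x := r⁻¹)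
    rwa [smul_smul, inv_mul_cancel₀ hr0, one_smul] at this
  obtain ⟨ν, hν⟩ := exists_auto (r • (RatFunc.X : RatFunc K)) (by
    intro h
    have := h.smul (r⁻¹ : K)
    rw [smul_smul, inv_mul_cancel₀ hr0, one_smul] at this
    exact RatFunc.transcendental_X this) hX
  refine ⟨ν, ?_⟩
  rw [hν, map_smul, al_X]
  refine ⟨by rwa [norm_smul, norm_xx, mul_one], Subalgebra.smul_mem _ (xx_mem_Rp K Ω) _, ?_⟩
  rw [smul_inv₀]
  exact Subalgebra.smul_mem _ (xi_mem_RR K Ω) _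

lemma exists_nu_m (δ : ℝ) (hδ : δ > 0) : ∃ ν : RatFunc K ≃ₐ[K] RatFunc K,
    ‖al K Ω (ν RatFunc.X)‖ < δ ∧
      al K Ω (ν RatFunc.X) ∈ Rm K Ω ∧ (al K Ω (ν RatFunc.X))⁻¹ ∈ RR K Ω := by
  obtain ⟨r, hr0, hr⟩ := NormedField.exists_norm_lt K hδ
  have hr0 : r ≠ 0 := norm_pos_iff.1 hr0
  have e : (r⁻¹ • (r • (RatFunc.X : RatFunc K)⁻¹))⁻¹ = RatFunc.X := by
    rw [smul_smul, inv_mul_cancel₀ hr0, one_smul, inv_inv]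
  have hX : (RatFunc.X : RatFunc K) ∈
      IntermediateField.adjoin K {r • (RatFunc.X : RatFunc K)⁻¹} := by
    have := inv_mem ((IntermediateField.adjoin K {r • (RatFunc.X : RatFunc K)⁻¹}).smul_mem
      (IntermediateField.mem_adjoin_simple_self K _) (x := r⁻¹))
    rwa [e] at this
  obtain ⟨ν, hν⟩ := exists_auto (r • (RatFunc.X : RatFunc K)⁻¹) (by
    intro h
    have := (h.smul (r⁻¹ : K)).inv
    rw [e] at this
    exact RatFunc.transcendental_X this) hX
  refine ⟨ν, ?_⟩
  rw [hν, map_smul, map_inv₀, al_X]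
  refine ⟨by rwa [norm_smul, norm_inv, norm_xx, inv_one, mul_one],
    Subalgebra.smul_mem _ (xi_mem_Rm K Ω) _, ?_⟩
  rw [smul_inv₀, inv_inv]
  exact Subalgebra.smul_mem _ (xx_mem_RR K Ω) _

/-- Laurent polynomials inside the rational functions -/
noncomputable def LaurAlg (K : Type) [Field K] : Subalgebra K (RatFunc K) :=
  Algebra.adjoin K {RatFunc.X, RatFunc.X⁻¹}

lemma RR_eq : RR K Ω = ((LaurAlg K).map (al K Ω)).topologicalClosure := by
  rw [RR, LaurAlg, AlgHom.map_adjoin]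
  congr 1
  rw [RR0, Set.image_pair, map_inv₀, al_X]

lemma mem_Laur {b : RatFunc K} (hb : b ∈ LaurAlg K) : ∃ (f : K[X]) (n : ℕ),
    b * RatFunc.X ^ n = algebraMap K[X] _ f := by
  induction hb using Algebra.adjoin_induction with
  | mem x hx =>
    rcases hx with rfl | rfl
    · exact ⟨X, 0, by simp [RatFunc.algebraMap_X]⟩
    · exact ⟨1, 1, by simp [RatFunc.X_ne_zero]⟩
  | algebraMap r => exact ⟨C r, 0, by simp [RatFunc.algebraMap_C, RatFunc.algebraMap_eq_C]⟩
  | add x y _ _ h1 h2 =>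
    obtain ⟨f, n, hf⟩ := h1
    obtain ⟨g, m, hg⟩ := h2
    refine ⟨f * X ^ m + g * X ^ n, n + m, ?_⟩
    simp only [map_add, map_mul, map_pow, RatFunc.algebraMap_X, ← hf, ← hg]
    ring
  | mul x y _ _ h1 h2 =>
    obtain ⟨f, n, hf⟩ := h1
    obtain ⟨g, m, hg⟩ := h2
    refine ⟨f * g, n + m, ?_⟩
    simp only [map_add, map_mul, map_pow, RatFunc.algebraMap_X, ← hf, ← hg]
    ring

theorem twistLaur {G F : Type} [Group G] [Field F] [Algebra (RatFunc K) F] [MulSemiringAction G F]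
    [hGal : IsGaloisGroup G (RatFunc K) F] (φ : F →ₐ[RatFunc K] Ω) (hφ : ∀ z, φ z ∈ SS K Ω) :
    ∃ (_ : Algebra (RatFunc K) F) (φ' : F →ₐ[RatFunc K] Ω), IsGaloisGroup G (RatFunc K) F ∧
      (∀ z, φ' z ∈ Sp K Ω) := by
  obtain ⟨r, hr0, hr⟩ := NormedField.exists_norm_lt K one_pos
  have hr0 : r ≠ 0 := norm_pos_iff.1 hr0
  have e : r⁻¹ • ((1 + r • (RatFunc.X : RatFunc K)) - 1) = RatFunc.X := by
    rw [add_sub_cancel_left, smul_smul, inv_mul_cancel₀ hr0, one_smul]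
  have hX : (RatFunc.X : RatFunc K) ∈
      IntermediateField.adjoin K {1 + r • (RatFunc.X : RatFunc K)} := by
    have := (IntermediateField.adjoin K {1 + r • (RatFunc.X : RatFunc K)}).smul_mem
      (sub_mem (IntermediateField.mem_adjoin_simple_self K _) (one_mem _)) (x := r⁻¹)
    rwa [e] at this
  obtain ⟨ν, hν⟩ := exists_auto (1 + r • (RatFunc.X : RatFunc K)) (by
    intro h
    have := ((h.sub isAlgebraic_one).smul (r⁻¹ : K))
    rw [e] at this
    exact RatFunc.transcendental_X this) hX
  have hy : al K Ω (ν RatFunc.X) = 1 + r • xx K Ω := by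
    rw [hν, map_add, map_one, map_smul, al_X]
  have hrx : ‖r • xx K Ω‖ < 1 := by rwa [norm_smul, norm_xx, mul_one]
  have hy1 : ‖al K Ω (ν RatFunc.X)‖ = 1 := by
    rw [hy, IsUltrametricDist.norm_add_eq_max_of_norm_ne_norm (by rw [norm_one]; exact hrx.ne'),
      norm_one, max_eq_left hrx.le]
  have hyR : al K Ω (ν RatFunc.X) ∈ Rp K Ω := by
    rw [hy]
    exact add_mem (one_mem _) (Subalgebra.smul_mem _ (xx_mem_Rp K Ω) _)
  have hyR' : (al K Ω (ν RatFunc.X))⁻¹ ∈ Rp K Ω := by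
    have := inv_mem_of (Rp_closed K Ω) (neg_mem (Subalgebra.smul_mem _ (xx_mem_Rp K Ω) r))
      (by rwa [norm_neg])
    rwa [sub_neg_eq_add, ← hy] at this
  choose d hd0 hd using fun z => exists_poly_denom (Rp_le K Ω) (hφ z)
  have hXm : ∀ f : K[X], algebraMap K[X] (RatFunc K) f ∈ LaurAlg K := by
    intro f
    have h : f ∈ Algebra.adjoin K {(X : K[X])} := by
      rw [adjoin_X]; trivial
    have h2 : algebraMap K[X] (RatFunc K) f ∈ (Algebra.adjoin K {(X : K[X])}).map
      (Algebra.algHom K K[X] (RatFunc K)) := ⟨f, h, rfl⟩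
    rw [AlgHom.map_adjoin] at h2
    refine Algebra.adjoin_mono ?_ h2
    simp [algHom_X']
  obtain ⟨a', φ', hg, hm⟩ := twist (G := G) φ (LaurAlg K) hXm (RR K Ω) RR_eq (Rp K Ω) (Rp_closed K Ω) ν
    (by
      intro b hb
      obtain ⟨f, n, hf⟩ := mem_Laur hb
      have h1 : al K Ω b * xx K Ω ^ n = aeval (xx K Ω) f := by
        rw [← al_poly, ← hf, map_mul, map_pow, al_X]
      have h2 : al K Ω (ν b) * al K Ω (ν RatFunc.X) ^ n = aeval (al K Ω (ν RatFunc.X)) f := by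
        rw [← al_aut, ← hf, map_mul, map_mul, map_pow, map_pow]
      have h3 := norm_aeval_le hy1.le f
      rwa [← h1, ← h2, norm_mul, norm_mul, norm_pow, norm_pow, hy1, norm_xx, one_pow, mul_one,
        mul_one] at h3)
    (by
      intro b hb
      induction hb using Algebra.adjoin_induction with
      | mem x hx =>
        rcases hx with rfl | rfl
        · exact hyR
        · rwa [map_inv₀, map_inv₀]
      | algebraMap r => rw [ν.commutes, AlgHom.commutes]; exact Subalgebra.algebraMap_mem _ _
      | add x y _ _ h1 h2 => rw [map_add, map_add]; exact add_mem h1 h2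
      | mul x y _ _ h1 h2 => rw [map_mul, map_mul]; exact mul_mem h1 h2)
    (fun z => ⟨d z, hd0 z, hd z⟩)
  refine ⟨a', φ', hg, fun z => ?_⟩
  refine ⟨ν (algebraMap K[X] _ (d z)), by simpa using hd0 z, ?_, hm z (d z) (hd0 z) (hd z)⟩
  rw [al_eq, al_aut]
  exact aeval_mem hyR _

end Rescale
end Harb

set_option linter.unusedSectionVars false
set_option linter.style.haveILetI false
set_option linter.unusedSimpArgs false

namespace Harb
open Polynomial

lemma exists_dual (H E F : Type) [Group H] [Fintype H] [DecidableEq H] [Field E] [Field F]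
    [Algebra E F] [MulSemiringAction H F] [IsGaloisGroup H E F] :
    ∃ b b' : H → F, ∀ σ τ : H, ∑ j, (σ • b j) * (τ • b' j) = if σ = τ then 1 else 0 := by
  haveI := IsGaloisGroup.finiteDimensional H E F
  haveI := IsGaloisGroup.isGalois H E F
  have hc : Fintype.card H = Module.finrank E F := by
    rw [← IsGaloisGroup.card_eq_finrank H E F, Nat.card_eq_fintype_card]
  let e : Fin (Module.finrank E F) ≃ H := (finCongr hc.symm).trans (Fintype.equivFin H).symm
  let b : Module.Basis H E F := (Module.finBasis E F).reindex e
  have htr : ∀ x : F, algebraMap E F (Algebra.trace E F x) = ∑ σ : H, σ • x := by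
    intro x
    rw [trace_eq_sum_automorphisms]
    exact (Fintype.sum_equiv (IsGaloisGroup.mulEquivAlgEquiv H E F).toEquiv _ _
      (fun σ => by simp)).symm
  let A : Matrix H H F := fun i σ => σ • b i
  let B : Matrix H H F := fun σ j => σ • b.traceDual j
  have hAB : A * B = 1 := by
    ext i j
    rw [Matrix.mul_apply, Matrix.one_apply]
    have h := b.trace_mul_traceDual i j
    have h2 := congrArg (algebraMap E F) h
    rw [htr] at h2
    simp only [A, B]
    simp only [smul_mul'] at h2
    convert h2 using 1
    split_ifs <;> simp
  have hBA : B * A = 1 := mul_eq_one_comm.1 hAB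
  refine ⟨b, b.traceDual, fun σ τ => ?_⟩
  have := congrFun (congrFun hBA τ) σ
  rw [Matrix.mul_apply, Matrix.one_apply] at this
  simp only [A, B] at this
  rw [← show (if τ = σ then (1 : F) else 0) = if σ = τ then 1 else 0 by simp [eq_comm], ← this]
  exact Finset.sum_congr rfl fun j _ => mul_comm _ _

section Step
variable (K Ω : Type) [NontriviallyNormedField K] [CompleteSpace K] [NormedField Ω]
  [CompleteSpace Ω] [IsUltrametricDist Ω] [NormedAlgebra K Ω] [Algebra (RatFunc K) Ω]
  [IsGauss K Ω]

/-- realizability of a group inside `Sp` -/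
def RealG (G : Type) [Group G] : Prop :=
  ∃ (F : Type) (_ : Field F) (_ : Algebra (RatFunc K) F) (_ : MulSemiringAction G F)
    (φ : F →ₐ[RatFunc K] Ω), IsGaloisGroup G (RatFunc K) F ∧ ∀ z, φ z ∈ Sp K Ω

variable {K Ω}

lemma RealG.of_equiv {G H : Type} [Group G] [Group H] (e : G ≃* H) (h : RealG K Ω G) :
    RealG K Ω H := by
  obtain ⟨F, _, _, act, φ, hG, hφ⟩ := h
  letI act' : MulSemiringAction H F := MulSemiringAction.compHom F (e.symm : H →* G)
  have hs : ∀ (g : H) (z : F), g • z = e.symm g • z := fun g z => rfl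
  refine ⟨F, _, _, act', φ, ?_, hφ⟩
  refine @IsGaloisGroup.mk _ _ _ _ _ _ _ _ ⟨?_⟩ ⟨?_⟩ ⟨?_⟩
  · intro g g' h
    refine e.symm.injective (hG.faithful.eq_of_smul_eq_smul (α := F) ?_)
    exact h
  · intro g a z
    exact hG.commutes.smul_comm (e.symm g) a z
  · intro z hz
    refine hG.isInvariant.isInvariant z fun g => ?_
    have := hz (e g)
    rwa [hs, e.symm_apply_apply] at this

theorem step {G : Type} [Group G] [Finite G] (H₁ H₂ : Subgroup G) (hH : H₁ ⊔ H₂ = ⊤)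
    (h₁ : RealG K Ω H₁) (h₂ : RealG K Ω H₂) : RealG K Ω G := by
  classical
  obtain ⟨F₁, _, _, _, φ₁, hG₁, hφ₁⟩ := h₁
  obtain ⟨F₂, _, _, _, φ₂, hG₂, hφ₂⟩ := h₂
  haveI := Fintype.ofFinite G
  haveI := Fintype.ofFinite H₁
  haveI := Fintype.ofFinite H₂
  obtain ⟨b₁, b₁', hd₁⟩ := exists_dual H₁ (RatFunc K) F₁
  obtain ⟨b₂, b₂', hd₂⟩ := exists_dual H₂ (RatFunc K) F₂
  obtain ⟨a₁, ψ₁, hg₁, hs₁, hr₁⟩ := rescale (G := H₁) φ₁ hφ₁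
    (Finset.univ.image (fun x : H₁ × H₁ => x.1 • b₁ x.2) ∪
      Finset.univ.image (fun x : H₁ × H₁ => x.1 • b₁' x.2)) (Rp K Ω) (frac_Rp K Ω)
    (Rp_closed K Ω) (Rp_le K Ω) exists_nu_p
  obtain ⟨a₂, ψ₂, hg₂, hs₂, hr₂⟩ := rescale (G := H₂) φ₂ hφ₂
    (Finset.univ.image (fun x : H₂ × H₂ => x.1 • b₂ x.2) ∪
      Finset.univ.image (fun x : H₂ × H₂ => x.1 • b₂' x.2)) (Rm K Ω) (frac_Rm K Ω)
    (Rm_closed K Ω) (Rm_le K Ω) exists_nu_m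
  obtain ⟨F, i1, i2, i3, φ, hF, hφ⟩ := @patch (RatFunc K) Ω G _ _ _ _ _ _ (Sp K Ω) (Sm K Ω)
    (SS K Ω) (RR K Ω).toSubring (fun z hp hm => hIntg hp hm)
    (fun z hz => le_locAlg (frac_RR K Ω) hz)
    (locAlg_mono (frac_Rm K Ω) (frac_RR K Ω) (Rm_le K Ω)) H₁ H₂ hH _ _ F₁ F₂ _ _ a₁ a₂ _ _
    hg₁ hg₂ ψ₁ ψ₂ hs₁ hs₂ b₁ b₁' b₂ b₂' hd₁ hd₂
    (fun σ j => hr₁ _ (Finset.mem_union_left _ (Finset.mem_image.2 ⟨(σ, j), Finset.mem_univ _, rfl⟩)))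
    (fun σ j => hr₁ _ (Finset.mem_union_right _ (Finset.mem_image.2 ⟨(σ, j), Finset.mem_univ _, rfl⟩)))
    (fun σ j => hr₂ _ (Finset.mem_union_left _ (Finset.mem_image.2 ⟨(σ, j), Finset.mem_univ _, rfl⟩)))
    (fun σ j => hr₂ _ (Finset.mem_union_right _ (Finset.mem_image.2 ⟨(σ, j), Finset.mem_univ _, rfl⟩)))
    cartan
  obtain ⟨a', φ', hF', hφ'⟩ := twistLaur (G := G) φ hφ
  exact ⟨F, i1, a', i3, φ', hF', hφ'⟩

theorem real_all (G : Type) [Group G] [Finite G]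
    (base : ∀ (C : Type) [Group C] [Finite C] [IsCyclic C], Nat.card C ∣ Nat.card G →
      RealG K Ω C) : RealG K Ω G := by
  classical
  have key : ∀ s : Finset G, RealG K Ω (Subgroup.closure (s : Set G)) := by
    intro s
    induction s using Finset.induction with
    | empty =>
      haveI : Subsingleton (Subgroup.closure ((∅ : Finset G) : Set G)) := by
        rw [Finset.coe_empty, Subgroup.closure_empty]; infer_instance
      exact base _ (Subgroup.card_subgroup_dvd_card _)
    | insert a s _ ih =>
      have e : Subgroup.closure ((insert a s : Finset G) : Set G) =
          Subgroup.zpowers a ⊔ Subgroup.closure (s : Set G) := by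
        rw [Finset.coe_insert, Set.insert_eq, Subgroup.closure_union,
          Subgroup.zpowers_eq_closure]
      rw [e]
      set H₁ := Subgroup.zpowers a
      set H₂ := Subgroup.closure (s : Set G)
      refine step (H₁.subgroupOf (H₁ ⊔ H₂)) (H₂.subgroupOf (H₁ ⊔ H₂)) ?_ ?_ ?_
      · rw [← Subgroup.subgroupOf_sup le_sup_left le_sup_right, Subgroup.subgroupOf_self]
      · exact RealG.of_equiv (Subgroup.subgroupOfEquivOfLe le_sup_left).symm (base H₁ (Subgroup.card_subgroup_dvd_card _))
      · exact RealG.of_equiv (Subgroup.subgroupOfEquivOfLe le_sup_right).symm ih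
  haveI := Fintype.ofFinite G
  have := key Finset.univ
  rw [Finset.coe_univ, Subgroup.closure_univ] at this
  exact RealG.of_equiv Subgroup.topEquiv this
end Step
end Harb

set_option linter.unusedSectionVars false
set_option linter.style.haveILetI false
set_option linter.unusedSimpArgs false

namespace Harb
open Polynomial

/-- Kummer theory input -/
lemma kummer {E Ω : Type} [Field E] [Field Ω] [Algebra E Ω] (f : E) (u : Ω) (m : ℕ) [NeZero m]
    (H : Irreducible (X ^ m - C f)) (hu : u ^ m = algebraMap E Ω f) {ζ : E}
    (hζ : IsPrimitiveRoot ζ m) :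
    IsGalois E (IntermediateField.adjoin E {u}) ∧
    Nonempty (Gal((IntermediateField.adjoin E {u})/E) ≃* Multiplicative (ZMod m)) ∧
    ∀ a : Gal((IntermediateField.adjoin E {u})/E), ∃ i : ℕ,
      a (IntermediateField.AdjoinSimple.gen E u) =
        algebraMap E _ (ζ ^ i) * IntermediateField.AdjoinSimple.gen E u := by
  have hm : m ≠ 0 := NeZero.ne m
  have hmon : (X ^ m - C f).Monic := monic_X_pow_sub_C f hm
  have hroot : aeval u (X ^ m - C f) = 0 := by simp [hu]
  have hmin : minpoly E u = X ^ m - C f := (minpoly.eq_of_irreducible_of_monic H hroot hmon).symm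
  have hIntg : IsIntegral E u := ⟨_, hmon, by simpa [aeval_def] using hroot⟩
  have hfin : Module.finrank E (IntermediateField.adjoin E {u}) = m := by
    rw [IntermediateField.adjoin.finrank hIntg, hmin, natDegree_X_pow_sub_C]
  haveI : FiniteDimensional E (IntermediateField.adjoin E {u}) :=
    IntermediateField.adjoin.finiteDimensional hIntg
  have hg : (IntermediateField.AdjoinSimple.gen E u) ^ m =
      algebraMap E (IntermediateField.adjoin E {u}) f := by
    apply Subtype.ext
    simpa using hu
  have hprim : (primitiveRoots m E).Nonempty :=
    ⟨ζ, (mem_primitiveRoots (Nat.pos_of_ne_zero hm)).2 hζ⟩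
  haveI hsplit : IsSplittingField E (IntermediateField.adjoin E {u}) (X ^ m - C f) := by
    have := isSplittingField_X_pow_sub_C_of_root_adjoin_eq_top (K := E)
      (L := IntermediateField.adjoin E {u}) (by rw [hfin]; exact hprim) (a := f)
      (α := IntermediateField.AdjoinSimple.gen E u) (by rw [hfin]; exact hg)
      (IntermediateField.lift_injective _ (by
        rw [IntermediateField.lift_adjoin_simple, IntermediateField.lift_top]; rfl))
    rwa [hfin] at this
  have hgal := isGalois_of_isSplittingField_X_pow_sub_C hprim H (IntermediateField.adjoin E {u})
  refine ⟨hgal, ⟨autEquivZmod H _ hζ⟩, fun a => ?_⟩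
  obtain ⟨j, hj⟩ : ∃ j : ℕ, a = (autEquivZmod H (IntermediateField.adjoin E {u}) hζ).symm
      (Multiplicative.ofAdd (j : ZMod m)) := by
    refine ⟨(Multiplicative.toAdd (autEquivZmod H _ hζ a)).val, ?_⟩
    rw [ZMod.natCast_zmod_val, ofAdd_toAdd, MulEquiv.symm_apply_apply]
  refine ⟨j, ?_⟩
  rw [hj, autEquivZmod_symm_apply_natCast H _ hg hζ j, Algebra.smul_def]

/-- irreducibility of the Kummer polynomial -/
lemma kummer_irred {KK Γ : Type} [Field KK] [Fintype Γ] [DecidableEq Γ] (m : ℕ) (hm : m ≠ 0)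
    (z : Γ → KK) (o : Γ)
    (e : Γ → ℕ) (he : e o = 1) (h0 : ∀ τ, z τ ≠ 0) (hz : ∀ τ, z τ = z o → τ = o) :
    Irreducible (X ^ m - C (algebraMap KK[X] (RatFunc KK) (∏ τ, (1 - C (z τ) * X) ^ e τ))) := by
  set f : KK[X] := ∏ τ, (1 - C (z τ) * X) ^ e τ
  set q : KK[X] := 1 - C (z o) * X
  have hq1 : q.degree = 1 := by
    have : q = C (- z o) * X + C 1 := by simp [q]; ring
    rw [this]
    exact degree_linear (neg_ne_zero.2 (h0 o))
  have hqi : Irreducible q := irreducible_of_degree_eq_one hq1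
  have hqp : Prime q := hqi.prime
  have hmon : (X ^ m - C f : KK[X][X]).Monic := monic_X_pow_sub_C f hm
  have hdeg : (X ^ m - C f : KK[X][X]).degree = m := degree_X_pow_sub_C (Nat.pos_of_ne_zero hm) f
  have hP : (Ideal.span {q}).IsPrime := (Ideal.span_singleton_prime hqi.ne_zero).2 hqp
  have hfq : f = q * ∏ τ ∈ Finset.univ.erase o, (1 - C (z τ) * X) ^ e τ := by
    simp only [f]
    rw [← Finset.mul_prod_erase _ _ (Finset.mem_univ o), he, pow_one]
  have hfm : f ∈ Ideal.span {q} := Ideal.mem_span_singleton.2 (hfq ▸ dvd_mul_right _ _)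
  have hirr : Irreducible (X ^ m - C f : KK[X][X]) := by
    refine irreducible_of_eisenstein_criterion hP ?_ ?_ ?_ ?_ hmon.isPrimitive
    · rw [hmon.leadingCoeff]
      exact fun h => hP.ne_top ((Ideal.eq_top_iff_one _).2 h)
    · intro k hk
      rw [hdeg] at hk
      have hk : k < m := by exact_mod_cast hk
      rw [coeff_sub, coeff_X_pow, if_neg hk.ne, zero_sub, coeff_C]
      split_ifs
      · exact neg_mem hfm
      · simp
    · rw [hdeg]; exact_mod_cast Nat.pos_of_ne_zero hm
    · rw [coeff_sub, coeff_X_pow, if_neg (Ne.symm hm), zero_sub, coeff_C_zero, neg_mem_iff,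
        Ideal.span_singleton_pow, Ideal.mem_span_singleton, hfq, pow_two,
        mul_dvd_mul_iff_left hqi.ne_zero]
      intro h
      obtain ⟨τ, hτ, hd⟩ := (Prime.dvd_finsetProd_iff hqp _).1 h
      have hd := hqp.dvd_of_dvd_pow hd
      refine (Finset.mem_erase.1 hτ).1 (hz τ ?_)
      have hr : q.IsRoot (z o)⁻¹ := by simp [q, h0 o]
      have := hr.dvd hd
      simp only [IsRoot.def, eval_sub, eval_one, eval_mul, eval_C, eval_X] at this
      have h2 := h0 o
      field_simp at this
      rw [mul_zero] at this
      exact (sub_eq_zero.1 this).symm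
  have := (hmon.irreducible_iff_irreducible_map_fraction_map (K := RatFunc KK)).1 hirr
  simpa using this

section An
variable (K KK Ω : Type) [NontriviallyNormedField K] [CompleteSpace K] [NormedField Ω]
  [CompleteSpace Ω] [IsUltrametricDist Ω] [NormedAlgebra K Ω] [Algebra (RatFunc K) Ω]
  [IsGauss K Ω] [Field KK] [Algebra K KK] [FiniteDimensional K KK] [IsGalois K KK]
  [Algebra (RatFunc KK) Ω]

/-- A Galois action on `Ω` compatible with that on a constant field extension -/
structure Setup where
  s : Gal(KK/K) → Ω →+* Ω
  s_cont : ∀ τ, Continuous (s τ)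
  s_one : ∀ z, s 1 z = z
  s_mul : ∀ τ σ z, s (τ * σ) z = s τ (s σ z)
  s_C : ∀ τ a, s τ (algebraMap (RatFunc KK) Ω (RatFunc.C a)) =
    algebraMap (RatFunc KK) Ω (RatFunc.C (τ a))
  s_X : ∀ τ, s τ (xx K Ω) = xx K Ω
  X_eq : algebraMap (RatFunc KK) Ω RatFunc.X = xx K Ω
  C_eq : ∀ a : K, algebraMap (RatFunc KK) Ω (RatFunc.C (algebraMap K KK a)) = algebraMap K Ω a

variable {K KK Ω}
namespace Setup
variable (S : Setup K KK Ω)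

/-- polynomials over the larger field inside `Ω` -/
noncomputable def j (S : Setup K KK Ω) : KK[X] →ₐ[K] Ω :=
  { (algebraMap (RatFunc KK) Ω).comp (algebraMap KK[X] (RatFunc KK)) with
    commutes' := fun a => by
      have : algebraMap K KK[X] a = C (algebraMap K KK a) := rfl
      simp only [this]
      simp [RatFunc.algebraMap_C, S.C_eq] }

lemma j_apply (f : KK[X]) : S.j f = algebraMap (RatFunc KK) Ω (algebraMap KK[X] _ f) := rfl

lemma j_ne {f : KK[X]} (hf : f ≠ 0) : S.j f ≠ 0 := by
  rw [j_apply]; simpa using hf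

lemma j_X : S.j X = xx K Ω := by rw [j_apply, RatFunc.algebraMap_X, S.X_eq]

lemma j_inj : Function.Injective S.j := by
  rw [injective_iff_map_eq_zero]
  intro f hf
  by_contra h
  exact S.j_ne h hf

lemma j_map (f : K[X]) : S.j (f.map (algebraMap K KK)) = aeval (xx K Ω) f := by
  have : S.j.comp (mapAlgHom (Algebra.ofId K KK)) = aeval (xx K Ω) := by
    ext
    simp [j_X]
  rw [← this]; rfl

lemma s_j (τ : Gal(KK/K)) (f : KK[X]) : S.s τ (S.j f) = S.j (f.map (τ : KK →+* KK)) := by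
  have : (S.s τ).comp (S.j : KK[X] →+* Ω) =
      (S.j : KK[X] →+* Ω).comp (mapRingHom (τ : KK →+* KK)) := by
    ext a
    · simp [j_apply, RatFunc.algebraMap_C, S.s_C]
    · simp [j_X, S.s_X]
  exact DFunLike.congr_fun this f

lemma s_E' (τ : Gal(KK/K)) (e : RatFunc KK) :
    ∃ e' : RatFunc KK, S.s τ (algebraMap _ Ω e) = algebraMap _ Ω e' := by
  refine ⟨algebraMap KK[X] _ (e.num.map (τ : KK →+* KK)) /
    algebraMap KK[X] _ (e.denom.map (τ : KK →+* KK)), ?_⟩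
  rw [map_div₀, ← j_apply S, ← j_apply S, ← s_j, ← s_j, j_apply, j_apply, ← map_div₀, ← map_div₀,
    RatFunc.num_div_denom]

lemma s_K (τ : Gal(KK/K)) (a : K) : S.s τ (algebraMap K Ω a) = algebraMap K Ω a := by
  rw [← S.C_eq, S.s_C, AlgEquiv.commutes]

lemma s_aeval (τ : Gal(KK/K)) (f : K[X]) : S.s τ (aeval (xx K Ω) f) = aeval (xx K Ω) f := by
  rw [← S.j_map, s_j, Polynomial.map_map]
  congr 2
  ext a
  simp

lemma E_eq (e : RatFunc K) : algebraMap (RatFunc K) Ω e =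
    aeval (xx K Ω) e.num / aeval (xx K Ω) e.denom := by
  nth_rewrite 1 [← RatFunc.num_div_denom e]
  rw [map_div₀, algebraMap_poly, algebraMap_poly]

lemma s_E (τ : Gal(KK/K)) (e : RatFunc K) :
    S.s τ (algebraMap _ Ω e) = algebraMap _ Ω e := by
  rw [E_eq, map_div₀, s_aeval, s_aeval]

lemma E_mem (S : Setup K KK Ω) (e : RatFunc K) : ∃ e' : RatFunc KK, algebraMap _ Ω e' = algebraMap _ Ω e := by
  refine ⟨algebraMap KK[X] _ (e.num.map (algebraMap K KK)) /
    algebraMap KK[X] _ (e.denom.map (algebraMap K KK)), ?_⟩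
  rw [map_div₀, ← j_apply S, ← j_apply S, j_map, j_map, E_eq]

lemma inv_poly {g : KK[X]} (hg : ∀ τ, S.s τ (S.j g) = S.j g) :
    ∃ f : K[X], S.j g = aeval (xx K Ω) f := by
  have h : g ∈ lifts (algebraMap K KK) := by
    rw [lifts_iff_coeff_lifts]
    intro n
    rw [IsGalois.mem_range_algebraMap_iff_fixed]
    intro τ
    have h1 := hg τ
    rw [s_j] at h1
    have h2 := congrArg (fun q => q.coeff n) (S.j_inj h1)
    simpa using h2
  obtain ⟨f, rfl⟩ := h
  exact ⟨f, S.j_map f⟩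

/-- closure of the polynomials over the larger field -/
noncomputable def T (S : Setup K KK Ω) : Subalgebra K Ω := S.j.range.topologicalClosure

lemma T_closed : IsClosed (S.T : Set Ω) := Subalgebra.isClosed_topologicalClosure _

lemma j_mem (f : KK[X]) : S.j f ∈ S.T := Subalgebra.le_topologicalClosure _ ⟨f, rfl⟩

lemma s_T (τ : Gal(KK/K)) {z : Ω} (hz : z ∈ S.T) : S.s τ z ∈ S.T := by
  have hc : IsClosed {z | S.s τ z ∈ S.T} := S.T_closed.preimage (S.s_cont τ)
  refine hc.closure_subset_iff.2 ?_ hz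
  rintro _ ⟨f, rfl⟩
  change S.s τ (S.j f) ∈ S.T
  rw [s_j]
  exact S.j_mem _

lemma s_sum (σ : Gal(KK/K)) (z : Ω) : S.s σ (∑ τ, S.s τ z) = ∑ τ, S.s τ z := by
  rw [map_sum]
  simp only [← S.s_mul]
  exact Fintype.sum_equiv (Equiv.mulLeft σ) _ _ (fun τ => rfl)

lemma s_prod (σ : Gal(KK/K)) (z : Ω) : S.s σ (∏ τ, S.s τ z) = ∏ τ, S.s τ z := by
  rw [map_prod]
  simp only [← S.s_mul]
  exact Fintype.prod_equiv (Equiv.mulLeft σ) _ _ (fun τ => rfl)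

lemma inv_T [CharZero K] {z : Ω} (hz : z ∈ S.T) (hs : ∀ τ, S.s τ z = z) : z ∈ Rp K Ω := by
  let c : K := (Fintype.card Gal(KK/K) : K)⁻¹
  have hc0 : (Fintype.card Gal(KK/K) : K) ≠ 0 := by simp
  have hc : IsClosed {z | c • ∑ τ, S.s τ z ∈ Rp K Ω} :=
    (Rp_closed K Ω).preimage (continuous_const.smul
      (continuous_finsetSum _ fun τ _ => S.s_cont τ))
  have h : c • ∑ τ, S.s τ z ∈ Rp K Ω := by
    refine hc.closure_subset_iff.2 ?_ hz
    rintro _ ⟨f, rfl⟩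
    change c • ∑ τ, S.s τ (S.j f) ∈ Rp K Ω
    refine Subalgebra.smul_mem _ ?_ _
    obtain ⟨g, hg⟩ : ∃ g : KK[X], ∑ τ, S.s τ (S.j f) = S.j g := by
      refine ⟨∑ τ : Gal(KK/K), f.map (τ : KK →+* KK), ?_⟩
      rw [map_sum]
      exact Finset.sum_congr rfl fun τ _ => S.s_j τ f
    obtain ⟨q, hq⟩ := S.inv_poly (g := g) (fun τ => by rw [← hg, s_sum])
    rw [hg, hq]
    exact poly_mem_Rp Ω q
  rw [Finset.sum_congr rfl fun τ _ => hs τ, Finset.sum_const, Finset.card_univ,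
    ← Nat.cast_smul_eq_nsmul K, smul_smul, inv_mul_cancel₀ hc0, one_smul] at h
  exact h

lemma exists_root [CharZero K] (m : ℕ) (hm : m ≠ 0) {w : Ω} (hw : w ∈ S.T) :
    ∃ r : K, r ≠ 0 ∧ ∃ y ∈ S.T, y ^ m = 1 - algebraMap K Ω r * w := by
  haveI : CompleteSpace S.T := S.T_closed.completeSpace_coe
  have h1 : HasStrictFDerivAt (fun y : S.T => y ^ m) _ (1 : S.T) :=
    (hasStrictFDerivAt_id (𝕜 := K) (1 : S.T)).pow m
  have h2 := h1.map_nhds_eq_of_surj (by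
    rw [LinearMap.range_eq_top]
    intro v
    refine ⟨(m : K)⁻¹ • v, ?_⟩
    have hm' : (m : K) ≠ 0 := by exact_mod_cast hm
    simp [← Nat.cast_smul_eq_nsmul K, smul_smul, hm'])
  have h3 : Set.range (fun y : S.T => y ^ m) ∈ nhds ((1 : S.T) ^ m) := by
    rw [← h2]
    exact Filter.mem_map.2 (Filter.univ_mem' fun y => ⟨y, rfl⟩)
  rw [one_pow] at h3
  let w' : S.T := ⟨w, hw⟩
  have hcont : Filter.Tendsto (fun r : K => 1 - algebraMap K S.T r * w') (nhds 0) (nhds 1) := by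
    have : Continuous (fun r : K => 1 - algebraMap K S.T r * w') :=
      continuous_const.sub ((continuous_algebraMap K S.T).mul continuous_const)
    simpa using this.tendsto 0
  have h4 := hcont.eventually h3
  obtain ⟨r, hr0, hr⟩ := ((h4.filter_mono nhdsWithin_le_nhds).and
    (self_mem_nhdsWithin : ({0}ᶜ : Set K) ∈ nhdsWithin 0 {0}ᶜ)).exists
  obtain ⟨y, hy⟩ := hr0
  refine ⟨r, hr, y, y.2, ?_⟩
  have := congrArg (Subtype.val) hy
  simpa using this

end Setup
end An
end Harb

set_option linter.unusedSectionVars false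
set_option linter.style.haveILetI false
set_option linter.unusedSimpArgs false

namespace Harb
open Polynomial

section Desc
variable {K KK Ω : Type} [NontriviallyNormedField K] [CompleteSpace K] [NormedField Ω]
  [CompleteSpace Ω] [IsUltrametricDist Ω] [NormedAlgebra K Ω] [Algebra (RatFunc K) Ω]
  [IsGauss K Ω] [Field KK] [Algebra K KK] [FiniteDimensional K KK] [IsGalois K KK]
  [Algebra (RatFunc KK) Ω]
namespace Setup
variable (S : Setup K KK Ω)

/-- the fixed field of the Galois action inside `L` -/
def fixF (L : IntermediateField (RatFunc KK) Ω) : IntermediateField (RatFunc K) Ω where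
  carrier := {z | z ∈ L ∧ ∀ τ, S.s τ z = z}
  mul_mem' := fun {x y} hx hy => ⟨mul_mem hx.1 hy.1, fun τ => by rw [map_mul, hx.2, hy.2]⟩
  add_mem' := fun {x y} hx hy => ⟨add_mem hx.1 hy.1, fun τ => by rw [map_add, hx.2, hy.2]⟩
  inv_mem' := fun x hx => ⟨inv_mem hx.1, fun τ => by rw [map_inv₀, hx.2]⟩
  algebraMap_mem' := fun e => ⟨by
    obtain ⟨e', he⟩ := S.E_mem e
    rw [← he]; exact L.algebraMap_mem e', fun τ => S.s_E τ e⟩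

lemma mem_fixF {L : IntermediateField (RatFunc KK) Ω} {z : Ω} :
    z ∈ S.fixF L ↔ z ∈ L ∧ ∀ τ, S.s τ z = z := Iff.rfl

lemma exists_norm {q : KK[X]} (hq0 : q ≠ 0) :
    ∃ N : KK[X], N ≠ 0 ∧ q ∣ N ∧ ∀ τ, S.s τ (S.j N) = S.j N := by
  let N : KK[X] := ∏ τ : Gal(KK/K), q.map (τ : KK →+* KK)
  have hN : S.j N = ∏ τ, S.s τ (S.j q) := by
    rw [map_prod]
    exact Finset.prod_congr rfl fun τ _ => (S.s_j τ _).symm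
  refine ⟨N, ?_, ?_, fun τ => by rw [hN, S.s_prod]⟩
  · refine Finset.prod_ne_zero_iff.2 fun τ _ => ?_
    exact (Polynomial.map_ne_zero_iff (RingHom.injective _)).2 hq0
  · have := Finset.dvd_prod_of_mem (fun τ : Gal(KK/K) => q.map (τ : KK →+* KK))
      (Finset.mem_univ 1)
    have h1 : q.map ((1 : Gal(KK/K)) : KK →+* KK) = q := by
      ext n; simp
    rwa [h1] at this

lemma inv_E {e : RatFunc KK} (he : ∀ τ, S.s τ (algebraMap _ Ω e) = algebraMap _ Ω e) :
    ∃ e' : RatFunc K, algebraMap _ Ω e' = algebraMap _ Ω e := by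
  obtain ⟨N, hN0, hd, hNi⟩ := S.exists_norm e.denom_ne_zero
  obtain ⟨f, hf⟩ := S.inv_poly hNi
  obtain ⟨g, hg⟩ := hd
  have hM : S.j N * algebraMap _ Ω e = S.j (g * e.num) := by
    have h1 : algebraMap (RatFunc KK) Ω e = S.j e.num / S.j e.denom := by
      nth_rewrite 1 [← RatFunc.num_div_denom e]
      rw [map_div₀]; rfl
    have h2 := S.j_ne e.denom_ne_zero
    rw [h1, hg, map_mul, map_mul]
    field_simp
  obtain ⟨f', hf'⟩ := S.inv_poly (g := g * e.num) (fun τ => by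
    rw [← hM, map_mul, hNi, he])
  have hj := S.j_ne hN0
  refine ⟨algebraMap K[X] _ f' / algebraMap K[X] _ f, ?_⟩
  rw [map_div₀, algebraMap_poly, algebraMap_poly, ← hf', ← hf, ← hM]
  field_simp

theorem descent [CharZero K] (L : IntermediateField (RatFunc KK) Ω)
    [FiniteDimensional (RatFunc KK) L] [IsGalois (RatFunc KK) L]
    (hL : ∀ τ, ∀ z ∈ L, S.s τ z ∈ L)
    (hcomm : ∀ (a : Gal(L/RatFunc KK)) τ (z : L), S.s τ (a z : L) = (a ⟨S.s τ z, hL τ z z.2⟩ : L))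
    (hden : ∀ z ∈ L, ∃ q : KK[X], q ≠ 0 ∧ S.j q * z ∈ S.T) : RealG K Ω Gal(L/RatFunc KK) := by
  let F := S.fixF L
  have hsm : ∀ (a : Gal(L/RatFunc KK)) (z : F), (a ⟨z, z.2.1⟩ : Ω) ∈ S.fixF L := by
    intro a z
    refine ⟨(a ⟨z, z.2.1⟩ : L).2, fun τ => ?_⟩
    rw [hcomm]
    congr 2
    exact Subtype.ext (z.2.2 τ)
  letI act : MulSemiringAction Gal(L/RatFunc KK) F :=
    { smul := fun a z => ⟨_, hsm a z⟩
      one_smul := fun z => rfl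
      mul_smul := fun a b z => rfl
      smul_zero := fun a => Subtype.ext (congrArg (fun t : L => (t : Ω)) (map_zero a))
      smul_add := fun a z w => Subtype.ext (congrArg (fun t : L => (t : Ω)) (map_add a ⟨z, z.2.1⟩ ⟨w, w.2.1⟩))
      smul_one := fun a => Subtype.ext (congrArg (fun t : L => (t : Ω)) (map_one a))
      smul_mul := fun a z w => Subtype.ext (congrArg (fun t : L => (t : Ω)) (map_mul a ⟨z, z.2.1⟩ ⟨w, w.2.1⟩)) }
  have hact : ∀ (a : Gal(L/RatFunc KK)) (z : F), ((a • z : F) : Ω) = (a ⟨z, z.2.1⟩ : L) :=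
    fun a z => rfl
  refine ⟨F, inferInstance, inferInstance, act, F.val, ?_, ?_⟩
  · refine @IsGaloisGroup.mk _ _ _ _ _ _ _ _ ⟨?_⟩ ⟨?_⟩ ⟨?_⟩
    · have key : ∀ a : Gal(L/RatFunc KK), (∀ z : F, a • z = z) → a = 1 := by
        intro a ha
        ext z
        -- trace argument
        have h1 : ∀ b : KK, ∑ τ, algebraMap (RatFunc KK) Ω (RatFunc.C (τ b)) *
            (S.s τ ((a z : L) : Ω) - S.s τ z) = 0 := by
          intro b
          let w : L := algebraMap (RatFunc KK) L (RatFunc.C b) * z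
          let t : L := ∑ τ, ⟨S.s τ w, hL τ w w.2⟩
          have ht : (t : Ω) = ∑ τ, S.s τ w := by
            simp [t]
          have htF : (t : Ω) ∈ S.fixF L := ⟨t.2, fun τ => by rw [ht, S.s_sum]⟩
          have h2 := congrArg Subtype.val (ha ⟨t, htF⟩)
          rw [hact] at h2
          change ((a t : L) : Ω) = t at h2
          have h3 : ((a t : L) : Ω) = ∑ τ, S.s τ ((a w : L) : Ω) := by
            simp only [t, map_sum]
            rw [AddSubmonoidClass.coe_finsetSum]
            exact Finset.sum_congr rfl fun τ _ => (hcomm a τ w).symm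
          rw [h3, ht, ← sub_eq_zero, ← Finset.sum_sub_distrib] at h2
          rw [← h2]
          refine Finset.sum_congr rfl fun τ _ => ?_
          have h4 : a w = algebraMap (RatFunc KK) L (RatFunc.C b) * a z := by
            simp [w]
          rw [h4]
          simp only [w, MulMemClass.coe_mul]
          have h5 : ((algebraMap (RatFunc KK) L (RatFunc.C b) : L) : Ω) =
            algebraMap (RatFunc KK) Ω (RatFunc.C b) := rfl
          rw [map_mul, map_mul, h5, S.s_C]
          ring
        have hli := linearIndependent_monoidHom KK Ω
        let χ : Gal(KK/K) → (KK →* Ω) := fun τ =>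
          (((algebraMap (RatFunc KK) Ω).comp (RatFunc.C)).comp (τ : KK →+* KK) : KK →+* Ω)
        have hχ : Function.Injective χ := by
          intro τ σ h
          ext b
          have h2 := DFunLike.congr_fun h b
          exact RatFunc.C_injective ((algebraMap (RatFunc KK) Ω).injective h2)
        have hli2 := hli.comp χ hχ
        rw [Fintype.linearIndependent_iff] at hli2
        have h6 := hli2 (fun τ => S.s τ ((a z : L) : Ω) - S.s τ z) (by
          ext b
          rw [Finset.sum_apply]
          simp only [Function.comp, Pi.smul_apply, Pi.zero_apply, smul_eq_mul]
          rw [← h1 b]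
          exact Finset.sum_congr rfl fun τ _ => mul_comm _ _) 1
        simp only [S.s_one] at h6
        exact sub_eq_zero.1 h6
      intro a a' h
      have := key (a'⁻¹ * a) (fun z => by
        rw [mul_smul, h, inv_smul_smul])
      exact (inv_mul_eq_one.1 this).symm
    · intro a e z
      apply Subtype.ext
      obtain ⟨e', he'⟩ := S.E_mem e
      rw [Algebra.smul_def, Algebra.smul_def, smul_mul']
      change ((a _ : L) : Ω) * _ = _ * _
      congr 1
      have : (⟨algebraMap (RatFunc K) Ω e, ((S.fixF L).algebraMap_mem e).1⟩ : L) =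
        algebraMap (RatFunc KK) L e' := Subtype.ext he'.symm
      have h2 := congrArg Subtype.val ((congrArg a this).trans (AlgEquiv.commutes a e'))
      exact h2.trans he'
    · intro z hz
      have h1 : (⟨z, z.2.1⟩ : L) ∈ Set.range (algebraMap (RatFunc KK) L) := by
        rw [IsGalois.mem_range_algebraMap_iff_fixed]
        intro a
        exact Subtype.ext (congrArg (fun t : F => (t : Ω)) (hz a))
      obtain ⟨e, he⟩ := h1
      have he2 : algebraMap (RatFunc KK) Ω e = z := congrArg Subtype.val he
      obtain ⟨e', he'⟩ := S.inv_E (e := e) (fun τ => by rw [he2, z.2.2])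
      exact ⟨e', Subtype.ext (he'.trans he2)⟩
  · intro z
    obtain ⟨q, hq0, hq⟩ := hden z z.2.1
    obtain ⟨N, hN0, hd, hNi⟩ := S.exists_norm hq0
    obtain ⟨f, hf⟩ := S.inv_poly hNi
    obtain ⟨g, hg⟩ := hd
    have hT : S.j N * (z : Ω) ∈ S.T := by
      rw [hg, map_mul, mul_comm (S.j q), mul_assoc]
      exact mul_mem (S.j_mem g) hq
    have hR := S.inv_T hT (fun τ => by rw [map_mul, hNi, z.2.2])
    have hf0 : f ≠ 0 := by
      rintro rfl
      rw [map_zero] at hf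
      exact S.j_ne hN0 hf
    refine ⟨algebraMap K[X] _ f, by simpa using hf0, ?_, ?_⟩
    · rw [algebraMap_poly]; exact poly_mem_Rp Ω f
    · rw [algebraMap_poly, ← hf]; exact hR

lemma pow_modEq {E Ω : Type} [Field E] [Field Ω] [Algebra E Ω] {v : Ω} (hv : v ≠ 0) {m : ℕ}
    {e₀ : E} (h : v ^ m = algebraMap E Ω e₀) {a b : ℕ} (hab : a ≡ b [MOD m]) :
    ∃ e : E, v ^ a = v ^ b * algebraMap E Ω e := by
  obtain ⟨k, hk⟩ := (Nat.modEq_iff_dvd.1 hab.symm)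
  refine ⟨e₀ ^ k, ?_⟩
  rw [map_zpow₀, ← h, ← zpow_natCast v m, ← zpow_mul, ← hk, ← zpow_natCast, ← zpow_natCast,
    ← zpow_add₀ hv]
  congr 1; ring

theorem cyc (S : Setup K KK Ω) [CharZero K] {n m : ℕ} {ζ : KK} (hζ : IsPrimitiveRoot ζ n) (hn : n ≠ 0)
    (hgen : ∀ τ : Gal(KK/K), τ ζ = ζ → τ = 1) (hm : m ∣ n) :
    RealG K Ω (Multiplicative (ZMod m)) := by
  classical
  obtain ⟨d, rfl⟩ := hm
  have hm0 : m ≠ 0 := fun h => hn (by simp [h])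
  have hζ0 : ζ ≠ 0 := hζ.ne_zero hn
  haveI : NeZero m := ⟨hm0⟩
  haveI : NeZero (m * d) := ⟨hn⟩
  have hc : ∀ τ : Gal(KK/K), ∃ k : ℕ, τ ζ = ζ ^ k ∧ (τ = 1 → k = 1) := by
    intro τ
    by_cases h : τ = 1
    · exact ⟨1, by simp [h], fun _ => rfl⟩
    · obtain ⟨i, -, hi⟩ := hζ.eq_pow_of_pow_eq_one (ξ := τ ζ) (by
        rw [← map_pow, hζ.pow_eq_one, map_one])
      exact ⟨i, hi.symm, fun h' => absurd h' h⟩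
  choose c hc hc1 using hc
  have hcm : ∀ σ τ, c (σ * τ) ≡ c σ * c τ [MOD m] := by
    intro σ τ
    have h1 : ζ ^ c (σ * τ) = ζ ^ (c σ * c τ) := by
      rw [← hc, AlgEquiv.mul_apply, hc τ, map_pow, hc σ, pow_mul]
    have h2 : c (σ * τ) ≡ c σ * c τ [MOD (m * d)] := by
      rw [hζ.eq_orderOf]
      exact (hζ.isOfFinOrder hn).pow_eq_pow_iff_modEq.1 h1
    exact Nat.ModEq.of_mul_right d h2
  obtain ⟨r, hr, y, hyT, hy⟩ := S.exists_root m hm0 (S.j_mem (C ζ * X))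
  let z : Gal(KK/K) → KK := fun τ => algebraMap K KK r * τ ζ
  have hz0 : ∀ τ, z τ ≠ 0 := fun τ => mul_ne_zero (by simpa using hr) (by simpa using hζ0)
  have hirr := kummer_irred m hm0 z 1 (fun τ => c τ⁻¹) (hc1 _ inv_one) hz0 (by
    intro τ h
    refine hgen τ ?_
    exact mul_left_cancel₀ (by simpa using hr) h)
  have hy' : y ^ m = S.j (1 - C (z 1) * X) := by
    rw [hy, map_sub, map_one]
    congr 1
    have : (C (z 1) * X : KK[X]) = algebraMap K KK[X] r * (C ζ * X) := by
      have : algebraMap K KK[X] r = C (algebraMap K KK r) := rfl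
      rw [this, ← mul_assoc, ← C_mul]; rfl
    rw [this, map_mul S.j (algebraMap K KK[X] r), AlgHom.commutes]
  have hsy : ∀ τ, (S.s τ y) ^ m = S.j (1 - C (z τ) * X) := by
    intro τ
    rw [← map_pow, hy', S.s_j]
    simp [z]
  have hpne : ∀ τ, (1 - C (z τ) * X : KK[X]) ≠ 0 := by
    intro τ h
    have := congrArg (fun q => q.coeff 0) h
    simp at this
  have hsy0 : ∀ τ, S.s τ y ≠ 0 := fun τ h => by
    have := hsy τ
    rw [h, zero_pow hm0] at this
    exact S.j_ne (hpne τ) this.symm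
  let u : Ω := ∏ τ, (S.s τ y) ^ c τ⁻¹
  have huT : u ∈ S.T := Subalgebra.prod_mem _ fun τ _ => Subalgebra.pow_mem _ (S.s_T τ hyT) _
  have hu : u ^ m = algebraMap (RatFunc KK) Ω (algebraMap KK[X] _
      (∏ τ, (1 - C (z τ) * X) ^ c τ⁻¹)) := by
    rw [← S.j_apply, map_prod, ← Finset.prod_pow]
    refine Finset.prod_congr rfl fun τ _ => ?_
    rw [map_pow, ← hsy, ← pow_mul, ← pow_mul, mul_comm]
  have hζm : IsPrimitiveRoot (ζ ^ d) m := hζ.pow (Nat.pos_of_ne_zero hn) (mul_comm _ _)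
  have hζE : IsPrimitiveRoot (RatFunc.C (ζ ^ d) : RatFunc KK) m :=
    hζm.map_of_injective RatFunc.C_injective
  have hsu : ∀ τ, ∃ e : RatFunc KK, S.s τ u = u ^ c τ * algebraMap _ Ω e := by
    intro τ
    have h1 : S.s τ u = ∏ ρ, (S.s ρ y) ^ c (ρ⁻¹ * τ) := by
      rw [map_prod]
      refine Fintype.prod_equiv (Equiv.mulLeft τ) _ _ fun ρ => ?_
      rw [map_pow, ← S.s_mul]
      simp
    have h2 : ∀ ρ, ∃ e : RatFunc KK, (S.s ρ y) ^ c (ρ⁻¹ * τ) =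
        (S.s ρ y) ^ (c ρ⁻¹ * c τ) * algebraMap _ Ω e := fun ρ =>
      pow_modEq (hsy0 ρ) (hsy ρ) (hcm _ _)
    choose e he using h2
    refine ⟨∏ ρ, e ρ, ?_⟩
    rw [h1, map_prod, ← Finset.prod_pow, ← Finset.prod_mul_distrib]
    refine Finset.prod_congr rfl fun ρ _ => ?_
    rw [he, pow_mul]
  obtain ⟨hGal, ⟨iso⟩, hact⟩ := kummer _ u m hirr hu hζE
  have hIntg : IsIntegral (RatFunc KK) u :=
    ⟨_, monic_X_pow_sub_C _ hm0, by
      rw [eval₂_sub, eval₂_X_pow, eval₂_C, sub_eq_zero]; exact hu⟩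
  haveI : FiniteDimensional (RatFunc KK) (IntermediateField.adjoin (RatFunc KK) {u}) :=
    IntermediateField.adjoin.finiteDimensional hIntg
  have huL : u ∈ IntermediateField.adjoin (RatFunc KK) {u} :=
    IntermediateField.mem_adjoin_simple_self _ u
  have hL : ∀ τ, ∀ z ∈ IntermediateField.adjoin (RatFunc KK) {u},
      S.s τ z ∈ IntermediateField.adjoin (RatFunc KK) {u} := by
    intro τ z hz
    induction hz using IntermediateField.adjoin_induction with
    | mem x hx =>
      obtain rfl := hx
      obtain ⟨e, he⟩ := hsu τ
      rw [he]
      exact mul_mem (pow_mem huL _) (IntermediateField.algebraMap_mem _ e)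
    | algebraMap e =>
      obtain ⟨e', he'⟩ := S.s_E' τ e
      rw [he']
      exact IntermediateField.algebraMap_mem _ e'
    | add x y _ _ hx hy => rw [map_add]; exact add_mem hx hy
    | inv x _ hx => rw [map_inv₀]; exact inv_mem hx
    | mul x y _ _ hx hy => rw [map_mul]; exact mul_mem hx hy
  refine RealG.of_equiv iso (S.descent _ hL ?_ ?_)
  · intro a τ w
    let sL : IntermediateField.adjoin (RatFunc KK) {u} →+* IntermediateField.adjoin (RatFunc KK) {u} :=
      ((S.s τ).comp (IntermediateField.adjoin (RatFunc KK) {u}).val.toRingHom).codRestrict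
        (IntermediateField.adjoin (RatFunc KK) {u}).toSubfield (fun z => hL τ z z.2)
    suffices h : ∀ (x : Ω) (hx : x ∈ IntermediateField.adjoin (RatFunc KK) {u}),
        sL (a ⟨x, hx⟩) = a (sL ⟨x, hx⟩) from congrArg Subtype.val (h w w.2)
    have hsE : ∀ e : RatFunc KK, ∃ e' : RatFunc KK, sL (algebraMap _ _ e) = algebraMap _ _ e' := by
      intro e
      obtain ⟨e', he'⟩ := S.s_E' τ e
      exact ⟨e', Subtype.ext he'⟩
    intro x hx
    induction hx using IntermediateField.adjoin_induction with
    | mem x hx =>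
      obtain rfl := hx
      obtain ⟨i, hi⟩ := hact a
      obtain ⟨e, he⟩ := hsu τ
      let g := IntermediateField.AdjoinSimple.gen (RatFunc KK) u
      have hg : sL g = g ^ c τ * algebraMap _ _ e := Subtype.ext he
      have hη : sL (algebraMap _ _ (RatFunc.C (ζ ^ d) ^ i)) =
          (algebraMap _ _ (RatFunc.C (ζ ^ d) ^ i)) ^ c τ := by
        apply Subtype.ext
        change S.s τ (algebraMap (RatFunc KK) Ω (RatFunc.C (ζ ^ d) ^ i)) =
          (algebraMap (RatFunc KK) Ω (RatFunc.C (ζ ^ d) ^ i)) ^ c τ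
        have h9 : τ ((ζ ^ d) ^ i) = ((ζ ^ d) ^ i) ^ c τ := by
          rw [map_pow, map_pow, hc]; ring
        rw [← map_pow RatFunc.C, S.s_C, h9, map_pow RatFunc.C, map_pow (algebraMap _ Ω)]
      change sL (a g) = a (sL g)
      change a g = _ * g at hi
      rw [hi, map_mul, hη, hg, map_mul, map_pow a g, hi, AlgEquiv.commutes]
      ring
    | algebraMap e =>
      obtain ⟨e', he'⟩ := hsE e
      change sL (a (algebraMap _ _ e)) = a (sL (algebraMap _ _ e))
      rw [AlgEquiv.commutes, he', AlgEquiv.commutes]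
    | add x y hx' hy' hx hy =>
      change sL (a (⟨x, hx'⟩ + ⟨y, hy'⟩)) = a (sL (⟨x, hx'⟩ + ⟨y, hy'⟩))
      rw [map_add, map_add, map_add, map_add, hx, hy]
    | inv x hx' hx =>
      change sL (a (⟨x, hx'⟩⁻¹)) = a (sL (⟨x, hx'⟩⁻¹))
      rw [map_inv₀, map_inv₀, map_inv₀, map_inv₀, hx]
    | mul x y hx' hy' hx hy =>
      change sL (a (⟨x, hx'⟩ * ⟨y, hy'⟩)) = a (sL (⟨x, hx'⟩ * ⟨y, hy'⟩))
      rw [map_mul, map_mul, map_mul, map_mul, hx, hy]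
  · intro w hw
    have hw' : w ∈ Algebra.adjoin (RatFunc KK) {u} := by
      rw [← IntermediateField.adjoin_simple_toSubalgebra_of_isAlgebraic hIntg.isAlgebraic]
      exact hw
    induction hw' using Algebra.adjoin_induction with
    | mem x hx =>
      obtain rfl := hx
      exact ⟨1, one_ne_zero, by rw [map_one, one_mul]; exact huT⟩
    | algebraMap e =>
      refine ⟨e.denom, e.denom_ne_zero, ?_⟩
      have h1 : algebraMap (RatFunc KK) Ω e = S.j e.num / S.j e.denom := by
        nth_rewrite 1 [← RatFunc.num_div_denom e]
        rw [map_div₀]; rfl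
      rw [h1, mul_div_cancel₀ _ (S.j_ne e.denom_ne_zero)]
      exact S.j_mem _
    | add x y hx' hy' hx hy =>
      obtain ⟨q, hq0, hq⟩ := hx (by
        rw [← IntermediateField.mem_toSubalgebra,
          IntermediateField.adjoin_simple_toSubalgebra_of_isAlgebraic hIntg.isAlgebraic]; exact hx')
      obtain ⟨q', hq0', hq'⟩ := hy (by
        rw [← IntermediateField.mem_toSubalgebra,
          IntermediateField.adjoin_simple_toSubalgebra_of_isAlgebraic hIntg.isAlgebraic]; exact hy')
      refine ⟨q * q', mul_ne_zero hq0 hq0', ?_⟩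
      have : S.j (q * q') * (x + y) = S.j q' * (S.j q * x) + S.j q * (S.j q' * y) := by
        rw [map_mul]; ring
      rw [this]
      exact add_mem (mul_mem (S.j_mem _) hq) (mul_mem (S.j_mem _) hq')
    | mul x y hx' hy' hx hy =>
      obtain ⟨q, hq0, hq⟩ := hx (by
        rw [← IntermediateField.mem_toSubalgebra,
          IntermediateField.adjoin_simple_toSubalgebra_of_isAlgebraic hIntg.isAlgebraic]; exact hx')
      obtain ⟨q', hq0', hq'⟩ := hy (by
        rw [← IntermediateField.mem_toSubalgebra,
          IntermediateField.adjoin_simple_toSubalgebra_of_isAlgebraic hIntg.isAlgebraic]; exact hy')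
      refine ⟨q * q', mul_ne_zero hq0 hq0', ?_⟩
      have : S.j (q * q') * (x * y) = (S.j q * x) * (S.j q' * y) := by
        rw [map_mul]; ring
      rw [this]
      exact mul_mem hq hq'

theorem cyc_all (S : Setup K KK Ω) [CharZero K] {G : Type} [Group G] [Finite G] {ζ : KK}
    (hζ : IsPrimitiveRoot ζ (Nat.card G))
    (hgen : ∀ τ : Gal(KK/K), τ ζ = ζ → τ = 1) : RealG K Ω G :=
  real_all G fun C _ _ _ hC =>
    RealG.of_equiv (zmodCyclicMulEquiv (G := C) inferInstance)
      (S.cyc hζ Nat.card_pos.ne' hgen hC)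

end Setup
end Desc
end Harb

set_option linter.unusedSectionVars false
set_option linter.style.haveILetI false
set_option linter.unusedSimpArgs false

namespace Harb
open Polynomial

section GaussAbs
variable {L : Type} [NormedField L] [IsUltrametricDist L]

lemma nonarch : IsNonarchimedean (NormedField.toAbsoluteValue L) := fun x y =>
  IsUltrametricDist.norm_add_le_max x y

/-- Gauss norm on polynomials -/
noncomputable def gn (p : L[X]) : ℝ := p.gaussNorm (NormedField.toAbsoluteValue L) 1

lemma gn_mul (p q : L[X]) : gn (p * q) = gn p * gn q :=
  Polynomial.gaussNorm_mul nonarch one_pos p q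

lemma gn_add (p q : L[X]) : gn (p + q) ≤ max (gn p) (gn q) :=
  Polynomial.isNonarchimedean_gaussNorm _ nonarch zero_le_one p q

lemma gn_nonneg (p : L[X]) : 0 ≤ gn p := Polynomial.gaussNorm_nonneg _ p zero_le_one

lemma gn_eq_zero {p : L[X]} : gn p = 0 ↔ p = 0 :=
  Polynomial.gaussNorm_eq_zero_iff _ _ (fun _ hx => (AbsoluteValue.eq_zero _).1 hx) one_pos

lemma gn_C (a : L) : gn (C a) = ‖a‖ := Polynomial.gaussNorm_C _ _ a

lemma gn_X : gn (X : L[X]) = 1 := by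
  have := Polynomial.gaussNorm_monomial (NormedField.toAbsoluteValue L) (1 : ℝ) 1 (1 : L)
  rw [monomial_one_one_eq_X] at this
  rw [gn, this]; simp

lemma gn_coeff (p : L[X]) (i : ℕ) : ‖p.coeff i‖ ≤ gn p := by
  have := Polynomial.le_gaussNorm (NormedField.toAbsoluteValue L) p (zero_le_one' ℝ) i
  rw [one_pow, mul_one] at this
  exact this

lemma gn_exists (p : L[X]) : ∃ i, gn p = ‖p.coeff i‖ := by
  obtain ⟨i, hi⟩ := Polynomial.exists_eq_gaussNorm (NormedField.toAbsoluteValue L) (1 : ℝ) p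
  exact ⟨i, by rw [gn, hi, one_pow, mul_one]; rfl⟩

lemma gn_one : gn (1 : L[X]) = 1 := by rw [← C_1, gn_C, norm_one]

/-- Gauss norm on rational functions -/
noncomputable def gr (e : RatFunc L) : ℝ := gn e.num / gn e.denom

lemma gn_ne {p : L[X]} (hp : p ≠ 0) : gn p ≠ 0 := fun h => hp (gn_eq_zero.1 h)

lemma gr_div (p q : L[X]) (hq : q ≠ 0) :
    gr (algebraMap L[X] (RatFunc L) p / algebraMap L[X] (RatFunc L) q) = gn p / gn q := by
  have h := (RatFunc.num_mul_eq_mul_denom_iff (p := p) hq).2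
    (rfl : (algebraMap L[X] (RatFunc L) p / algebraMap L[X] (RatFunc L) q) = _)
  have h2 := congrArg gn h
  rw [gn_mul, gn_mul] at h2
  rw [gr, div_eq_div_iff (gn_ne (RatFunc.denom_ne_zero _)) (gn_ne hq), h2]

lemma gr_poly (p : L[X]) : gr (algebraMap L[X] (RatFunc L) p) = gn p := by
  have := gr_div p 1 one_ne_zero
  rwa [map_one, div_one, gn_one, div_one] at this

lemma gr_nonneg (e : RatFunc L) : 0 ≤ gr e := div_nonneg (gn_nonneg _) (gn_nonneg _)

lemma gr_add (a b : RatFunc L) : gr (a + b) ≤ max (gr a) (gr b) := by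
  have ha := RatFunc.denom_ne_zero a
  have hb := RatFunc.denom_ne_zero b
  have ha' : algebraMap L[X] (RatFunc L) a.denom ≠ 0 := by simpa using ha
  have hb' : algebraMap L[X] (RatFunc L) b.denom ≠ 0 := by simpa using hb
  have h : a + b = algebraMap L[X] (RatFunc L) (a.num * b.denom + b.num * a.denom) /
      algebraMap L[X] (RatFunc L) (a.denom * b.denom) := by
    nth_rewrite 1 [← RatFunc.num_div_denom a, ← RatFunc.num_div_denom b]
    rw [div_add_div _ _ ha' hb']
    simp only [map_add, map_mul]
    ring
  rw [h, gr_div _ _ (mul_ne_zero ha hb)]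
  have pa := (gn_nonneg a.denom).lt_of_ne' (gn_ne ha)
  have pb := (gn_nonneg b.denom).lt_of_ne' (gn_ne hb)
  rw [gn_mul, div_le_iff₀ (mul_pos pa pb), max_mul_of_nonneg _ _ (mul_pos pa pb).le]
  refine (gn_add _ _).trans (le_of_eq ?_)
  rw [gn_mul, gn_mul, gr, gr]
  congr 1 <;> field_simp

/-- The Gauss absolute value -/
noncomputable def gabs (L : Type) [NormedField L] [IsUltrametricDist L] :
    AbsoluteValue (RatFunc L) ℝ where
  toFun := gr
  map_mul' := fun a b => by
    have ha := RatFunc.denom_ne_zero a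
    have hb := RatFunc.denom_ne_zero b
    have h : a * b = algebraMap L[X] (RatFunc L) (a.num * b.num) /
        algebraMap L[X] (RatFunc L) (a.denom * b.denom) := by
      nth_rewrite 1 [← RatFunc.num_div_denom a, ← RatFunc.num_div_denom b]
      rw [map_mul, map_mul, div_mul_div_comm]
    rw [h, gr_div _ _ (mul_ne_zero ha hb), gn_mul, gn_mul, ← div_mul_div_comm]; rfl
  nonneg' := gr_nonneg
  eq_zero' := fun e => by
    rw [gr, div_eq_zero_iff, or_iff_left (gn_ne (RatFunc.denom_ne_zero e)), gn_eq_zero,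
      RatFunc.num_eq_zero_iff]
  add_le' := fun a b => (gr_add a b).trans (max_le (by linarith [gr_nonneg b]) (by linarith [gr_nonneg a]))

lemma gr_map (τ : L ≃+* L) (hτ : ∀ a, ‖τ a‖ = ‖a‖) (p : L[X]) : gn (p.map (τ : L →+* L)) = gn p := by
  apply le_antisymm
  · obtain ⟨i, hi⟩ := gn_exists (p.map (τ : L →+* L))
    rw [hi, coeff_map]
    exact (hτ _).le.trans (gn_coeff p i)
  · obtain ⟨i, hi⟩ := gn_exists p
    rw [hi, ← hτ]
    simpa using gn_coeff (p.map (τ : L →+* L)) i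

/-- coefficientwise map on rational functions -/
noncomputable def rmap {F₁ F₂ : Type} [Field F₁] [Field F₂] (τ : F₁ →+* F₂) :
    RatFunc F₁ →+* RatFunc F₂ :=
  IsFractionRing.map (A := F₁[X]) (K := RatFunc F₁) (B := F₂[X]) (L := RatFunc F₂)
    (j := mapRingHom τ) (Polynomial.map_injective τ τ.injective)

lemma rmap_poly {F₁ F₂ : Type} [Field F₁] [Field F₂] (τ : F₁ →+* F₂) (p : F₁[X]) :
    rmap τ (algebraMap _ _ p) = algebraMap _ _ (p.map τ) := by
  unfold rmap IsFractionRing.map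
  rw [IsLocalization.map_eq]; rfl

lemma rmap_hom_ext {F₁ A : Type} [Field F₁] [Field A] {f g : RatFunc F₁ →+* A}
    (hC : ∀ a, f (RatFunc.C a) = g (RatFunc.C a)) (hX : f RatFunc.X = g RatFunc.X) : f = g := by
  apply IsLocalization.ringHom_ext (nonZeroDivisors F₁[X])
  apply Polynomial.ringHom_ext
  · intro a; simpa [RatFunc.algebraMap_C] using hC a
  · simpa using hX

lemma rmap_C {F₁ F₂ : Type} [Field F₁] [Field F₂] (τ : F₁ →+* F₂) (a : F₁) :
    rmap τ (RatFunc.C a) = RatFunc.C (τ a) := by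
  rw [← RatFunc.algebraMap_C, rmap_poly, map_C, RatFunc.algebraMap_C]

lemma rmap_X {F₁ F₂ : Type} [Field F₁] [Field F₂] (τ : F₁ →+* F₂) :
    rmap τ RatFunc.X = RatFunc.X := by
  rw [← RatFunc.algebraMap_X, rmap_poly, map_X, RatFunc.algebraMap_X]

lemma gr_rmap (τ : L ≃+* L) (hτ : ∀ a, ‖τ a‖ = ‖a‖) (e : RatFunc L) :
    gr (rmap (τ : L →+* L) e) = gr e := by
  nth_rewrite 1 [← RatFunc.num_div_denom e]
  rw [map_div₀, rmap_poly, rmap_poly, gr_div, gr_map τ hτ, gr_map τ hτ]; rfl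
  exact (Polynomial.map_ne_zero_iff (RingHom.injective _)).2 e.denom_ne_zero

end GaussAbs

section Compl
open UniformSpace

lemma compl_ultra {M : Type} [NormedField M] (h : ∀ a b : M, ‖a + b‖ ≤ max ‖a‖ ‖b‖) :
    IsUltrametricDist (Completion M) := by
  refine IsUltrametricDist.isUltrametricDist_of_forall_norm_add_le_max_norm fun x y => ?_
  induction x, y using Completion.induction_on₂ with
  | hp => exact isClosed_le (by fun_prop) (by fun_prop)
  | ih x y => simpa only [← Completion.coe_add, Completion.norm_coe] using h x y

variable {K KK M : Type} [NontriviallyNormedField K] [CompleteSpace K] [NormedField KK]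
  [IsUltrametricDist KK] [NormedAlgebra K KK] [FiniteDimensional K KK] [IsGalois K KK]
  [NormedField M]

theorem exists_setup_aux (hτ : ∀ (τ : Gal(KK/K)) a, ‖τ a‖ = ‖a‖) (ι : RatFunc KK ≃+* M)
    (hι : ∀ e, ‖ι e‖ = gr e) :
    ∃ (Ω : Type) (_ : NormedField Ω) (_ : CompleteSpace Ω) (_ : IsUltrametricDist Ω)
      (_ : NormedAlgebra K Ω) (_ : Algebra (RatFunc K) Ω) (_ : IsGauss K Ω)
      (_ : Algebra (RatFunc KK) Ω), Nonempty (Setup K KK Ω) := by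
  haveI hU : IsUltrametricDist (Completion M) := compl_ultra (fun a b => by
    obtain ⟨a, rfl⟩ := ι.surjective a
    obtain ⟨b, rfl⟩ := ι.surjective b
    rw [← map_add, hι, hι, hι]
    exact gr_add a b)
  let κ : RatFunc KK →+* Completion M := (Completion.coeRingHom (α := M)).comp (ι : RatFunc KK →+* M)
  have hκ : ∀ e, ‖κ e‖ = gr e := fun e => (Completion.norm_coe _).trans (hι e)
  letI A' : Algebra (RatFunc KK) (Completion M) := κ.toAlgebra
  letI A : Algebra (RatFunc K) (Completion M) := (κ.comp (rmap (algebraMap K KK))).toAlgebra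
  letI B : Algebra K (Completion M) := (κ.comp (RatFunc.C.comp (algebraMap K KK))).toAlgebra
  have hC : ∀ a, gr (RatFunc.C a : RatFunc KK) = ‖a‖ := fun a => by
    rw [← RatFunc.algebraMap_C, gr_poly, gn_C]
  letI N : NormedAlgebra K (Completion M) :=
    { B with
      norm_smul_le := fun a z => by
        rw [Algebra.smul_def]
        change ‖κ (RatFunc.C (algebraMap K KK a)) * z‖ ≤ _
        rw [norm_mul, hκ, hC, norm_algebraMap'] }
  have hAX : algebraMap (RatFunc K) (Completion M) RatFunc.X = κ RatFunc.X :=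
    congrArg κ (rmap_X _)
  have hcoef : ∀ f : K[X], aeval (algebraMap (RatFunc K) (Completion M) RatFunc.X) f =
      κ (algebraMap _ _ (f.map (algebraMap K KK))) := by
    intro f
    rw [hAX, aeval_def]
    induction f using Polynomial.induction_on' with
    | add p q hp hq => simp only [eval₂_add, Polynomial.map_add, map_add, hp, hq]
    | monomial n a =>
      rw [eval₂_monomial, map_monomial, ← C_mul_X_pow_eq_monomial, map_mul, map_mul, map_pow,
        map_pow, RatFunc.algebraMap_X, RatFunc.algebraMap_C]
      rfl
  haveI T : IsScalarTower K (RatFunc K) (Completion M) := IsScalarTower.of_algebraMap_eq fun a => by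
    have : algebraMap K (RatFunc K) a = RatFunc.C a := rfl
    rw [this]
    exact (congrArg κ (rmap_C _ a)).symm
  haveI : IsGauss K (Completion M) :=
    { norm_x := by
        rw [hAX, hκ, ← RatFunc.algebraMap_X, gr_poly, gn_X]
      coeff_le := fun f i => by
        rw [hcoef, hκ, gr_poly]
        have := gn_coeff (f.map (algebraMap K KK)) i
        rwa [coeff_map, norm_algebraMap'] at this }
  let t : Gal(KK/K) → (M →+* M) := fun τ =>
    (ι : RatFunc KK →+* M).comp ((rmap (τ : KK →+* KK)).comp (ι.symm : M →+* RatFunc KK))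
  have ht : ∀ τ e, t τ (ι e) = ι (rmap (τ : KK →+* KK) e) := fun τ e => by
    simp [t]
  have htn : ∀ τ z, ‖t τ z‖ = ‖z‖ := fun τ z => by
    obtain ⟨e, rfl⟩ := ι.surjective z
    rw [ht, hι, hι]
    exact gr_rmap (τ : KK ≃+* KK) (hτ τ) e
  have htc : ∀ τ, Continuous (t τ) := fun τ =>
    (AddMonoidHomClass.isometry_of_norm (t τ) (htn τ)).continuous
  have hs : ∀ τ e, Completion.mapRingHom (t τ) (htc τ) (κ e) = κ (rmap (τ : KK →+* KK) e) := by
    intro τ e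
    refine (Completion.mapRingHom_coe (htc τ) _).trans ?_
    exact congrArg _ (ht τ e)
  have hsc : ∀ τ, Continuous (Completion.mapRingHom (t τ) (htc τ)) := fun τ =>
    Completion.continuous_map
  have hdense : ∀ f g : Completion M →+* Completion M, Continuous f → Continuous g →
      (∀ e, f (κ e) = g (κ e)) → ∀ z, f z = g z := by
    intro f g hf hg h z
    induction z using Completion.induction_on with
    | hp => exact isClosed_eq hf hg
    | ih z =>
      obtain ⟨e, rfl⟩ := ι.surjective z
      exact h e
  refine ⟨Completion M, inferInstance, inferInstance, hU, N, A, inferInstance, A', ⟨?_⟩⟩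
  exact
    { s := fun τ => Completion.mapRingHom (t τ) (htc τ)
      s_cont := hsc
      s_one := hdense _ (RingHom.id _) (hsc 1) continuous_id fun e => by
        rw [hs]
        have : rmap ((1 : Gal(KK/K)) : KK →+* KK) = RingHom.id _ :=
          rmap_hom_ext (fun a => by rw [rmap_C]; rfl) (rmap_X _)
        rw [this]; rfl
      s_mul := fun τ σ => hdense _ ((Completion.mapRingHom (t τ) (htc τ)).comp
          (Completion.mapRingHom (t σ) (htc σ))) (hsc _) ((hsc τ).comp (hsc σ)) fun e => by
        refine (hs _ e).trans (Eq.trans ?_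
          (congrArg (Completion.mapRingHom (t τ) (htc τ)) (hs σ e)).symm)
        rw [hs]
        congr 1
        have : rmap ((τ * σ : Gal(KK/K)) : KK →+* KK) =
          (rmap (τ : KK →+* KK)).comp (rmap (σ : KK →+* KK)) :=
          rmap_hom_ext (fun a => by rw [RingHom.comp_apply, rmap_C, rmap_C, rmap_C]; rfl)
            (by rw [RingHom.comp_apply, rmap_X, rmap_X, rmap_X])
        rw [this]; rfl
      s_C := fun τ a => (hs τ _).trans (congrArg κ (rmap_C _ a))
      s_X := fun τ => by
        change Completion.mapRingHom (t τ) (htc τ)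
          (algebraMap (RatFunc K) (Completion M) RatFunc.X) =
            algebraMap (RatFunc K) (Completion M) RatFunc.X
        rw [hAX, hs, rmap_X]
      X_eq := hAX.symm
      C_eq := fun a => rfl }

theorem exists_setup (hτ : ∀ (τ : Gal(KK/K)) a, ‖τ a‖ = ‖a‖) :
    ∃ (Ω : Type) (_ : NormedField Ω) (_ : CompleteSpace Ω) (_ : IsUltrametricDist Ω)
      (_ : NormedAlgebra K Ω) (_ : Algebra (RatFunc K) Ω) (_ : IsGauss K Ω)
      (_ : Algebra (RatFunc KK) Ω), Nonempty (Setup K KK Ω) :=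
  exists_setup_aux (M := WithAbs (gabs KK)) hτ (WithAbs.equiv (gabs KK)).symm (fun _ => rfl)

end Compl
end Harb

set_option linter.unusedSectionVars false
set_option linter.style.haveILetI false
set_option linter.unusedSimpArgs false

namespace Harb
open Polynomial

theorem real_of_complete (K : Type) [NontriviallyNormedField K] [CompleteSpace K]
    [IsUltrametricDist K] [CharZero K] (G : Type) [Group G] [Finite G] :
    ∃ (Ω : Type) (_ : NormedField Ω) (_ : CompleteSpace Ω) (_ : IsUltrametricDist Ω)
      (_ : NormedAlgebra K Ω) (_ : Algebra (RatFunc K) Ω) (_ : IsGauss K Ω), RealG K Ω G := by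
  haveI : NeZero (Nat.card G) := ⟨Nat.card_pos.ne'⟩
  let KK := CyclotomicField (Nat.card G) K
  have hζ : IsPrimitiveRoot (IsCyclotomicExtension.zeta (Nat.card G) K KK) (Nat.card G) :=
    IsCyclotomicExtension.zeta_spec _ K KK
  haveI : FiniteDimensional K KK := IsCyclotomicExtension.finiteDimensional {Nat.card G} K KK
  haveI : IsGalois K KK := IsCyclotomicExtension.isGalois {Nat.card G} K KK
  have hgen : ∀ τ : Gal(KK/K), τ (IsCyclotomicExtension.zeta (Nat.card G) K KK) =
      IsCyclotomicExtension.zeta (Nat.card G) K KK → τ = 1 := by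
    intro τ h
    have h2 : (τ : KK →ₐ[K] KK) = AlgHom.id K KK := by
      apply (hζ.powerBasis K).algHom_ext
      rw [IsPrimitiveRoot.powerBasis_gen]
      exact h
    ext x
    exact DFunLike.congr_fun h2 x
  letI : NormedField KK := spectralNorm.normedField K KK
  letI : NormedAlgebra K KK := spectralNorm.normedAlgebra K KK
  haveI : IsUltrametricDist KK :=
    IsUltrametricDist.isUltrametricDist_of_forall_norm_add_le_max_norm
      fun x y => isNonarchimedean_spectralNorm (K := K) x y
  obtain ⟨Ω, i1, i2, i3, i4, i5, i6, i7, ⟨S⟩⟩ := exists_setup (K := K) (KK := KK)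
    (fun τ a => (spectralNorm_eq_of_equiv τ a).symm)
  exact ⟨Ω, i1, i2, i3, i4, i5, i6, S.cyc_all hζ hgen⟩

end Harb

theorem finite_group_occurs_as_galoisGroup_over_padic_ratFunc
    (p : ℕ) [Fact p.Prime] (K : Type) [Field K] [Algebra ℚ_[p] K] [FiniteDimensional ℚ_[p] K]
    (G : Type) [Group G] [Finite G] :
    ∃ (N : Type) (_ : Field N) (_ : Algebra (RatFunc K) N),
      FiniteDimensional (RatFunc K) N ∧ IsGalois (RatFunc K) N ∧
        Nonempty ((N ≃ₐ[RatFunc K] N) ≃* G) := by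
  letI : NontriviallyNormedField K := spectralNorm.nontriviallyNormedField ℚ_[p] K
  haveI : CompleteSpace K := spectralNorm.completeSpace ℚ_[p] K
  haveI : IsUltrametricDist K :=
    IsUltrametricDist.isUltrametricDist_of_forall_norm_add_le_max_norm
      fun x y => isNonarchimedean_spectralNorm (K := ℚ_[p]) x y
  haveI : CharZero K := charZero_of_injective_algebraMap (algebraMap ℚ_[p] K).injective
  obtain ⟨Ω, _, _, _, _, _, _, F, iF, iA, iM, φ, hG, -⟩ := Harb.real_of_complete K G
  exact ⟨F, iF, iA, IsGaloisGroup.finiteDimensional G _ _, IsGaloisGroup.isGalois G _ _,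
    ⟨(IsGaloisGroup.mulEquivAlgEquiv G (RatFunc K) F).symm⟩⟩
end

section
/- Let E be an elliptic curve defined over ℂ and let n ≥ 1 be an integer. Then the n-torsion subgroup E[n] of the group E(ℂ) of complex points of E, i.e. the kernel of the multiplication-by-n map on E(ℂ), is isomorphic as an abelian group to (ℤ/nℤ) ⊕ (ℤ/nℤ). -/
namespace TorsionProof

section Curve

open WeierstrassCurve WeierstrassCurve.Affine Polynomial

lemma addSub_aux (E : WeierstrassCurve ℂ) [E.IsElliptic] (P Q : E.toAffine.Point) :
    ∃ k : ℂ, k ≠ 0 ∧ ∀ i, (addSubMap E i).eval (P.sym2x Q) = k * (P + Q).sym2x (P - Q) i := by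
  have key : ∀ (P Q : E.toAffine.Point) (k : ℂ),
      (∀ i, (addSubMap E i).eval (P.sym2x Q) = k * (P + Q).sym2x (P - Q) i) → 
    ∃ k : ℂ, k ≠ 0 ∧ ∀ i, (addSubMap E i).eval (P.sym2x Q) = k * (P + Q).sym2x (P - Q) i := by
    intro P Q k h
    refine ⟨k, ?_, h⟩
    rintro rfl
    refine addSubMap_ne_zero E (Point.sym2x_ne_zero P Q) ?_
    ext i
    simpa using h i
  have dbl : ∀ P : E.toAffine.Point, 
    ∃ k : ℂ, k ≠ 0 ∧ ∀ i, (addSubMap E i).eval (P.sym2x P) = k * (P + P).sym2x (P - P) i := by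
    rintro (_ | ⟨x, y, h⟩)
    · apply key _ _ 1
      intro i
      rw [← Point.zero_def]
      fin_cases i <;> simp [addSubMap]
    · have e := (equation_iff x y).mp h.left
      by_cases hy : y = E.toAffine.negY x y
      · apply key _ _ ((x*x)^2 - E.b₄ * (x*x) - E.b₆ * (2*x) - E.b₈)
        rw [sub_self, Point.add_self_of_Y_eq hy]
        rw [negY] at hy
        intro i
        fin_cases i <;> simp [addSubMap, b₂, b₄, b₆, b₈]
        · left; ring
        · grind
        · ring
      · apply key _ _ ((2*y+E.a₁*x+E.a₃)^2)
        have hy2 : y - E.toAffine.negY x y ≠ 0 := sub_ne_zero.mpr hy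
        rw [sub_self, Point.add_self_of_Y_ne hy]
        rw [negY] at hy2
        intro i
        fin_cases i <;> simp [addSubMap, b₂, b₄, b₆, b₈, addX, slope_of_Y_ne rfl hy]
        · have hy3 : y - (-y - x * E.a₁ - E.a₃) ≠ 0 := by
            rwa [mul_comm x]
          field_simp
          grind
        · grind
        · ring
  rcases P with _ | ⟨x, y, h⟩
  · apply key _ _ 1
    intro i
    rw [← Point.zero_def]
    rcases Q with _ | ⟨x', y', h'⟩
    · rw [← Point.zero_def]; fin_cases i <;> simp [addSubMap]
    · rw [zero_add, zero_sub, Point.sym2x_neg_right]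
      fin_cases i <;> simp [addSubMap] <;> ring
  rcases Q with _ | ⟨x', y', h'⟩
  · apply key _ _ 1
    intro i
    rw [← Point.zero_def]
    rw [add_zero, sub_zero]
    fin_cases i <;> simp [addSubMap] <;> ring
  by_cases hx : x = x'
  · rcases Point.X_eq_iff.mp hx with H | H
    · rw [H]; exact dbl _
    · rw [H]
      obtain ⟨k, hk, hh⟩ := dbl (Point.some x' y' h')
      refine ⟨k, hk, fun i => ?_⟩
      rw [Point.sym2x_neg_left, hh, Point.sym2x_comm, sub_self, neg_add_cancel, ← neg_add',
        Point.sym2x_neg_right]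
  · apply key _ _ ((x-x')^2)
    have e := (equation_iff x y).mp h.left
    have e' := (equation_iff x' y').mp h'.left
    have hx2 := sub_ne_zero.mpr hx
    intro i
    rw [sub_eq_add_neg (Point.some x y h), Point.neg_some, Point.add_of_X_ne hx, Point.add_of_X_ne hx]
    fin_cases i <;> simp [addSubMap, b₂, b₄, b₆, b₈, addX, slope_of_X_ne hx, negY]
    · field_simp
      grind
    · field_simp
      grind
    · ring

lemma addSub_aux' (E : WeierstrassCurve ℂ) [E.IsElliptic] (P Q : E.toAffine.Point)
    (x₁ z₁ x₂ z₂ k₁ k₂ : ℂ) (h1 : k₁ ≠ 0) (h2 : k₂ ≠ 0) (hx1 : x₁ = k₁ * P.xRep 0)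
    (hz1 : z₁ = k₁ * P.xRep 1) (hx2 : x₂ = k₂ * Q.xRep 0) (hz2 : z₂ = k₂ * Q.xRep 1) :
    ∃ k : ℂ, k ≠ 0 ∧
      (x₁ * x₂) ^ 2 - E.b₄ * (x₁ * x₂) * (z₁ * z₂) - E.b₆ * (x₁ * z₂ + z₁ * x₂) * (z₁ * z₂)
        - E.b₈ * (z₁ * z₂) ^ 2 = k * ((P + Q).xRep 0 * (P - Q).xRep 0) ∧
      2 * (x₁ * z₂ + z₁ * x₂) * (x₁ * x₂) + E.b₂ * (x₁ * x₂) * (z₁ * z₂)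
        + E.b₄ * (x₁ * z₂ + z₁ * x₂) * (z₁ * z₂) + E.b₆ * (z₁ * z₂) ^ 2
        = k * ((P + Q).xRep 0 * (P - Q).xRep 1 + (P + Q).xRep 1 * (P - Q).xRep 0) ∧
      (x₁ * z₂ + z₁ * x₂) ^ 2 - 4 * (x₁ * x₂) * (z₁ * z₂)
        = k * ((P + Q).xRep 1 * (P - Q).xRep 1) := by
  obtain ⟨k, hk, H⟩ := addSub_aux E P Q
  refine ⟨(k₁ * k₂) ^ 2 * k, by positivity, ?_, ?_, ?_⟩
  · have := H 0
    simp [addSubMap, Point.sym2x] at this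
    rw [hx1, hz1, hx2, hz2]
    linear_combination (k₁ * k₂) ^ 2 * this
  · have := H 1
    simp [addSubMap, Point.sym2x] at this
    rw [hx1, hz1, hx2, hz2]
    linear_combination (k₁ * k₂) ^ 2 * this
  · have := H 2
    simp [addSubMap, Point.sym2x] at this
    rw [hx1, hz1, hx2, hz2]
    linear_combination (k₁ * k₂) ^ 2 * this

lemma exists_point (E : WeierstrassCurve ℂ) [E.IsElliptic] (x : ℂ) :
    ∃ y, E.toAffine.Nonsingular x y := by
  obtain ⟨y, hy⟩ := exists_quadratic_eq_zero (a := (1 : ℂ)) (b := E.a₁ * x + E.a₃)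
    (c := -(x ^ 3 + E.a₂ * x ^ 2 + E.a₄ * x + E.a₆)) one_ne_zero
    (IsAlgClosed.exists_eq_mul_self _)
  refine ⟨y, equation_iff_nonsingular.mp ((equation_iff x y).mpr ?_)⟩
  linear_combination hy

lemma split_quadratic {R : Type*} [CommRing R] [IsDomain R] {F G A B D : R} (hF : F ≠ 0)
    (hc : IsCoprime F G) (h : A * G ^ 2 - B * F * G + D * F ^ 2 = 0) :
    ∃ F' G' : R, A = F * F' ∧ B = F * G' + G * F' ∧ D = G * G' := by
  by_cases hG : G = 0
  · subst hG
    obtain ⟨a, b, hab⟩ := hc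
    have hD : D = 0 := by
      have : D * F ^ 2 = 0 := by linear_combination h
      simpa [hF] using this
    refine ⟨a * A, a * B, ?_, ?_, ?_⟩
    · linear_combination (-A) * hab
    · linear_combination (-B) * hab
    · rw [hD]; ring
  · obtain ⟨F', hF'⟩ : F ∣ A := by
      refine (IsCoprime.pow_right (n := 2) hc).dvd_of_dvd_mul_right ⟨B * G - D * F, ?_⟩
      linear_combination h
    obtain ⟨G', hG'⟩ : G ∣ D := by
      refine (IsCoprime.pow_right (n := 2) hc.symm).dvd_of_dvd_mul_right ⟨B * F - A * G, ?_⟩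
      linear_combination h
    refine ⟨F', G', hF', ?_, hG'⟩
    apply mul_left_cancel₀ (mul_ne_zero hF hG)
    subst hF' hG'
    linear_combination -h

structure IsRep (E : WeierstrassCurve ℂ) [E.IsElliptic] (n : ℕ) (F G : ℂ[X]) : Prop where
  cop : IsCoprime F G
  monic : F.Monic
  deg : F.natDegree = n ^ 2
  degG : G.degree < (n ^ 2 : ℕ)
  rep : ∀ (x y : ℂ) (h : E.toAffine.Nonsingular x y), ∃ k : ℂ, k ≠ 0 ∧
    F.eval x = k * (n • Point.some x y h).xRep 0 ∧ G.eval x = k * (n • Point.some x y h).xRep 1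

lemma isRep_zero (E : WeierstrassCurve ℂ) [E.IsElliptic] : IsRep E 0 1 0 where
  cop := isCoprime_one_left
  monic := monic_one
  deg := by simp
  degG := by simp
  rep x y h := ⟨1, one_ne_zero, by simp⟩

lemma isRep_one (E : WeierstrassCurve ℂ) [E.IsElliptic] : IsRep E 1 X 1 where
  cop := isCoprime_one_right
  monic := monic_X
  deg := by simp
  degG := by simp
  rep x y h := ⟨1, one_ne_zero, by simp⟩

lemma isRep_step (E : WeierstrassCurve ℂ) [E.IsElliptic] (m : ℕ) (F₀ G₀ F G : ℂ[X])
    (h₀ : IsRep E m F₀ G₀) (h₁ : IsRep E (m + 1) F G) :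
    ∃ F₂ G₂, IsRep E (m + 2) F₂ G₂ := by
  set A : ℂ[X] := (F * X) ^ 2 - C E.b₄ * (F * X) * G - C E.b₆ * (F + G * X) * G - C E.b₈ * G ^ 2
    with hA
  set B : ℂ[X] := 2 * (F + G * X) * (F * X) + C E.b₂ * (F * X) * G + C E.b₄ * (F + G * X) * G
    + C E.b₆ * G ^ 2 with hB
  set D : ℂ[X] := (F + G * X) ^ 2 - 4 * (F * X) * G with hD
  have key : ∀ (x y : ℂ) (h : E.toAffine.Nonsingular x y), ∃ c : ℂ, c ≠ 0 ∧
      A.eval x = c * (((m + 2) • Point.some x y h).xRep 0 * (m • Point.some x y h).xRep 0) ∧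
      B.eval x = c * (((m + 2) • Point.some x y h).xRep 0 * (m • Point.some x y h).xRep 1 +
        ((m + 2) • Point.some x y h).xRep 1 * (m • Point.some x y h).xRep 0) ∧
      D.eval x = c * (((m + 2) • Point.some x y h).xRep 1 * (m • Point.some x y h).xRep 1) := by
    intro x y h
    obtain ⟨k, hk, hF, hG⟩ := h₁.rep x y h
    have := addSub_aux' E ((m + 1) • Point.some x y h) (Point.some x y h) _ _ x 1 k 1 hk one_ne_zero
      hF hG (by simp) (by simp)
    have e1 : (m + 1) • Point.some x y h + Point.some x y h = (m + 2) • Point.some x y h := by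
      rw [add_nsmul, add_nsmul, two_nsmul, one_nsmul, add_assoc]
    have e2 : (m + 1) • Point.some x y h - Point.some x y h = m • Point.some x y h := by
      rw [add_nsmul, one_nsmul, add_sub_cancel_right]
    rw [e1, e2] at this
    obtain ⟨c, hc, hA', hB', hD'⟩ := this
    refine ⟨c, hc, ?_, ?_, ?_⟩
    · rw [← hA', hA]; simp
    · rw [← hB', hB]; simp
    · rw [← hD', hD]; simp
  have quad : A * G₀ ^ 2 - B * F₀ * G₀ + D * F₀ ^ 2 = 0 := by
    apply Polynomial.funext
    intro x
    obtain ⟨y, h⟩ := exists_point E x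
    obtain ⟨c, hc, hA', hB', hD'⟩ := key x y h
    obtain ⟨k, hk, hF, hG⟩ := h₀.rep x y h
    simp only [eval_add, eval_sub, eval_mul, eval_pow, hA', hB', hD', hF, hG, eval_zero]
    ring
  obtain ⟨F₂, G₂, eA, eB, eD⟩ := split_quadratic h₀.monic.ne_zero h₀.cop quad
  have rep : ∀ (x y : ℂ) (h : E.toAffine.Nonsingular x y), ∃ k : ℂ, k ≠ 0 ∧
    F₂.eval x = k * ((m + 2) • Point.some x y h).xRep 0 ∧
      G₂.eval x = k * ((m + 2) • Point.some x y h).xRep 1 := by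
    intro x y h
    obtain ⟨c, hc, hA', hB', hD'⟩ := key x y h
    obtain ⟨k, hk, hF, hG⟩ := h₀.rep x y h
    rw [eA] at hA'
    rw [eB] at hB'
    rw [eD] at hD'
    refine ⟨c / k, div_ne_zero hc hk, ?_⟩
    simp only [eval_add, eval_mul, hF, hG] at hA' hB' hD'
    generalize (m + 2) • Point.some x y h = R at *
    generalize m • Point.some x y h = S at *
    rcases S with _ | ⟨x', y', h'⟩
    · rw [← Point.zero_def] at *
      simp at hA' hB' hD'
      constructor
      · field_simp; linear_combination hA'
      · field_simp; linear_combination hB'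
    · simp at hA' hB' hD'
      constructor
      · field_simp; linear_combination hB' - x' * hD'
      · field_simp; linear_combination hD'
  have hFdeg : F.degree = ((m + 1) ^ 2 : ℕ) := by
    rw [degree_eq_natDegree h₁.monic.ne_zero, h₁.deg]
  have hF0deg : F₀.degree = (m ^ 2 : ℕ) := by
    rw [degree_eq_natDegree h₀.monic.ne_zero, h₀.deg]
  have hGX : (G * X).natDegree ≤ (m + 1) ^ 2 := by
    by_cases hG : G = 0
    · simp [hG]
    have := (natDegree_lt_iff_degree_lt hG).mpr h₁.degG
    rw [natDegree_mul_X hG]; omega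
  have hGn : G.natDegree ≤ (m + 1) ^ 2 := natDegree_le_of_degree_le h₁.degG.le
  have hs : (F * X).natDegree = (m + 1) ^ 2 + 1 := by
    rw [natDegree_mul_X h₁.monic.ne_zero, h₁.deg]
  have hsm : (F * X).Monic := h₁.monic.mul monic_X
  have ht : (F + G * X).natDegree ≤ (m + 1) ^ 2 :=
    natDegree_add_le_of_degree_le h₁.deg.le hGX
  have hmul : ∀ {p q : ℂ[X]} {a b c : ℕ}, p.natDegree ≤ a → q.natDegree ≤ b → a + b ≤ c →
      (p * q).natDegree ≤ c := fun h h' h'' => (natDegree_mul_le_of_le h h').trans h''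
  have hC : ∀ (a : ℂ), (C a).natDegree ≤ 0 := fun a => (natDegree_C a).le
  have hG2 : (G ^ 2).natDegree ≤ 2 * (m + 1) ^ 2 := by
    rw [pow_two G]; exact hmul hGn hGn (by omega)
  have h2 : ∀ a : ℂ, ((C a) * (F * X) * G).natDegree ≤ 2 * (m + 1) ^ 2 + 1 := fun a =>
    hmul (hmul (hC a) hs.le le_rfl) hGn (by omega)
  have h3 : ∀ a : ℂ, ((C a) * (F + G * X) * G).natDegree ≤ 2 * (m + 1) ^ 2 + 1 := fun a =>
    hmul (hmul (hC a) ht le_rfl) hGn (by omega)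
  have h4 : ∀ a : ℂ, ((C a) * G ^ 2).natDegree ≤ 2 * (m + 1) ^ 2 + 1 := fun a =>
    hmul (hC a) hG2 (by omega)
  have hBdeg : B.natDegree ≤ 2 * (m + 1) ^ 2 + 1 := by
    refine natDegree_add_le_of_degree_le (natDegree_add_le_of_degree_le
      (natDegree_add_le_of_degree_le ?_ (h2 _)) (h3 _)) (h4 _)
    exact hmul (hmul (hC 2) ht le_rfl) hs.le (by omega)
  have hs2 : ((F * X) ^ 2).natDegree = 2 * (m + 1) ^ 2 + 2 := by
    rw [hsm.natDegree_pow, hs]; ring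
  have hsA : ∃ r : ℂ[X], A = (F * X) ^ 2 + r ∧ r.natDegree ≤ 2 * (m + 1) ^ 2 + 1 := by
    refine ⟨-(C E.b₄ * (F * X) * G + C E.b₆ * (F + G * X) * G + C E.b₈ * G ^ 2), by rw [hA]; ring, ?_⟩
    rw [natDegree_neg]
    exact natDegree_add_le_of_degree_le (natDegree_add_le_of_degree_le (h2 _) (h3 _)) (h4 _)
  obtain ⟨r, hr, hrd⟩ := hsA
  have hrlt : r.degree < ((F * X) ^ 2).degree := by
    apply degree_lt_degree; omega
  have hAm : A.Monic := by
    rw [hr]; exact (hsm.pow 2).add_of_left hrlt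
  have hAdeg : A.natDegree = 2 * (m + 1) ^ 2 + 2 := by
    rw [hr, natDegree_add_eq_left_of_degree_lt hrlt, hs2]
  have hF2m : F₂.Monic := h₀.monic.of_mul_monic_left (eA ▸ hAm)
  have hF2deg : F₂.natDegree = (m + 2) ^ 2 := by
    have := h₀.monic.natDegree_mul hF2m
    rw [← eA, hAdeg, h₀.deg] at this
    nlinarith
  have hF2deg' : F₂.degree = ((m + 2) ^ 2 : ℕ) := by
    rw [degree_eq_natDegree hF2m.ne_zero, hF2deg]
  refine ⟨F₂, G₂, ?_, hF2m, hF2deg, ?_, rep⟩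
  · rw [isCoprime_iff_aeval_ne_zero_of_isAlgClosed ℂ ℂ]
    intro x
    obtain ⟨y, h⟩ := exists_point E x
    obtain ⟨k, hk, h1, h2⟩ := rep x y h
    simp only [coe_aeval_eq_eval, h1, h2]
    generalize (m + 2) • Point.some x y h = R
    rcases R with _ | ⟨x', y', h'⟩
    · left; rw [← Point.zero_def]; simpa using hk
    · right; simpa using hk
  · by_cases hG2 : G₂ = 0
    · rw [hG2, degree_zero]; exact WithBot.bot_lt_coe _
    rw [← natDegree_lt_iff_degree_lt hG2]
    have e : F₀ * G₂ = B - G₀ * F₂ := by rw [eB]; ring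
    have hlt : (F₀ * G₂).natDegree < 2 * (m + 1) ^ 2 + 2 := by
      rw [e]
      by_cases hG0 : G₀ = 0
      · simp [hG0]; omega
      have := (natDegree_lt_iff_degree_lt hG0).mpr h₀.degG
      refine lt_of_le_of_lt (natDegree_sub_le_of_le hBdeg (natDegree_mul_le_of_le le_rfl hF2deg.le)) ?_
      apply max_lt
      · omega
      · nlinarith
    rw [natDegree_mul h₀.monic.ne_zero hG2, h₀.deg] at hlt
    nlinarith

lemma exists_isRep (E : WeierstrassCurve ℂ) [E.IsElliptic] (n : ℕ) :
    ∃ F G, IsRep E n F G := by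
  suffices (∃ F G, IsRep E n F G) ∧ (∃ F G, IsRep E (n + 1) F G) from this.1
  induction n with
  | zero => exact ⟨⟨_, _, isRep_zero E⟩, ⟨_, _, isRep_one E⟩⟩
  | succ m ih =>
    obtain ⟨⟨F₀, G₀, h₀⟩, ⟨F, G, h⟩⟩ := ih
    exact ⟨⟨F, G, h⟩, isRep_step E m _ _ _ _ h₀ h⟩

lemma card_fiber (E : WeierstrassCurve ℂ) [E.IsElliptic] (n : ℕ) (hn : 1 ≤ n) :
    ∃ Q : E.toAffine.Point, Nat.card {P : E.toAffine.Point // n • P = Q} = n ^ 2 := by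
  obtain ⟨F, G, hFG⟩ := exists_isRep E n
  have hn2 : 0 < n ^ 2 := by positivity
  set W : ℂ[X] := derivative F * G - F * derivative G with hW
  have hW0 : W ≠ 0 := by
    intro h0
    have hd : F ∣ derivative F * G := ⟨derivative G, by linear_combination h0⟩
    have hd2 := hFG.cop.dvd_of_dvd_mul_right hd
    have hF' : derivative F = 0 :=
      eq_zero_of_dvd_of_degree_lt hd2 (degree_derivative_lt hFG.monic.ne_zero)
    have := derivative_eq_zero.mp hF'
    rw [hFG.deg] at this
    omega
  have hT0 : E.Ψ₂Sq ≠ 0 := E.Ψ₂Sq_ne_zero (by norm_num)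
  obtain ⟨c, hc⟩ := (((W.roots.toFinset.image fun w => F.eval w / G.eval w) ∪
    E.Ψ₂Sq.roots.toFinset)).exists_notMem
  simp only [Finset.mem_union, Finset.mem_image, Multiset.mem_toFinset, mem_roots hW0,
    mem_roots hT0, not_or, not_exists, not_and] at hc
  obtain ⟨hc1, hc2⟩ := hc
  obtain ⟨d, hd⟩ := exists_point E c
  have hQ : Point.some c d hd ≠ -Point.some c d hd := by
    intro h
    apply hc2
    rw [Point.neg_some, Point.some.injEq, negY] at h
    have e := (equation_iff c d).mp hd.left
    have h2 := h.2
    simp [Ψ₂Sq, IsRoot, b₂, b₄, b₆]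
    grind
  set H : ℂ[X] := F - C c * G with hH
  have hlt : (C c * G).degree < F.degree := by
    rw [degree_eq_natDegree hFG.monic.ne_zero, hFG.deg]
    exact lt_of_le_of_lt (by
      by_cases h : c = 0
      · simp [h]
      · rw [degree_C_mul h]) hFG.degG
  have hHdeg : H.natDegree = n ^ 2 := by
    rw [hH, natDegree_eq_of_degree_eq (degree_sub_eq_left_of_degree_lt hlt), hFG.deg]
  have hH0 : H ≠ 0 := by
    intro h; rw [h] at hHdeg; simp at hHdeg; omega
  have hGne : ∀ x, H.IsRoot x → G.eval x ≠ 0 := by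
    intro x hx hG
    have hF : F.eval x = 0 := by
      have : F.eval x - c * G.eval x = 0 := by simpa [hH, IsRoot] using hx
      rw [hG] at this; simpa using this
    obtain ⟨a, b, hab⟩ := hFG.cop
    have := congrArg (eval x) hab
    simp [hF, hG] at this
  have hroots : H.roots.Nodup := by
    rw [nodup_roots_iff_of_splits hH0 (IsAlgClosed.splits H)]
    rw [Polynomial.Separable, isCoprime_iff_aeval_ne_zero_of_isAlgClosed ℂ ℂ]
    intro x
    by_contra! hcon
    simp only [coe_aeval_eq_eval] at hcon
    obtain ⟨h1, h2⟩ := hcon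
    have hG := hGne x h1
    simp [hH] at h1 h2
    apply hc1 x
    · simp [IsRoot, hW]
      linear_combination (eval x G) * h2 - (eval x (derivative G)) * h1
    · field_simp; linear_combination h1
  have hcard : Nat.card H.roots.toFinset = n ^ 2 := by
    rw [Nat.card_eq_fintype_card, Fintype.card_coe, Multiset.toFinset_card_of_nodup hroots,
      ← hHdeg]
    exact (IsAlgClosed.splits H).natDegree_eq_card_roots.symm
  refine ⟨Point.some c d hd, ?_⟩
  rw [← hcard]
  have hx : ∀ P : {P : E.toAffine.Point // n • P = Point.some c d hd},
      ∃ x y h, P.1 = Point.some x y h ∧ x ∈ H.roots.toFinset := by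
    rintro ⟨_ | ⟨x, y, h⟩, hP⟩
    · rw [← Point.zero_def, nsmul_zero] at hP
      exact absurd hP.symm (Point.some_ne_zero hd)
    · refine ⟨x, y, h, rfl, ?_⟩
      obtain ⟨k, hk, h1, h2⟩ := hFG.rep x y h
      rw [hP] at h1 h2
      simp at h1 h2
      rw [Multiset.mem_toFinset, mem_roots hH0, IsRoot, hH]
      simp [h1, h2]
      ring
  choose f fy fh hf hfm using hx
  refine Nat.card_congr (Equiv.ofBijective (fun P => ⟨f P, hfm P⟩) ⟨?_, ?_⟩)
  · intro P P' hPP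
    have hfe : f P = f P' := congrArg Subtype.val hPP
    rcases (Point.X_eq_iff (h₁ := fh P) (h₂ := fh P')).mp hfe with h | h
    · rw [← hf, ← hf] at h; exact Subtype.ext h
    · exfalso
      rw [← hf, ← hf] at h
      apply hQ
      conv_lhs => rw [← P.2, h, neg_nsmul, P'.2]
  · rintro ⟨x, hx⟩
    have hxr : H.IsRoot x := by simpa [hH0] using hx
    have hG := hGne x hxr
    obtain ⟨y, h⟩ := exists_point E x
    obtain ⟨k, hk, h1, h2⟩ := hFG.rep x y h
    have hxr' : F.eval x - c * G.eval x = 0 := by simpa [hH, IsRoot] using hxr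
    have hrep : (n • Point.some x y h).xRep = (Point.some c d hd).xRep := by
      generalize n • Point.some x y h = R at *
      rcases R with _ | ⟨x', y', h'⟩
      · rw [← Point.zero_def] at h2; simp at h2; exact absurd h2 hG
      · simp at h1 h2 ⊢
        rw [h1, h2] at hxr'
        apply mul_left_cancel₀ hk
        linear_combination hxr'
    rcases Point.xRep_eq_xRep_iff.mp hrep with hh | hh
    · refine ⟨⟨Point.some x y h, hh⟩, Subtype.ext ?_⟩
      have := hf ⟨Point.some x y h, hh⟩
      simp only [Point.some.injEq] at this
      exact this.1.symm
    · have hh' : n • (-Point.some x y h) = Point.some c d hd := by rw [neg_nsmul, hh, neg_neg]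
      refine ⟨⟨-Point.some x y h, hh'⟩, Subtype.ext ?_⟩
      have := hf ⟨-Point.some x y h, hh'⟩
      simp only [Point.neg_some, Point.some.injEq] at this
      exact this.1.symm

lemma card_torsion (E : WeierstrassCurve ℂ) [E.IsElliptic] (n : ℕ) (hn : 1 ≤ n) :
    Nat.card {P : E.toAffine.Point // n • P = 0} = n ^ 2 := by
  obtain ⟨Q, hQ⟩ := card_fiber E n hn
  have : 0 < Nat.card {P : E.toAffine.Point // n • P = Q} := by rw [hQ]; positivity
  obtain ⟨⟨P₀, hP₀⟩⟩ := (Nat.card_pos_iff.mp this).1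
  rw [← hQ]
  refine Nat.card_congr ⟨fun P => ⟨P.1 + P₀, by rw [nsmul_add, P.2, hP₀, zero_add]⟩,
    fun P => ⟨P.1 - P₀, by rw [nsmul_sub, P.2, hP₀, sub_self]⟩, fun P => by simp, fun P => by simp⟩

end Curve

lemma group_structure {A : Type*} [AddCommGroup A] (n : ℕ) (hn : 1 ≤ n) (hA : ∀ a : A, n • a = 0)
    (hcard : ∀ d : ℕ, 1 ≤ d → d ∣ n → Nat.card {a : A // d • a = 0} = d ^ 2) :
    Nonempty (A ≃+ (ZMod n × ZMod n)) := by
  haveI : NeZero n := ⟨by omega⟩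
  have hAcard : Nat.card A = n ^ 2 := by
    rw [← hcard n hn dvd_rfl]
    exact Nat.card_congr (Equiv.subtypeUnivEquiv hA).symm
  haveI : Finite A := Nat.finite_of_card_ne_zero (by rw [hAcard]; positivity)
  -- an element of order `n`
  obtain ⟨a, ha⟩ := AddMonoid.exists_addOrderOf_eq_exponent
    (AddMonoid.ExponentExists.of_finite (G := A))
  have han : addOrderOf a = n := by
    have hdvd : addOrderOf a ∣ n := addOrderOf_dvd_of_nsmul_eq_zero (hA a)
    have h1 := hcard _ (addOrderOf_pos a) hdvd
    rw [Nat.card_congr (Equiv.subtypeUnivEquiv (fun x : A => by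
      rw [ha]; exact AddMonoid.exponent_nsmul_eq_zero x)), hAcard] at h1
    exact (Nat.pow_left_injective two_ne_zero h1).symm
  -- an element of order `n` of the quotient
  obtain ⟨b', hb'⟩ := AddMonoid.exists_addOrderOf_eq_exponent
    (AddMonoid.ExponentExists.of_finite (G := A ⧸ AddSubgroup.zmultiples a))
  obtain ⟨b, rfl⟩ := QuotientAddGroup.mk_surjective b'
  set e := addOrderOf (b : A ⧸ AddSubgroup.zmultiples a) with he
  have hepos : 0 < e := addOrderOf_pos _
  have hedvd : e ∣ n := addOrderOf_dvd_of_nsmul_eq_zero (by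
    rw [← QuotientAddGroup.mk_nsmul, hA, QuotientAddGroup.mk_zero])
  have hx : ∀ x : A, ∃ k : ℤ, e • x = k • (e • a) := by
    intro x
    have : (e • x : A) ∈ AddSubgroup.zmultiples a := by
      rw [← QuotientAddGroup.eq_zero_iff, QuotientAddGroup.mk_nsmul, hb']
      exact AddMonoid.exponent_nsmul_eq_zero _
    obtain ⟨k, hk⟩ := AddSubgroup.mem_zmultiples_iff.mp this
    obtain ⟨f, hf⟩ := hedvd
    have hfk : ((f : ℤ) * k) • a = 0 := by
      rw [mul_smul, hk, natCast_zsmul, ← mul_nsmul, ← hf, hA]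
    rw [← addOrderOf_dvd_iff_zsmul_eq_zero, han, hf] at hfk
    have hf0 : (f : ℤ) ≠ 0 := by
      rintro h
      have : f = 0 := by exact_mod_cast h
      subst this; omega
    have : (e : ℤ) ∣ k := by
      rw [Nat.cast_mul, mul_comm] at hfk
      exact (mul_dvd_mul_iff_left hf0).mp hfk
    obtain ⟨k', rfl⟩ := this
    refine ⟨k', ?_⟩
    rw [← hk, mul_comm, mul_smul, natCast_zsmul]
  have hen : e = n := by
    let φ : A →+ A := DistribMulAction.toAddMonoidHom A e
    have h1 : Nat.card φ.range * Nat.card φ.ker = n ^ 2 := by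
      rw [← hAcard, ← Nat.card_congr (QuotientAddGroup.quotientKerEquivRange φ).toEquiv]
      exact (AddSubgroup.card_eq_card_quotient_mul_card_addSubgroup φ.ker).symm
    have h2 : Nat.card φ.ker = e ^ 2 := hcard e hepos hedvd
    have h3 : φ.range ≤ AddSubgroup.zmultiples (e • a) := by
      rintro _ ⟨x, rfl⟩
      obtain ⟨k, hk⟩ := hx x
      exact AddSubgroup.mem_zmultiples_iff.mpr ⟨k, hk.symm⟩
    have h4 : Nat.card φ.range ≤ n / e := by
      refine (AddSubgroup.card_le_of_le h3).trans ?_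
      rw [Nat.card_zmultiples]
      refine Nat.le_of_dvd (Nat.div_pos (Nat.le_of_dvd hn hedvd) hepos) ?_
      apply addOrderOf_dvd_of_nsmul_eq_zero
      rw [← mul_nsmul, Nat.mul_div_cancel' hedvd, hA]
    obtain ⟨f, hf⟩ := hedvd
    rw [hf, Nat.mul_div_cancel_left _ hepos] at h4
    rw [h2, hf] at h1
    have h5 : Nat.card φ.range = f ^ 2 := by
      have : 0 < e ^ 2 := by positivity
      apply Nat.eq_of_mul_eq_mul_right this
      rw [h1]; ring
    rw [h5] at h4
    have hf1 : f = 1 := by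
      have : f ≠ 0 := by rintro rfl; omega
      have : 0 < f := by omega
      nlinarith
    rw [hf, hf1, mul_one]
  let g1 : ZMod n →+ A := ZMod.lift n ⟨zmultiplesHom A a, by simp [hA]⟩
  let g2 : ZMod n →+ A := ZMod.lift n ⟨zmultiplesHom A b, by simp [hA]⟩
  let g : ZMod n × ZMod n →+ A := g1.coprod g2
  have hinj : Function.Injective g := by
    rw [injective_iff_map_eq_zero]
    rintro ⟨i, j⟩ hij
    obtain ⟨i, rfl⟩ := ZMod.intCast_surjective i
    obtain ⟨j, rfl⟩ := ZMod.intCast_surjective j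
    have h0 : i • a + j • b = 0 := by
      simpa [g, g1, g2] using hij
    have hj : (n : ℤ) ∣ j := by
      rw [← hen, he, addOrderOf_dvd_iff_zsmul_eq_zero, ← QuotientAddGroup.mk_zsmul,
        QuotientAddGroup.eq_zero_iff]
      exact AddSubgroup.mem_zmultiples_iff.mpr ⟨-i, by rw [neg_smul]; exact neg_eq_of_add_eq_zero_right h0⟩
    have hjb : j • b = 0 := by
      obtain ⟨j', rfl⟩ := hj
      rw [mul_comm, mul_smul, natCast_zsmul, hA, smul_zero]
    rw [hjb, add_zero, ← addOrderOf_dvd_iff_zsmul_eq_zero, han] at h0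
    ext
    · exact (ZMod.intCast_zmod_eq_zero_iff_dvd _ _).mpr h0
    · exact (ZMod.intCast_zmod_eq_zero_iff_dvd _ _).mpr hj
  have hbij : Function.Bijective g := by
    rw [Nat.bijective_iff_injective_and_card]
    refine ⟨hinj, ?_⟩
    rw [hAcard, Nat.card_prod, Nat.card_zmod]; ring
  exact ⟨(AddEquiv.ofBijective g hbij).symm⟩

end TorsionProof

/-- Let `E` be an elliptic curve over `ℂ` and `n ≥ 1`. Then the `n`-torsion subgroup
`E[n]` of `E(ℂ)`, i.e. the kernel of multiplication by `n` on the group of complex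
points of `E`, is isomorphic to `(ℤ/nℤ) ⊕ (ℤ/nℤ)`. -/
theorem torsion_of_complex_elliptic_curve (E : WeierstrassCurve ℂ) [E.IsElliptic]
    (n : ℕ) (hn : 1 ≤ n) :
    Nonempty
      (((DistribMulAction.toAddMonoidHom E.toAffine.Point (n : ℤ)).ker) ≃+
        (ZMod n × ZMod n)) := by
  have hmem : ∀ a : E.toAffine.Point,
      a ∈ (DistribMulAction.toAddMonoidHom E.toAffine.Point (n : ℤ)).ker ↔ n • a = 0 := by
    intro a
    rw [AddMonoidHom.mem_ker, DistribMulAction.toAddMonoidHom_apply, natCast_zsmul]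
  apply TorsionProof.group_structure n hn
  · rintro ⟨a, ha⟩
    exact Subtype.ext ((hmem a).mp ha)
  · intro d hd hdn
    rw [← TorsionProof.card_torsion E d hd]
    refine Nat.card_congr ⟨fun a => ⟨a.1.1, congrArg Subtype.val a.2⟩,
      fun a => ⟨⟨a.1, (hmem _).mpr ?_⟩, Subtype.ext a.2⟩, fun a => rfl, fun a => rfl⟩
    obtain ⟨f, rfl⟩ := hdn
    rw [mul_nsmul, a.2, nsmul_zero]
end
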